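/- arXiv:1806.08855 — 2 statements merged into one kernel-verified Lean document; each statement's English description precedes it below -/
import Mathlib

section
/- Fix integers k ≥ 2 and d with 0 ≤ d ≤ k−1, and a real x with 0 < x < 1/k. Then limsup_{n→∞} m*_d(n,k,⌊xn⌋)/C(n−d,k−d) = limsup_{n→∞} m_d(n,k,⌊xn⌋)/C(n−d,k−d), where C(a,b) denotes the binomial coefficient. -/
open Finset

/-- The fractional matching number of a family `F` of subsets of `{0,…,n-1}`:
the supremum of sizes of fractional matchings, i.e. weight functions
`w : F → [0,1]` such that every vertex carries total weight at most 1. -/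
noncomputable def fracMatchingNumber (n : ℕ) (F : Finset (Finset ℕ)) : ℝ :=
  sSup {v : ℝ | ∃ w : Finset ℕ → ℝ,
    (∀ A, 0 ≤ w A ∧ w A ≤ 1) ∧ (∀ A, A ∉ F → w A = 0) ∧
    (∀ i ∈ Finset.range n, ∑ A ∈ F.filter (fun A => i ∈ A), w A ≤ 1) ∧
    v = ∑ A ∈ F, w A}

/-- The minimal `d`-degree of a family of subsets of `{0,…,n-1}`. -/
noncomputable def minDeg (n d : ℕ) (F : Finset (Finset ℕ)) : ℕ :=
  sInf {t : ℕ | ∃ S ∈ (Finset.range n).powersetCard d, t = (F.filter (fun A => S ⊆ A)).card}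

/-- `mStarDeg n k d s` is `m*_d(n,k,s)`: the maximum of the minimal `d`-degree
over all families of `k`-subsets of an `n`-set with fractional matching number
less than `s+1`. -/
noncomputable def mStarDeg (n k d s : ℕ) : ℕ :=
  sSup {t : ℕ | ∃ F : Finset (Finset ℕ), F ⊆ (Finset.range n).powersetCard k ∧
    fracMatchingNumber n F < (s : ℝ) + 1 ∧ t = minDeg n d F}

/-- The (integer) matching number of a family of finite sets. -/
noncomputable def matchingNumber (F : Finset (Finset ℕ)) : ℕ :=
  sSup {t : ℕ | ∃ M : Finset (Finset ℕ), M ⊆ F ∧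
    (M : Set (Finset ℕ)).Pairwise (fun A B => Disjoint A B) ∧ M.card = t}

/-- `mDeg n k d s` is `m_d(n,k,s)`: the maximum of the minimal `d`-degree over
all families of `k`-subsets of an `n`-set with matching number less than `s+1`. -/
noncomputable def mDeg (n k d s : ℕ) : ℕ :=
  sSup {t : ℕ | ∃ F : Finset (Finset ℕ), F ⊆ (Finset.range n).powersetCard k ∧
    matchingNumber F < s + 1 ∧ t = minDeg n d F}

/-!
Integer matchings are fractional matchings, so `m*_d ≤ m_d`. Conversely, suppose that the
`d`-degree proportion `c₀` forces a fractional matching of size `x m` on all large vertex sets of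
size `m`, and let `F` be a family on `n ≫ m` vertices with degree proportion `c > c₀`. By the
bounded differences inequality, a random sample of `m` vertices inherits the proportion `c₀` with
high probability, and hence carries a fractional matching of size `x m`. Averaging the images of
these matchings over all samples gives a fractional matching of `F` of size about `x n` whose
codegrees are at most `m / n`. Padded with dummy vertices, it becomes almost regular, and then a
derandomised Rödl nibble applies: edges are chosen one by one so that the sum of the squared
deviations of the remaining degrees from their expected value stays small. The result is an
integer matching of `F` of size `(x - η) n` for arbitrarily small `η`.

The loss `η n` is won back as follows. A greedily chosen matching of `t = β n` edges can be removed
with its `k t` vertices without spoiling the degree condition, and `t` exceeds `x k t`, the share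
of these vertices in the bound, because `k x < 1`.
-/

open scoped BigOperators

section Incidence

variable {V : Type*} [DecidableEq V]

/-- The real-valued indicator function of a finite set, in which the weighted degrees of a
hypergraph are linear expressions. -/
noncomputable def ind (s : Finset V) (v : V) : ℝ := if v ∈ s then 1 else 0

lemma ind_of_mem {s : Finset V} {v : V} (h : v ∈ s) : ind s v = 1 := if_pos h

lemma ind_of_notMem {s : Finset V} {v : V} (h : v ∉ s) : ind s v = 0 := if_neg h

lemma ind_nonneg (s : Finset V) (v : V) : 0 ≤ ind s v := by unfold ind; split_ifs <;> norm_num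

lemma ind_le_one (s : Finset V) (v : V) : ind s v ≤ 1 := by unfold ind; split_ifs <;> norm_num

lemma ind_mul_ind (s t : Finset V) (v : V) : ind s v * ind t v = ind (s ∩ t) v := by
  by_cases hs : v ∈ s <;> by_cases ht : v ∈ t <;> simp [ind, hs, ht]

lemma sum_ind_mul [Fintype V] (s : Finset V) (f : V → ℝ) :
    ∑ v, ind s v * f v = ∑ v ∈ s, f v := by
  simp [ind, sum_ite_mem]

lemma sum_ind [Fintype V] (s : Finset V) : ∑ v, ind s v = #s := by
  simpa using sum_ind_mul s 1

/-- The indicator of the event that two finite sets intersect. -/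
noncomputable def meets (s t : Finset V) : ℝ := if Disjoint s t then 0 else 1

lemma meets_nonneg (s t : Finset V) : 0 ≤ meets s t := by unfold meets; split_ifs <;> norm_num

lemma meets_le_card_inter (s t : Finset V) : meets s t ≤ #(s ∩ t) := by
  unfold meets
  split_ifs with h
  · positivity
  · exact_mod_cast (not_disjoint_iff_nonempty_inter.mp h).card_pos

lemma card_offDiag_eq {α : Type*} (s : Finset α) : (#s.offDiag : ℝ) = #s * (#s - 1) := by
  rw [offDiag_card, Nat.cast_sub (Nat.le_mul_self _)]
  push_cast
  ring

lemma card_inter_sub_meets_mem_Icc {s t : Finset V} {v : V} (hv : v ∈ s) :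
    #(s ∩ t) - ind (s ∩ t) v - (1 - ind t v) * meets s t ∈ Set.Icc (0 : ℝ) #(s ∩ t).offDiag := by
  rw [card_offDiag_eq]
  by_cases hst : Disjoint s t
  · simp [meets, hst, disjoint_iff_inter_eq_empty.mp hst, ind]
  · have hcard : (1 : ℝ) ≤ #(s ∩ t) := by
      exact_mod_cast (not_disjoint_iff_nonempty_inter.mp hst).card_pos
    by_cases hvt : v ∈ t
    · rw [ind_of_mem (mem_inter.mpr ⟨hv, hvt⟩), ind_of_mem hvt]
      constructor <;> nlinarith
    · rw [ind_of_notMem (fun h => hvt (mem_inter.mp h).2), ind_of_notMem hvt, meets, if_neg hst]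
      constructor <;> nlinarith

end Incidence

section WeightedHypergraph

variable {V ι : Type*} [DecidableEq V] [Fintype ι] {E : ι → Finset V} {w : ι → ℝ} {k : ℕ} {δ : ℝ}

/-- The degree of the vertex `v` in the hypergraph with edges `E i` of weight `w i`. -/
noncomputable def weightedDegree (E : ι → Finset V) (w : ι → ℝ) (v : V) : ℝ :=
  ∑ i, w i * ind (E i) v

/-- The codegree of the vertices `u` and `v` in the hypergraph with edges `E i` of weight `w i`. -/
noncomputable def weightedCodegree (E : ι → Finset V) (w : ι → ℝ) (u v : V) : ℝ :=
  ∑ i, w i * ind (E i) u * ind (E i) v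

/-- A fractional matching in the hypergraph with edges `E i`, repeated edges being allowed. -/
structure IsFractionalMatching (E : ι → Finset V) (w : ι → ℝ) : Prop where
  nonneg : ∀ i, 0 ≤ w i
  degree_le_one : ∀ v, weightedDegree E w v ≤ 1

/-- The decrease of the degree of `v` when all edges meeting the edge `E e` are deleted. -/
noncomputable def degreeLoss (E : ι → Finset V) (w : ι → ℝ) (e : ι) (v : V) : ℝ :=
  ∑ i, w i * ind (E i) v * meets (E i) (E e)

lemma weightedDegree_nonneg (hw : ∀ i, 0 ≤ w i) (v : V) : 0 ≤ weightedDegree E w v :=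
  sum_nonneg fun i _ => mul_nonneg (hw i) (ind_nonneg _ _)

lemma weightedCodegree_nonneg (hw : ∀ i, 0 ≤ w i) (u v : V) : 0 ≤ weightedCodegree E w u v :=
  sum_nonneg fun i _ => mul_nonneg (mul_nonneg (hw i) (ind_nonneg _ _)) (ind_nonneg _ _)

lemma weightedCodegree_comm (E : ι → Finset V) (w : ι → ℝ) (u v : V) :
    weightedCodegree E w u v = weightedCodegree E w v u :=
  sum_congr rfl fun _ _ => mul_right_comm _ _ _

lemma weightedCodegree_self (E : ι → Finset V) (w : ι → ℝ) (v : V) :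
    weightedCodegree E w v v = weightedDegree E w v :=
  sum_congr rfl fun i _ => by rw [mul_assoc, ind_mul_ind, inter_self]

lemma degreeLoss_nonneg (hw : ∀ i, 0 ≤ w i) (e : ι) (v : V) : 0 ≤ degreeLoss E w e v :=
  sum_nonneg fun i _ => mul_nonneg (mul_nonneg (hw i) (ind_nonneg _ _)) (meets_nonneg _ _)

lemma sum_weight_mul_card_offDiag_inter (E : ι → Finset V) (w : ι → ℝ) (s : Finset V) :
    ∑ i, w i * #(s ∩ E i).offDiag = ∑ p ∈ s.offDiag, weightedCodegree E w p.1 p.2 := by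
  simp_rw [weightedCodegree]
  rw [sum_comm]
  refine sum_congr rfl fun i _ => ?_
  have hfilter : (s ∩ E i).offDiag = {p ∈ s.offDiag | p.1 ∈ E i ∧ p.2 ∈ E i} := by
    ext p
    simp only [mem_offDiag, mem_inter, mem_filter]
    tauto
  simp [ind, hfilter, ← ite_and, and_comm, ← sum_filter, mul_comm]

lemma sum_weight_mul_card_inter (E : ι → Finset V) (w : ι → ℝ) (s : Finset V) :
    ∑ i, w i * #(s ∩ E i) = ∑ v ∈ s, weightedDegree E w v := by
  simp_rw [weightedDegree]
  rw [sum_comm]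
  refine sum_congr rfl fun i _ => ?_
  simp [ind, mul_comm]

lemma sum_weightedDegree (hE : ∀ i, #(E i) = k) {L : Finset V}
    (hL : ∀ v ∉ L, weightedDegree E w v = 0) :
    ∑ v ∈ L, weightedDegree E w v = k * ∑ i, w i := by
  have hinter (i : ι) : (L ∪ univ.biUnion E) ∩ E i = E i :=
    inter_eq_right.mpr ((subset_biUnion_of_mem E (mem_univ i)).trans subset_union_right)
  rw [sum_subset (subset_union_left (s₂ := univ.biUnion E)) fun v _ hv => hL v hv,
    ← sum_weight_mul_card_inter, mul_sum]
  exact sum_congr rfl fun i _ => by rw [hinter, hE, mul_comm]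

lemma degreeLoss_le (hE : ∀ i, #(E i) = k) (hw : ∀ i, 0 ≤ w i)
    (hδ : ∀ u v, u ≠ v → weightedCodegree E w u v ≤ δ) {e : ι} {v : V} (hv : v ∉ E e) :
    degreeLoss E w e v ≤ k * δ := by
  calc degreeLoss E w e v
      ≤ ∑ i, w i * ind (E i) v * #(E e ∩ E i) := sum_le_sum fun i _ => by
        rw [inter_comm]
        exact mul_le_mul_of_nonneg_left (meets_le_card_inter _ _)
          (mul_nonneg (hw i) (ind_nonneg _ _))
    _ = ∑ u ∈ E e, weightedCodegree E w u v := by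
        rw [sum_weight_mul_card_inter]
        exact sum_congr rfl fun u _ => sum_congr rfl fun i _ => mul_right_comm _ _ _
    _ ≤ #(E e) • δ := sum_le_card_nsmul _ _ _ fun u hu => hδ _ _ fun h => hv (h ▸ hu)
    _ = k * δ := by rw [hE, nsmul_eq_mul]

variable [Fintype V]

lemma sum_weightedCodegree (hE : ∀ i, #(E i) = k) (v : V) :
    ∑ u, weightedCodegree E w u v = k * weightedDegree E w v := by
  simp_rw [weightedCodegree, weightedDegree]
  rw [sum_comm, mul_sum]
  exact sum_congr rfl fun i _ => by rw [← sum_mul, ← mul_sum, sum_ind, hE]; ring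

lemma sum_erase_weightedCodegree (hE : ∀ i, #(E i) = k) (v : V) :
    ∑ u ∈ univ.erase v, weightedCodegree E w u v = (k - 1) * weightedDegree E w v := by
  have h := add_sum_erase univ (fun u => weightedCodegree E w u v) (mem_univ v)
  rw [sum_weightedCodegree hE, weightedCodegree_self] at h
  linarith

/-- The total degree of the neighbours of `v`, counted with codegree: a smooth approximation to
the expected loss of degree of `v` when an edge is drawn with probability proportional to `w`. -/
noncomputable def neighborDegreeSum (E : ι → Finset V) (w : ι → ℝ) (v : V) : ℝ :=
  ∑ u ∈ univ.erase v, weightedCodegree E w u v * weightedDegree E w u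

/-- The total loss of degree of `v` over all edges `E e` avoiding `v`, weighted by `w e`. -/
noncomputable def totalDegreeLoss (E : ι → Finset V) (w : ι → ℝ) (v : V) : ℝ :=
  ∑ e, w e * ((1 - ind (E e) v) * degreeLoss E w e v)

lemma neighborDegreeSum_sub_totalDegreeLoss (E : ι → Finset V) (w : ι → ℝ) (v : V) :
    neighborDegreeSum E w v - totalDegreeLoss E w v = ∑ i, w i * ind (E i) v * ∑ e, w e *
      (#(E i ∩ E e) - ind (E i ∩ E e) v - (1 - ind (E e) v) * meets (E i) (E e)) := by
  have hcard (s t : Finset V) :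
      (#(s ∩ t) : ℝ) - ind (s ∩ t) v = ∑ u ∈ univ.erase v, ind s u * ind t u := by
    simp_rw [ind_mul_ind]
    rw [← sum_ind, ← add_sum_erase univ _ (mem_univ v), add_sub_cancel_left]
  have hneighbor : neighborDegreeSum E w v = ∑ i, w i * ind (E i) v * ∑ e, w e *
      (#(E i ∩ E e) - ind (E i ∩ E e) v) := by
    simp_rw [neighborDegreeSum, weightedCodegree, weightedDegree, hcard, sum_mul_sum, mul_sum]
    rw [sum_comm]
    refine sum_congr rfl fun i _ => ?_
    rw [sum_comm]
    exact sum_congr rfl fun e _ => sum_congr rfl fun u _ => by ring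
  have hloss : totalDegreeLoss E w v = ∑ i, w i * ind (E i) v * ∑ e, w e *
      ((1 - ind (E e) v) * meets (E i) (E e)) := by
    simp_rw [totalDegreeLoss, degreeLoss, mul_sum]
    rw [sum_comm]
    exact sum_congr rfl fun i _ => sum_congr rfl fun e _ => by ring
  simp_rw [hneighbor, hloss, ← sum_sub_distrib, ← mul_sub, ← sum_sub_distrib, ← mul_sub]

lemma totalDegreeLoss_le_neighborDegreeSum (hw : ∀ i, 0 ≤ w i) (v : V) :
    totalDegreeLoss E w v ≤ neighborDegreeSum E w v := by
  rw [← sub_nonneg, neighborDegreeSum_sub_totalDegreeLoss]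
  refine sum_nonneg fun i _ => ?_
  by_cases hv : v ∈ E i
  · exact mul_nonneg (mul_nonneg (hw i) (ind_nonneg _ _)) <| sum_nonneg fun e _ =>
      mul_nonneg (hw e) (card_inter_sub_meets_mem_Icc hv).1
  · simp [ind_of_notMem hv]

lemma neighborDegreeSum_le_totalDegreeLoss_add (hE : ∀ i, #(E i) = k)
    (hw : IsFractionalMatching E w) (hδ0 : 0 ≤ δ)
    (hδ : ∀ u v, u ≠ v → weightedCodegree E w u v ≤ δ) (v : V) :
    neighborDegreeSum E w v ≤ totalDegreeLoss E w v + k ^ 2 * δ := by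
  have hoverlap (i : ι) : ∑ e, w e * (#(E i ∩ E e).offDiag : ℝ) ≤ k ^ 2 * δ := by
    rw [sum_weight_mul_card_offDiag_inter]
    calc ∑ p ∈ (E i).offDiag, weightedCodegree E w p.1 p.2
        ≤ #(E i).offDiag • δ :=
          sum_le_card_nsmul _ _ _ fun p hp => hδ _ _ (mem_offDiag.mp hp).2.2
      _ = (k * (k - 1)) * δ := by rw [nsmul_eq_mul, card_offDiag_eq, hE]
      _ ≤ k ^ 2 * δ := by
          gcongr
          nlinarith [Nat.cast_nonneg (α := ℝ) k]
  rw [← sub_le_iff_le_add', neighborDegreeSum_sub_totalDegreeLoss]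
  calc _ ≤ ∑ i, w i * ind (E i) v * (k ^ 2 * δ) := sum_le_sum fun i _ => by
        by_cases hv : v ∈ E i
        · refine mul_le_mul_of_nonneg_left (le_trans ?_ (hoverlap i))
            (mul_nonneg (hw.nonneg i) (ind_nonneg _ _))
          exact sum_le_sum fun e _ =>
            mul_le_mul_of_nonneg_left (card_inter_sub_meets_mem_Icc hv).2 (hw.nonneg e)
        · simp [ind_of_notMem hv]
    _ = weightedDegree E w v * (k ^ 2 * δ) := by rw [← sum_mul, weightedDegree]
    _ ≤ k ^ 2 * δ := mul_le_of_le_one_left (by positivity) (hw.degree_le_one v)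

lemma neighborDegreeSum_le (hk : 1 ≤ k) (hE : ∀ i, #(E i) = k) (hw : IsFractionalMatching E w)
    (v : V) : neighborDegreeSum E w v ≤ k := by
  have hk' : (1 : ℝ) ≤ k := by exact_mod_cast hk
  calc neighborDegreeSum E w v
      ≤ ∑ u ∈ univ.erase v, weightedCodegree E w u v := sum_le_sum fun u _ =>
        mul_le_of_le_one_right (weightedCodegree_nonneg hw.nonneg u v) (hw.degree_le_one u)
    _ = (k - 1) * weightedDegree E w v := sum_erase_weightedCodegree hE v
    _ ≤ k := by nlinarith [hw.degree_le_one v, weightedDegree_nonneg (E := E) hw.nonneg v]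

lemma sum_weight_mul_degreeLoss_sq_le (hk : 1 ≤ k) (hE : ∀ i, #(E i) = k)
    (hw : IsFractionalMatching E w) (hδ0 : 0 ≤ δ)
    (hδ : ∀ u v, u ≠ v → weightedCodegree E w u v ≤ δ) (v : V) :
    ∑ e, w e * ((1 - ind (E e) v) * degreeLoss E w e v ^ 2) ≤ k ^ 2 * δ := by
  calc ∑ e, w e * ((1 - ind (E e) v) * degreeLoss E w e v ^ 2)
      ≤ ∑ e, (k * δ) * (w e * ((1 - ind (E e) v) * degreeLoss E w e v)) :=
        sum_le_sum fun e _ => by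
          by_cases hv : v ∈ E e
          · simp [ind_of_mem hv]
          · rw [ind_of_notMem hv, sub_zero, one_mul, one_mul, sq, mul_left_comm (k * δ : ℝ)]
            exact mul_le_mul_of_nonneg_left
              (mul_le_mul_of_nonneg_right (degreeLoss_le hE hw.nonneg hδ hv)
                (degreeLoss_nonneg hw.nonneg e v)) (hw.nonneg e)
    _ = (k * δ) * totalDegreeLoss E w v := (mul_sum _ _ _).symm
    _ ≤ (k * δ) * k := by
        gcongr
        exact (totalDegreeLoss_le_neighborDegreeSum hw.nonneg v).trans
          (neighborDegreeSum_le hk hE hw v)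
    _ = k ^ 2 * δ := by ring

end WeightedHypergraph

lemma mul_mul_sub_one_le_sq {q k : ℝ} (hk : 1 ≤ k) (hq : q ≤ 1) : q * (k * (k - 1)) ≤ k ^ 2 := by
  nlinarith [mul_nonneg (sub_nonneg.mpr hq) (mul_nonneg (zero_le_one.trans hk) (sub_nonneg.mpr hk))]

section Discrepancy

variable {V ι : Type*} [DecidableEq V] [Fintype ι] {E : ι → Finset V} {w : ι → ℝ}
  {k : ℕ} {δ q g : ℝ} {L : Finset V}

/-- The squared deviation from `q` of the vertex degrees in `L`. -/
noncomputable def discrepancy (E : ι → Finset V) (w : ι → ℝ) (L : Finset V) (q : ℝ) : ℝ :=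
  ∑ v ∈ L, (weightedDegree E w v - q) ^ 2

lemma natCast_mul_sum_weight (hE : ∀ i, #(E i) = k) (hL : ∀ v ∉ L, weightedDegree E w v = 0)
    (q : ℝ) : k * ∑ i, w i = q * #L + ∑ v ∈ L, (weightedDegree E w v - q) := by
  rw [← sum_weightedDegree hE hL, sum_sub_distrib, sum_const, nsmul_eq_mul]
  ring

lemma natCast_mul_sum_weight_le_card (hE : ∀ i, #(E i) = k) (hw : IsFractionalMatching E w)
    (hL : ∀ v ∉ L, weightedDegree E w v = 0) : k * ∑ i, w i ≤ #L := by
  rw [← sum_weightedDegree hE hL]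
  simpa using sum_le_card_nsmul L _ 1 fun v _ => hw.degree_le_one v

lemma drift_mul_sum_deviation_le (hk : 1 ≤ k) (hE : ∀ i, #(E i) = k)
    (hL : ∀ v ∉ L, weightedDegree E w v = 0) (hL0 : L.Nonempty) (hq : 0 ≤ q)
    (hg : g * #L = q * (k * (k - 1))) :
    (∑ v ∈ L, (weightedDegree E w v - q)) * g * ∑ i, w i ≤
      q * (k - 1) * (q * ∑ v ∈ L, (weightedDegree E w v - q) + discrepancy E w L q) := by
  have hk' : (0 : ℝ) ≤ k - 1 := by
    rw [sub_nonneg]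
    exact_mod_cast hk
  have hcard : (0 : ℝ) < #L := by exact_mod_cast hL0.card_pos
  set A := ∑ v ∈ L, (weightedDegree E w v - q)
  refine le_of_mul_le_mul_right ?_ hcard
  calc A * g * (∑ i, w i) * #L = q * (k - 1) * A * (k * ∑ i, w i) := by
        linear_combination A * (∑ i, w i) * hg
    _ = q * (k - 1) * (q * A * #L + A ^ 2) := by rw [natCast_mul_sum_weight hE hL q]; ring
    _ ≤ q * (k - 1) * (q * A * #L + #L * discrepancy E w L q) := by
        gcongr
        exact sq_sum_le_card_mul_sum_sq
    _ = q * (k - 1) * (q * A + discrepancy E w L q) * #L := by ring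

lemma drift_sq_mul_sum_weight_le (hk : 1 ≤ k) (hE : ∀ i, #(E i) = k)
    (hw : IsFractionalMatching E w) (hL : ∀ v ∉ L, weightedDegree E w v = 0) (hL0 : L.Nonempty)
    (hq : q ∈ Set.Icc (0 : ℝ) 1) (hg0 : 0 ≤ g) (hg : g * #L = q * (k * (k - 1))) :
    g ^ 2 * (∑ i, w i) * #L ≤ k ^ 3 := by
  have hk' : (1 : ℝ) ≤ k := by exact_mod_cast hk
  have hcard : (0 : ℝ) < #L := by exact_mod_cast hL0.card_pos
  have hW : 0 ≤ ∑ i, w i := sum_nonneg fun i _ => hw.nonneg i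
  refine le_of_mul_le_mul_right ?_ (mul_pos hcard (zero_lt_one.trans_le hk'))
  calc g ^ 2 * (∑ i, w i) * #L * (#L * k) = (g * #L) ^ 2 * (k * ∑ i, w i) := by ring
    _ ≤ ((k : ℝ) ^ 2) ^ 2 * #L := by
        gcongr
        exacts [hg.trans_le (mul_mul_sub_one_le_sq hk' hq.2),
          natCast_mul_sum_weight_le_card hE hw hL]
    _ = (k : ℝ) ^ 3 * (#L * k) := by ring

lemma sum_weight_mul_sum_sdiff (f : ι → V → ℝ) :
    ∑ e, w e * ∑ v ∈ L \ E e, f e v = ∑ v ∈ L, ∑ e, w e * ((1 - ind (E e) v) * f e v) := by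
  rw [sum_comm]
  refine sum_congr rfl fun e _ => ?_
  rw [← mul_sum, sdiff_eq_filter, sum_filter]
  congr 1
  exact sum_congr rfl fun v _ => by by_cases hv : v ∈ E e <;> simp [ind, hv]

variable [Fintype V]

lemma sum_weight_mul_sq_deviation_le (hk : 1 ≤ k) (hE : ∀ i, #(E i) = k)
    (hw : IsFractionalMatching E w) (hδ0 : 0 ≤ δ)
    (hδ : ∀ u v, u ≠ v → weightedCodegree E w u v ≤ δ) (hq : q ∈ Set.Icc (0 : ℝ) 1)
    (hg : 0 ≤ g) (v : V) :
    ∑ e, w e * ((1 - ind (E e) v) * (weightedDegree E w v - q + g - degreeLoss E w e v) ^ 2) ≤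
      (weightedDegree E w v - q) ^ 2 * (∑ i, w i)
        + 2 * (weightedDegree E w v - q) * g * (∑ i, w i) + 2 * g
        - 2 * (weightedDegree E w v - q) * neighborDegreeSum E w v
        + 3 * k ^ 2 * δ + g ^ 2 * ∑ i, w i := by
  set D := weightedDegree E w v
  set ℓ := fun e => degreeLoss E w e v
  have hD0 : 0 ≤ D := weightedDegree_nonneg hw.nonneg v
  have hD1 : D ≤ 1 := hw.degree_le_one v
  have hpointwise (e : ι) : w e * ((1 - ind (E e) v) * (D - q + g - ℓ e) ^ 2) ≤
      (D - q) ^ 2 * w e + 2 * (D - q) * g * (w e - w e * ind (E e) v)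
        - 2 * (D - q) * (w e * ((1 - ind (E e) v) * ℓ e)) + g ^ 2 * w e
        + w e * ((1 - ind (E e) v) * ℓ e ^ 2) := by
    by_cases hv : v ∈ E e
    · rw [ind_of_mem hv]
      linarith [mul_nonneg (sq_nonneg (D - q)) (hw.nonneg e),
        mul_nonneg (sq_nonneg g) (hw.nonneg e)]
    · rw [ind_of_notMem hv]
      linarith [mul_nonneg (hw.nonneg e) (mul_nonneg hg (degreeLoss_nonneg (E := E) hw.nonneg e v)),
        show w e * ((1 - 0) * (D - q + g - ℓ e) ^ 2) = (D - q) ^ 2 * w e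
          + 2 * (D - q) * g * (w e - w e * 0) - 2 * (D - q) * (w e * ((1 - 0) * ℓ e)) + g ^ 2 * w e
          + w e * ((1 - 0) * ℓ e ^ 2) - 2 * (w e * (g * ℓ e)) by ring]
  have hsum := sum_le_sum fun e (_ : e ∈ univ) => hpointwise e
  simp only [sum_add_distrib, sum_sub_distrib, ← mul_sum] at hsum
  rw [show ∑ e, w e * ind (E e) v = D from rfl,
    show ∑ e, w e * ((1 - ind (E e) v) * ℓ e) = totalDegreeLoss E w v from rfl] at hsum
  have hsq := sum_weight_mul_degreeLoss_sq_le hk hE hw hδ0 hδ v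
  have hlower := totalDegreeLoss_le_neighborDegreeSum (E := E) hw.nonneg v
  have hupper := neighborDegreeSum_le_totalDegreeLoss_add hE hw hδ0 hδ v
  have hcovered : -((D - q) * D) * g ≤ 1 * g := by
    gcongr
    nlinarith [hq.1, hq.2]
  have hcross : (D - q) * (neighborDegreeSum E w v - totalDegreeLoss E w v) ≤ k ^ 2 * δ := by
    nlinarith [hq.1, hq.2]
  linarith

lemma neg_le_sum_weightedCodegree_mul (hk : 1 ≤ k) (hE : ∀ i, #(E i) = k)
    (hw : IsFractionalMatching E w) (a : V → ℝ) :
    -((k - 1) * ∑ v, a v ^ 2) ≤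
      ∑ v, a v * ∑ u ∈ univ.erase v, weightedCodegree E w u v * a u := by
  have hk' : (0 : ℝ) ≤ k - 1 := by
    rw [sub_nonneg]
    exact_mod_cast hk
  have hswap : ∑ v, ∑ u ∈ univ.erase v, weightedCodegree E w u v * a u ^ 2 =
      ∑ v, ∑ u ∈ univ.erase v, weightedCodegree E w u v * a v ^ 2 := by
    rw [sum_comm' (t' := univ) (s' := fun u => univ.erase u) (by simp [eq_comm])]
    exact sum_congr rfl fun v _ => sum_congr rfl fun u _ => by rw [weightedCodegree_comm]
  have hdiag : ∑ v, ∑ u ∈ univ.erase v, weightedCodegree E w u v * a v ^ 2 ≤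
      (k - 1) * ∑ v, a v ^ 2 := by
    rw [mul_sum]
    refine sum_le_sum fun v _ => ?_
    rw [← sum_mul, sum_erase_weightedCodegree hE]
    gcongr
    exact mul_le_of_le_one_right hk' (hw.degree_le_one v)
  have hamgm : 0 ≤ ∑ v, ∑ u ∈ univ.erase v, weightedCodegree E w u v * (a u + a v) ^ 2 :=
    sum_nonneg fun v _ => sum_nonneg fun u _ =>
      mul_nonneg (weightedCodegree_nonneg hw.nonneg u v) (sq_nonneg _)
  have hexpand : ∑ v, ∑ u ∈ univ.erase v, weightedCodegree E w u v * (a u + a v) ^ 2 =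
      ∑ v, ∑ u ∈ univ.erase v, weightedCodegree E w u v * a u ^ 2
      + ∑ v, ∑ u ∈ univ.erase v, weightedCodegree E w u v * a v ^ 2
      + 2 * ∑ v, a v * ∑ u ∈ univ.erase v, weightedCodegree E w u v * a u := by
    simp_rw [mul_sum, ← sum_add_distrib]
    exact sum_congr rfl fun v _ => sum_congr rfl fun u _ => by ring
  linarith

lemma sum_deviation_mul_neighborDegreeSum_ge (hk : 1 ≤ k) (hE : ∀ i, #(E i) = k)
    (hw : IsFractionalMatching E w) (hL : ∀ v ∉ L, weightedDegree E w v = 0) :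
    q * (k - 1) * (discrepancy E w L q + q * ∑ v ∈ L, (weightedDegree E w v - q))
        - (k - 1) * discrepancy E w L q ≤
      ∑ v ∈ L, (weightedDegree E w v - q) * neighborDegreeSum E w v := by
  set a := fun v => weightedDegree E w v - q with ha
  have hcodeg {u v : V} (hu : u ∉ L) : weightedCodegree E w u v = 0 := by
    refine le_antisymm ?_ (weightedCodegree_nonneg hw.nonneg u v)
    rw [← hL u hu]
    exact sum_le_sum fun i _ =>
      mul_le_of_le_one_right (mul_nonneg (hw.nonneg i) (ind_nonneg _ _)) (ind_le_one _ _)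
  have hneighbor (v : V) : neighborDegreeSum E w v = q * (k - 1) * (a v + q) +
      ∑ u ∈ univ.erase v, weightedCodegree E w u v * (ind L u * a u) := by
    have hsplit (u : V) : weightedCodegree E w u v * weightedDegree E w u =
        q * weightedCodegree E w u v + weightedCodegree E w u v * (ind L u * a u) := by
      by_cases hu : u ∈ L
      · rw [ind_of_mem hu, ha]; ring
      · rw [hcodeg hu]; ring
    simp_rw [neighborDegreeSum, hsplit, sum_add_distrib, ← mul_sum,
      sum_erase_weightedCodegree hE, ha]
    ring
  have hcross := neg_le_sum_weightedCodegree_mul hk hE hw (fun v => ind L v * a v)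
  simp_rw [mul_pow, mul_assoc, sum_ind_mul, sq (ind L _), ind_mul_ind, inter_self, sum_ind_mul]
    at hcross
  rw [← show discrepancy E w L q = ∑ v ∈ L, a v ^ 2 from rfl] at hcross
  have hexpand : ∑ v ∈ L, a v * neighborDegreeSum E w v =
      q * (k - 1) * (discrepancy E w L q + q * ∑ v ∈ L, a v)
      + ∑ v ∈ L, a v * ∑ u ∈ univ.erase v, weightedCodegree E w u v * (ind L u * a u) := by
    rw [discrepancy, mul_sum, ← sum_add_distrib, mul_sum, ← sum_add_distrib]
    exact sum_congr rfl fun v _ => by rw [hneighbor]; ring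
  linarith

lemma sum_weight_mul_discrepancy_le (hk : 1 ≤ k) (hE : ∀ i, #(E i) = k)
    (hw : IsFractionalMatching E w) (hδ0 : 0 ≤ δ)
    (hδ : ∀ u v, u ≠ v → weightedCodegree E w u v ≤ δ) (hL : ∀ v ∉ L, weightedDegree E w v = 0)
    (hL0 : L.Nonempty) (hq : q ∈ Set.Icc (0 : ℝ) 1) (hg0 : 0 ≤ g)
    (hg : g * #L = q * (k * (k - 1))) :
    ∑ e, w e * ∑ v ∈ L \ E e, (weightedDegree E w v - degreeLoss E w e v - (q - g)) ^ 2 ≤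
      (∑ e, w e) * discrepancy E w L q
        + (2 * k * discrepancy E w L q + 3 * k ^ 2 * δ * #L + 3 * k ^ 3) := by
  have hk' : (1 : ℝ) ≤ k := by exact_mod_cast hk
  have hΦ0 : 0 ≤ discrepancy E w L q := sum_nonneg fun _ _ => sq_nonneg _
  have hcross := sum_deviation_mul_neighborDegreeSum_ge (q := q) hk hE hw hL
  have hdrift := drift_mul_sum_deviation_le hk hE hL hL0 hq.1 hg
  have hlinear := hg.trans_le (mul_mul_sub_one_le_sq hk' hq.2)
  have hsq := drift_sq_mul_sum_weight_le hk hE hw hL hL0 hq hg0 hg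
  simp_rw [sum_weight_mul_sum_sdiff, show ∀ e v, weightedDegree E w v - degreeLoss E w e v - (q - g)
    = weightedDegree E w v - q + g - degreeLoss E w e v by intros; ring]
  calc _ ≤ _ := sum_le_sum fun v _ => sum_weight_mul_sq_deviation_le hk hE hw hδ0 hδ hq hg0 v
    _ = (∑ e, w e) * discrepancy E w L q
          + 2 * ((∑ v ∈ L, (weightedDegree E w v - q)) * g * ∑ e, w e) + 2 * (g * #L)
          - 2 * ∑ v ∈ L, (weightedDegree E w v - q) * neighborDegreeSum E w v
          + 3 * k ^ 2 * δ * #L + g ^ 2 * (∑ e, w e) * #L := by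
        simp only [discrepancy, sum_add_distrib, sum_sub_distrib, sum_const, nsmul_eq_mul,
          mul_assoc, ← mul_sum, ← sum_mul]
        ring
    _ ≤ _ := by nlinarith [one_le_pow₀ (n := 2) hk']

end Discrepancy

section Restriction

variable {V ι : Type*} [DecidableEq V] {E : ι → Finset V} {w : ι → ℝ} {k : ℕ} {δ q g : ℝ}
  {L : Finset V}

/-- The weight function `w` restricted to the edges contained in the vertex set `L`. -/
noncomputable def restrictWeight (E : ι → Finset V) (w : ι → ℝ) (L : Finset V) (i : ι) : ℝ :=
  if E i ⊆ L then w i else 0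

lemma restrictWeight_nonneg (hw : ∀ i, 0 ≤ w i) (L : Finset V) (i : ι) :
    0 ≤ restrictWeight E w L i := by
  unfold restrictWeight
  split_ifs
  exacts [hw i, le_rfl]

lemma restrictWeight_le (hw : ∀ i, 0 ≤ w i) (L : Finset V) (i : ι) :
    restrictWeight E w L i ≤ w i := by
  unfold restrictWeight
  split_ifs
  exacts [le_rfl, hw i]

lemma restrictWeight_sdiff (E : ι → Finset V) (w : ι → ℝ) (L : Finset V) (e i : ι) :
    restrictWeight E w (L \ E e) i =
      restrictWeight E w L i - restrictWeight E w L i * meets (E i) (E e) := by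
  unfold restrictWeight meets
  simp only [subset_sdiff]
  by_cases hL : E i ⊆ L <;> by_cases he : Disjoint (E i) (E e) <;> simp [hL, he]

variable [Fintype ι]

lemma weightedDegree_mono {w₁ w₂ : ι → ℝ} (h : ∀ i, w₁ i ≤ w₂ i) (v : V) :
    weightedDegree E w₁ v ≤ weightedDegree E w₂ v :=
  sum_le_sum fun i _ => mul_le_mul_of_nonneg_right (h i) (ind_nonneg _ _)

lemma weightedCodegree_mono {w₁ w₂ : ι → ℝ} (h : ∀ i, w₁ i ≤ w₂ i) (u v : V) :
    weightedCodegree E w₁ u v ≤ weightedCodegree E w₂ u v :=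
  sum_le_sum fun i _ => mul_le_mul_of_nonneg_right
    (mul_le_mul_of_nonneg_right (h i) (ind_nonneg _ _)) (ind_nonneg _ _)

lemma IsFractionalMatching.restrictWeight (hw : IsFractionalMatching E w) (L : Finset V) :
    IsFractionalMatching E (restrictWeight E w L) where
  nonneg := restrictWeight_nonneg hw.nonneg L
  degree_le_one v :=
    (weightedDegree_mono (restrictWeight_le hw.nonneg L) v).trans (hw.degree_le_one v)

lemma weightedDegree_restrictWeight_of_notMem (E : ι → Finset V) (w : ι → ℝ) {v : V}
    (hv : v ∉ L) : weightedDegree E (restrictWeight E w L) v = 0 := by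
  refine sum_eq_zero fun i _ => ?_
  by_cases hi : E i ⊆ L
  · rw [ind_of_notMem fun h => hv (hi h), mul_zero]
  · rw [restrictWeight, if_neg hi, zero_mul]

lemma weightedDegree_restrictWeight_sdiff (E : ι → Finset V) (w : ι → ℝ) (L : Finset V) (e : ι)
    (v : V) : weightedDegree E (restrictWeight E w (L \ E e)) v =
      weightedDegree E (restrictWeight E w L) v - degreeLoss E (restrictWeight E w L) e v := by
  simp_rw [weightedDegree, degreeLoss, ← sum_sub_distrib, restrictWeight_sdiff]
  exact sum_congr rfl fun i _ => by ring

lemma exists_ne_zero_of_sum_mul_le {w X : ι → ℝ} {Y : ℝ} (hw : ∀ i, 0 ≤ w i) (hpos : 0 < ∑ i, w i)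
    (h : ∑ i, w i * X i ≤ (∑ i, w i) * Y) : ∃ i, w i ≠ 0 ∧ X i ≤ Y := by
  by_contra! hlt
  obtain ⟨i, _, hi⟩ := exists_ne_zero_of_sum_ne_zero hpos.ne'
  refine h.not_gt ?_
  rw [sum_mul]
  refine sum_lt_sum (fun j _ => ?_) ⟨i, mem_univ i, ?_⟩
  · rcases eq_or_ne (w j) 0 with hj | hj
    · simp [hj]
    · exact mul_le_mul_of_nonneg_left (hlt j hj).le (hw j)
  · exact mul_lt_mul_of_pos_left (hlt i hi) ((hw i).lt_of_ne' hi)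

lemma sum_weight_lower_bound (hE : ∀ i, #(E i) = k) (hL : ∀ v ∉ L, weightedDegree E w v = 0)
    (hq : 0 < q) : q * #L / 2 - discrepancy E w L q / (2 * q) ≤ k * ∑ i, w i := by
  rw [natCast_mul_sum_weight hE hL q]
  have hpointwise (v : V) :
      -(q / 2) - (weightedDegree E w v - q) ^ 2 / (2 * q) ≤ weightedDegree E w v - q := by
    rw [← sub_nonneg]
    have : weightedDegree E w v - q - (-(q / 2) - (weightedDegree E w v - q) ^ 2 / (2 * q)) =
        weightedDegree E w v ^ 2 / (2 * q) := by field_simp; ring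
    rw [this]
    positivity
  have hsum := sum_le_sum fun v (_ : v ∈ L) => hpointwise v
  rw [sum_sub_distrib, ← sum_div, sum_const, nsmul_eq_mul, ← discrepancy] at hsum
  linarith

variable [Fintype V]

lemma exists_discrepancy_sdiff_le (hk : 1 ≤ k) (hE : ∀ i, #(E i) = k)
    (hw : IsFractionalMatching E w) (hδ0 : 0 ≤ δ)
    (hδ : ∀ u v, u ≠ v → weightedCodegree E w u v ≤ δ) (hL : L.Nonempty)
    (hq : q ∈ Set.Icc (0 : ℝ) 1) (hg0 : 0 ≤ g) (hg : g * #L = q * (k * (k - 1)))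
    (hpos : 0 < ∑ i, restrictWeight E w L i) :
    ∃ e, E e ⊆ L ∧ discrepancy E (restrictWeight E w (L \ E e)) (L \ E e) (q - g) ≤
      discrepancy E (restrictWeight E w L) L q
        + (2 * k * discrepancy E (restrictWeight E w L) L q + 3 * k ^ 2 * δ * #L + 3 * k ^ 3)
          / ∑ i, restrictWeight E w L i := by
  have hsum := sum_weight_mul_discrepancy_le hk hE (hw.restrictWeight L) hδ0
    (fun u v huv => (weightedCodegree_mono (restrictWeight_le hw.nonneg L) u v).trans (hδ u v huv))
    (fun v => weightedDegree_restrictWeight_of_notMem E w) hL hq hg0 hg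
  simp_rw [← weightedDegree_restrictWeight_sdiff] at hsum
  refine (exists_ne_zero_of_sum_mul_le (restrictWeight_nonneg hw.nonneg L) hpos ?_).imp
    fun e he => ⟨by_contra fun h => he.1 (if_neg h), he.2⟩
  rwa [mul_add, mul_div_cancel₀ _ hpos.ne']

end Restriction

section Nibble

variable {V ι : Type*} [DecidableEq V] [Fintype V] {E : ι → Finset V} {w : ι → ℝ} {k : ℕ}
  {ε δ q q₀ C K : ℝ} {M : Finset ι}

/-- The vertices not covered by the edges `E i` with `i ∈ M`. -/
def uncovered (E : ι → Finset V) (M : Finset ι) : Finset V := (M.biUnion E)ᶜ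

lemma card_uncovered (hE : ∀ i, #(E i) = k) (hM : (M : Set ι).PairwiseDisjoint E) :
    (#(uncovered E M) : ℝ) = Fintype.card V - k * #M := by
  have hcover : #(M.biUnion E) = k * #M := by
    rw [card_biUnion hM, sum_congr rfl fun i _ => hE i, sum_const, smul_eq_mul, mul_comm]
  rw [uncovered, card_compl, Nat.cast_sub (card_le_univ _), hcover, Nat.cast_mul]

lemma disjoint_of_subset_uncovered {s : Finset V} (hs : s ⊆ uncovered E M) {i : ι} (hi : i ∈ M) :
    Disjoint s (E i) :=
  disjoint_left.mpr fun _ hvs hvi => mem_compl.mp (hs hvs) (mem_biUnion.mpr ⟨i, hi, hvi⟩)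

lemma notMem_of_subset_uncovered {e : ι} (hne : (E e).Nonempty) (he : E e ⊆ uncovered E M) :
    e ∉ M := fun h =>
  hne.ne_empty (disjoint_self_iff_empty _ |>.mp (disjoint_of_subset_uncovered he h))

lemma uncovered_insert [DecidableEq ι] (E : ι → Finset V) (M : Finset ι) (e : ι) :
    uncovered E (insert e M) = uncovered E M \ E e := by
  rw [uncovered, uncovered, biUnion_insert, compl_union, inter_comm, sdiff_eq_inter_compl]

variable [Fintype ι]

/-- The state of the nibble: the edges chosen so far form a matching, and the degrees in the
hypergraph induced on the uncovered vertices are close to `q` on average. The constants `C` and `K`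
control the decay of `q` and the growth of the discrepancy in each step. -/
structure IsNibbleState (E : ι → Finset V) (w : ι → ℝ) (C K δ : ℝ) (M : Finset ι) (q : ℝ) :
    Prop where
  pairwiseDisjoint : (M : Set ι).PairwiseDisjoint E
  le_one : q ≤ 1
  pow_le : (1 - C / Fintype.card V) ^ #M ≤ q
  discrepancy_le :
    discrepancy E (restrictWeight E w (uncovered E M)) (uncovered E M) q
      + 1 + δ * Fintype.card V ≤ (1 + K / Fintype.card V) ^ #M * (2 * δ * Fintype.card V + 1)

lemma isNibbleState_empty (hw : IsFractionalMatching E w)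
    (hdef : ∑ v, (1 - weightedDegree E w v) ≤ δ * Fintype.card V) :
    IsNibbleState E w C K δ ∅ 1 where
  pairwiseDisjoint := by simp
  le_one := le_rfl
  pow_le := by simp
  discrepancy_le := by
    have hfull : restrictWeight E w univ = w := by
      ext i
      exact if_pos (subset_univ _)
    have hsq : discrepancy E w univ 1 ≤ ∑ v, (1 - weightedDegree E w v) :=
      sum_le_sum fun v _ => by
        nlinarith [hw.degree_le_one v, weightedDegree_nonneg (E := E) hw.nonneg v]
    simp only [uncovered, biUnion_empty, compl_empty, hfull, card_empty, pow_zero, one_mul]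
    linarith

lemma sum_restrictWeight_lower_bound (hk : 1 ≤ k) (hE : ∀ i, #(E i) = k) {L : Finset V}
    (hε : 0 < ε) (hq₀ : 0 < q₀) (hq : q₀ ≤ q) (hL : ε * Fintype.card V ≤ #L)
    (hΦ : discrepancy E (restrictWeight E w L) L q ≤ q₀ ^ 2 * ε / 2 * Fintype.card V) :
    q₀ * ε / (4 * k) * Fintype.card V ≤ ∑ i, restrictWeight E w L i := by
  have hk' : (0 : ℝ) < k := by exact_mod_cast hk
  have hbound := sum_weight_lower_bound hE
    (fun v => weightedDegree_restrictWeight_of_notMem (L := L) E w) (hq₀.trans_le hq)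
  have hmain : q₀ * (ε * Fintype.card V) / 2 ≤ q * #L / 2 := by
    gcongr
    exact hq₀.le.trans hq
  have herror : discrepancy E (restrictWeight E w L) L q / (2 * q) ≤
      q₀ ^ 2 * ε / 2 * Fintype.card V / (2 * q₀) := by gcongr
  have hsimp : q₀ ^ 2 * ε / 2 * Fintype.card V / (2 * q₀) = q₀ * ε * Fintype.card V / 4 := by
    field_simp
    ring
  refine le_of_mul_le_mul_left ?_ hk'
  calc k * (q₀ * ε / (4 * k) * Fintype.card V) = q₀ * ε * Fintype.card V / 4 := by field_simp
    _ ≤ _ := by linarith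

lemma discrepancy_increment_le {k Φ δ l n W κ : ℝ} (hk : 1 ≤ k) (hΦ : 0 ≤ Φ) (hδ : 0 ≤ δ)
    (hl0 : 0 ≤ l) (hl : l ≤ n) (hκ : 0 < κ) (hn : 0 < n) (hW : κ * n ≤ W) :
    (2 * k * Φ + 3 * k ^ 2 * δ * l + 3 * k ^ 3) / W ≤ 3 * k ^ 3 / κ / n * (Φ + 1 + δ * n) := by
  have hk3 : k ≤ k ^ 3 := le_self_pow₀ hk (by norm_num)
  have hk23 : k ^ 2 ≤ k ^ 3 := pow_le_pow_right₀ hk (by norm_num)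
  calc _ ≤ (3 * k ^ 3 * Φ + 3 * k ^ 3 * δ * n + 3 * k ^ 3) / W := by
        have hW0 : 0 < W := (mul_pos hκ hn).trans_le hW
        gcongr
        norm_num
    _ ≤ (3 * k ^ 3 * Φ + 3 * k ^ 3 * δ * n + 3 * k ^ 3) / (κ * n) := by gcongr
    _ = _ := by field_simp; ring

lemma IsNibbleState.exists_extension [DecidableEq ι] (hk : 1 ≤ k) (hE : ∀ i, #(E i) = k)
    (hw : IsFractionalMatching E w) (hδ0 : 0 ≤ δ)
    (hδ : ∀ u v, u ≠ v → weightedCodegree E w u v ≤ δ) (hε : 0 < ε) (hq₀ : 0 < q₀)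
    (hV : k ^ 2 / ε < Fintype.card V)
    (hstate : IsNibbleState E w (k ^ 2 / ε) (12 * k ^ 4 / (q₀ * ε)) δ M q) (hq : q₀ ≤ q)
    (hL : ε * Fintype.card V ≤ #(uncovered E M))
    (hΦ : discrepancy E (restrictWeight E w (uncovered E M)) (uncovered E M) q ≤
      q₀ ^ 2 * ε / 2 * Fintype.card V) :
    ∃ e ∉ M, ∃ q', IsNibbleState E w (k ^ 2 / ε) (12 * k ^ 4 / (q₀ * ε)) δ (insert e M) q' := by
  set L := uncovered E M
  set n : ℝ := (Fintype.card V : ℝ)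
  have hk' : (1 : ℝ) ≤ k := by exact_mod_cast hk
  have hn : 0 < n := lt_of_le_of_lt (by positivity) hV
  have hcard : (0 : ℝ) < #L := lt_of_lt_of_le (by positivity) hL
  have hW := sum_restrictWeight_lower_bound hk hE hε hq₀ hq hL hΦ
  set g := q * (k * (k - 1)) / #L with hg
  have hg0 : 0 ≤ g :=
    div_nonneg (mul_nonneg (hq₀.le.trans hq) (mul_nonneg (by positivity) (by linarith))) hcard.le
  have hκ : 0 < q₀ * ε / (4 * k) * n := by positivity
  obtain ⟨e, heL, hle⟩ := exists_discrepancy_sdiff_le hk hE hw hδ0 hδ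
    (card_pos.mp (by exact_mod_cast hcard)) ⟨hq₀.le.trans hq, hstate.le_one⟩ hg0
    (div_mul_cancel₀ _ hcard.ne') (hκ.trans_le hW)
  have heM : e ∉ M := notMem_of_subset_uncovered (card_pos.mp (by rw [hE]; exact hk)) heL
  refine ⟨e, heM, q - g, ?_, ?_, ?_, ?_⟩
  · rw [coe_insert]
    exact hstate.pairwiseDisjoint.insert fun i hi _ => disjoint_of_subset_uncovered heL hi
  · linarith [hstate.le_one]
  · have hstep : g ≤ q * (k ^ 2 / ε / n) := by
      rw [hg, mul_div_assoc, div_div]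
      gcongr
      exacts [hq₀.le.trans hq, by nlinarith]
    have hfactor : 0 ≤ 1 - k ^ 2 / ε / n := by
      rw [sub_nonneg, div_le_one hn]
      exact hV.le
    rw [card_insert_of_notMem heM, pow_succ]
    linarith [mul_le_mul_of_nonneg_right hstate.pow_le hfactor]
  · have hdiscrepancy : 0 ≤ discrepancy E (restrictWeight E w L) L q :=
      sum_nonneg fun v _ => sq_nonneg _
    have hincrement := discrepancy_increment_le (δ := δ) (l := #L) hk' hdiscrepancy hδ0
      (Nat.cast_nonneg _) (Nat.cast_le.mpr (card_le_univ L)) (by positivity) hn hW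
    rw [card_insert_of_notMem heM, pow_succ', mul_assoc, uncovered_insert]
    refine le_trans ?_ (mul_le_mul_of_nonneg_left hstate.discrepancy_le (by positivity))
    rw [show 3 * (k : ℝ) ^ 3 / (q₀ * ε / (4 * k)) = 12 * k ^ 4 / (q₀ * ε) by
      field_simp; ring] at hincrement
    linarith

lemma exp_neg_two_mul_le_one_sub_div_pow {C n : ℝ} {t : ℕ} (hC : 0 ≤ C) (hn : 0 < n)
    (hCn : 2 * C ≤ n) (ht : t ≤ n) : Real.exp (-(2 * C)) ≤ (1 - C / n) ^ t := by
  have hCn' : C / n ≤ 1 / 2 := by rw [div_le_iff₀ hn]; linarith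
  have hpos : 0 < 1 - C / n := by linarith
  rw [← Real.exp_log (pow_pos hpos t), Real.exp_le_exp, Real.log_pow]
  have hlog : -(2 * (C / n)) ≤ Real.log (1 - C / n) := by
    refine le_trans ?_ (Real.one_sub_inv_le_log_of_pos hpos)
    rw [neg_le_sub_iff_le_add, inv_le_iff_one_le_mul₀ hpos]
    nlinarith [div_nonneg hC hn.le]
  calc -(2 * C) = -(n * (2 * (C / n))) := by field_simp
    _ ≤ -(t * (2 * (C / n))) := by gcongr
    _ ≤ t * Real.log (1 - C / n) := by rw [← mul_neg]; gcongr

lemma one_add_div_pow_le_exp {K n : ℝ} {t : ℕ} (hK : 0 ≤ K) (hn : 0 < n) (ht : t ≤ n) :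
    (1 + K / n) ^ t ≤ Real.exp K := by
  calc (1 + K / n) ^ t ≤ Real.exp (K / n) ^ t := by
        gcongr
        rw [add_comm]
        exact Real.add_one_le_exp _
    _ = Real.exp (t * (K / n)) := (Real.exp_nat_mul _ _).symm
    _ ≤ Real.exp K := by
        rw [Real.exp_le_exp, mul_div_left_comm]
        exact mul_le_of_le_one_right hK ((div_le_one hn).mpr ht)

lemma IsNibbleState.discrepancy_le_of_large {η : ℝ} (hstate : IsNibbleState E w C K δ M q)
    (hK : 0 ≤ K) (hδ : δ = η * Real.exp (-K) / 4) (hδ0 : 0 ≤ δ) (hη : 0 < η)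
    (hV : 2 * Real.exp K / η < Fintype.card V) (hM : (#M : ℝ) ≤ Fintype.card V) :
    discrepancy E (restrictWeight E w (uncovered E M)) (uncovered E M) q ≤
      η * Fintype.card V := by
  have hV0 : (0 : ℝ) < Fintype.card V := lt_of_le_of_lt (by positivity) hV
  have hexp : Real.exp K * (2 * δ * Fintype.card V + 1) =
      η / 2 * Fintype.card V + Real.exp K := by
    rw [hδ, Real.exp_neg]
    field_simp
    ring
  have hpow : (1 + K / Fintype.card V) ^ #M * (2 * δ * Fintype.card V + 1) ≤
      Real.exp K * (2 * δ * Fintype.card V + 1) := by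
    gcongr
    exact one_add_div_pow_le_exp hK hV0 hM
  rw [div_lt_iff₀ hη] at hV
  have hδV : 0 ≤ δ * Fintype.card V := by positivity
  linarith [hstate.discrepancy_le]

end Nibble

theorem exists_matching_of_almost_regular.{u, v} {k : ℕ} (hk : 1 ≤ k) {ε : ℝ} (hε : 0 < ε) :
    ∃ δ > 0, ∃ N : ℝ, ∀ (V : Type u) (ι : Type v) [Fintype V] [DecidableEq V] [Fintype ι]
      (E : ι → Finset V) (w : ι → ℝ), N < Fintype.card V → (∀ i, #(E i) = k) →
      IsFractionalMatching E w → (∀ u v, u ≠ v → weightedCodegree E w u v ≤ δ) →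
      ∑ v, (1 - weightedDegree E w v) ≤ δ * Fintype.card V →
      ∃ M : Finset ι, (M : Set ι).PairwiseDisjoint E ∧ (1 - ε) * Fintype.card V ≤ k * #M := by
  classical
  have hk' : (1 : ℝ) ≤ k := by exact_mod_cast hk
  set C := k ^ 2 / ε
  set q₀ := Real.exp (-(2 * C))
  set K := 12 * k ^ 4 / (q₀ * ε)
  set η := q₀ ^ 2 * ε / 2
  refine ⟨η * Real.exp (-K) / 4, by positivity, max (2 * C) (2 * Real.exp K / η), ?_⟩
  intro V ι _ _ _ E w hN hE hw hδ hdef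
  set n : ℝ := (Fintype.card V : ℝ)
  have hn : 0 < n := lt_of_le_of_lt (by positivity) hN
  obtain ⟨hNC, hNK⟩ := max_lt_iff.mp hN
  suffices hrun : ∀ t : ℕ, (∀ s < t, k * s ≤ (1 - ε) * n) →
      ∃ M : Finset ι, #M = t ∧ ∃ q, IsNibbleState E w C K (η * Real.exp (-K) / 4) M q by
    obtain ⟨M, hM, q, hstate⟩ := hrun ⌈(1 - ε) * n / k⌉₊ fun s hs => by
      rw [Nat.lt_ceil, lt_div_iff₀ (by positivity)] at hs
      linarith
    refine ⟨M, hstate.pairwiseDisjoint, ?_⟩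
    rw [hM, ← div_le_iff₀' (by positivity)]
    exact Nat.le_ceil _
  intro t
  induction t with
  | zero => exact fun _ => ⟨∅, card_empty, 1, isNibbleState_empty hw hdef⟩
  | succ t ih =>
    intro hroom
    obtain ⟨M, hM, q, hstate⟩ := ih fun s hs => hroom s (hs.trans t.lt_succ_self)
    have hroom' := hroom t t.lt_succ_self
    have htn : (t : ℝ) ≤ n := by nlinarith [Nat.cast_nonneg (α := ℝ) t]
    obtain ⟨e, he, q', hstate'⟩ := hstate.exists_extension hk hE hw (by positivity) hδ hε
      (Real.exp_pos _) (by linarith [show 0 ≤ C by positivity])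
      ((exp_neg_two_mul_le_one_sub_div_pow (by positivity) hn hNC.le (hM ▸ htn)).trans
        hstate.pow_le)
      (by rw [card_uncovered hE hstate.pairwiseDisjoint, hM]; linarith)
      (hstate.discrepancy_le_of_large (by positivity) rfl (by positivity) (by positivity) hNK
        (hM ▸ htn))
    exact ⟨insert e M, by rw [card_insert_of_notMem he, hM], q', hstate'⟩

section RandomFunction

variable {α β : Type*} [Fintype α] [DecidableEq α] [Fintype β]

lemma expect_splitAt (j : α) (G : β → ({i // i ≠ j} → β) → ℝ) :
    𝔼 f : α → β, G (f j) (fun i => f i) = 𝔼 b, 𝔼 g, G b g := by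
  rw [← expect_product' univ univ G, univ_product_univ]
  exact Fintype.expect_equiv (Equiv.funSplitAt j β) _ _ fun f => rfl

lemma expect_apply_eq (j : α) (G : β → ℝ) : 𝔼 f : α → β, G (f j) = 𝔼 b, G b := by
  rcases isEmpty_or_nonempty β with hβ | hβ
  · have : IsEmpty (α → β) := ⟨fun f => isEmptyElim (f j)⟩
    simp
  · rw [expect_splitAt j fun b _ => G b]
    exact expect_congr rfl fun b _ => Fintype.expect_const _

lemma expect_apply_apply_eq {i j : α} (hij : i ≠ j) (G : β → β → ℝ) :
    𝔼 f : α → β, G (f i) (f j) = 𝔼 b, 𝔼 c, G b c := by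
  rw [expect_splitAt i fun b g => G b (g ⟨j, hij.symm⟩)]
  exact expect_congr rfl fun b _ => expect_apply_eq _ _

lemma expect_restrict_eq [Nonempty β] (p : α → Prop) [Fintype {a // p a}]
    (G : ({a // p a} → β) → ℝ) : 𝔼 f : α → β, G (fun a => f a) = 𝔼 g, G g := by
  classical
  calc 𝔼 f : α → β, G (fun a => f a)
      = 𝔼 x : ({a // p a} → β) × ({a // ¬p a} → β), G x.1 :=
        Fintype.expect_equiv (Equiv.piEquivPiSubtypeProd p fun _ => β) _ _ fun f => rfl
    _ = 𝔼 g, G g := by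
        rw [← univ_product_univ, expect_product]
        exact expect_congr rfl fun g _ => Fintype.expect_const (G g)

lemma expect_expect_piecewise (s : Finset α) (H : (α → β) → ℝ) :
    𝔼 ψ, 𝔼 φ, H (s.piecewise ψ φ) = 𝔼 φ, H φ := by
  rcases isEmpty_or_nonempty (α → β) with h | h
  · simp
  have hswap : Function.Involutive fun p : (α → β) × (α → β) =>
      (s.piecewise p.1 p.2, s.piecewise p.2 p.1) := by
    rintro ⟨ψ, φ⟩
    ext i <;> by_cases hi : i ∈ s <;> simp [hi]
  calc 𝔼 ψ, 𝔼 φ, H (s.piecewise ψ φ)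
      = 𝔼 p : (α → β) × (α → β), H (s.piecewise p.1 p.2) := by
        rw [← univ_product_univ, expect_product]
    _ = 𝔼 p : (α → β) × (α → β), H p.1 :=
        Fintype.expect_equiv hswap.toPerm _ _ fun p => rfl
    _ = 𝔼 φ, H φ := by
        rw [← univ_product_univ, expect_product]
        exact expect_congr rfl fun φ _ => Fintype.expect_const (H φ)

variable [DecidableEq β]

lemma expect_ite_apply_eq (j : α) (b : β) :
    𝔼 f : α → β, (if f j = b then (1 : ℝ) else 0) = 1 / Fintype.card β := by
  rw [expect_apply_eq j fun c => if c = b then (1 : ℝ) else 0, Fintype.expect_ite_eq']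
  simp [NNRat.smul_def]

lemma expect_ite_apply_eq_mul {i j : α} (hij : i ≠ j) (b c : β) :
    𝔼 f : α → β, (if f i = b then (1 : ℝ) else 0) * (if f j = c then 1 else 0) =
      1 / (Fintype.card β : ℝ) ^ 2 := by
  rw [expect_apply_apply_eq hij fun x y => (if x = b then (1 : ℝ) else 0) * if y = c then 1 else 0,
    ← Fintype.expect_mul_expect, Fintype.expect_ite_eq', Fintype.expect_ite_eq']
  simp [NNRat.smul_def, sq]

lemma expect_ite_apply_eq_apply {i j : α} (hij : i ≠ j) :
    𝔼 f : α → β, (if f i = f j then (1 : ℝ) else 0) = 1 / Fintype.card β := by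
  rcases isEmpty_or_nonempty β with hβ | hβ
  · have : IsEmpty (α → β) := ⟨fun f => isEmptyElim (f j)⟩
    simp
  rw [expect_apply_apply_eq hij fun b c => if b = c then (1 : ℝ) else 0]
  simp [NNRat.smul_def]

open Classical in
lemma expect_not_injOn_le (s : Finset α) :
    𝔼 f : α → β, (if Set.InjOn f s then (0 : ℝ) else 1) ≤ #s ^ 2 / Fintype.card β := by
  have hcollision (f : α → β) : (if Set.InjOn f s then (0 : ℝ) else 1) ≤
      ∑ p ∈ s.offDiag, if f p.1 = f p.2 then 1 else 0 := by
    split_ifs with hf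
    · positivity
    · simp only [Set.InjOn, not_forall] at hf
      obtain ⟨i, hi, j, hj, hij, hne⟩ := hf
      have hmem : (i, j) ∈ s.offDiag := mem_offDiag.mpr ⟨hi, hj, hne⟩
      refine le_of_eq_of_le (if_pos hij).symm (single_le_sum
        (f := fun p => if f p.1 = f p.2 then (1 : ℝ) else 0) (fun p _ => ?_) hmem)
      positivity
  calc 𝔼 f : α → β, (if Set.InjOn f s then (0 : ℝ) else 1)
      ≤ 𝔼 f : α → β, ∑ p ∈ s.offDiag, if f p.1 = f p.2 then (1 : ℝ) else 0 :=
        expect_le_expect fun f _ => hcollision f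
    _ = ∑ p ∈ s.offDiag, 1 / (Fintype.card β : ℝ) := by
        rw [expect_sum_comm]
        exact sum_congr rfl fun p hp => expect_ite_apply_eq_apply (mem_offDiag.mp hp).2.2
    _ ≤ #s ^ 2 / Fintype.card β := by
        rw [sum_const, nsmul_eq_mul, mul_one_div, offDiag_card]
        gcongr
        exact_mod_cast (Nat.sub_le _ _).trans (sq _).ge

end RandomFunction

section BoundedDifferences

variable {V : Type*} [Fintype V] {c : ℝ}

lemma expect_exp_sub_expect_le [Nonempty V] (h : V → ℝ) (hc : ∀ u v, |h u - h v| ≤ c) :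
    𝔼 v, Real.exp (h v - 𝔼 u, h u) ≤ Real.exp (c ^ 2 / 2) := by
  have hc0 : 0 ≤ c := (abs_nonneg _).trans (hc Classical.ofNonempty Classical.ofNonempty)
  have hdeviation (v) : |h v - 𝔼 u, h u| ≤ c := by
    rw [← Fintype.expect_const (h v) (ι := V), ← expect_sub_distrib]
    exact (abs_expect_le _ _).trans (expect_le univ_nonempty fun u _ => hc v u)
  have hchord (v) : Real.exp (h v - 𝔼 u, h u) ≤
      Real.cosh c + (h v - 𝔼 u, h u) / c * Real.sinh c := by
    have hle : |(h v - 𝔼 u, h u) / c| ≤ 1 := by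
      rw [abs_div, abs_of_nonneg hc0]
      exact div_le_one_of_le₀ (hdeviation v) hc0
    rcases hc0.eq_or_lt with rfl | hpos
    · simp [abs_nonpos_iff.mp (hdeviation v)]
    · simpa [hpos.ne'] using Real.exp_mul_le_cosh_add_mul_sinh hle c
  calc 𝔼 v, Real.exp (h v - 𝔼 u, h u)
      ≤ 𝔼 v, (Real.cosh c + (h v - 𝔼 u, h u) / c * Real.sinh c) :=
        expect_le_expect fun v _ => hchord v
    _ = Real.cosh c := by
        rw [expect_add_distrib, Fintype.expect_const, ← expect_mul, ← expect_div,
          expect_sub_distrib, Fintype.expect_const]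
        simp
    _ ≤ Real.exp (c ^ 2 / 2) := Real.cosh_le_exp_half_sq c

lemma expect_fin_succ {N : ℕ} (G : (Fin (N + 1) → V) → ℝ) :
    𝔼 g, G g = 𝔼 v, 𝔼 g, G (Fin.cons v g) := by
  rw [← expect_product' univ univ fun v (g : Fin N → V) => G (Fin.cons v g), univ_product_univ]
  exact (Fintype.expect_equiv (Fin.consEquiv fun _ => V) _ _ fun _ => rfl).symm

lemma expect_exp_sub_expect_le_of_bounded_differences [Nonempty V] {N : ℕ}
    (f : (Fin N → V) → ℝ) (hf : ∀ g i v, |f (Function.update g i v) - f g| ≤ c) :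
    𝔼 g, Real.exp (f g - 𝔼 g', f g') ≤ Real.exp (N * c ^ 2 / 2) := by
  induction N with
  | zero => simp
  | succ N ih =>
    set h : V → ℝ := fun v => 𝔼 g, f (Fin.cons v g) with hh
    have hc (u v : V) : |h u - h v| ≤ c := by
      rw [hh, ← expect_sub_distrib]
      refine (abs_expect_le _ _).trans (expect_le univ_nonempty fun g _ => ?_)
      simpa using hf (Fin.cons v g) 0 u
    have hinner (v : V) : 𝔼 g, Real.exp (f (Fin.cons v g) - h v) ≤ Real.exp (N * c ^ 2 / 2) :=
      ih (fun g => f (Fin.cons v g)) fun g i u => by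
        simpa [Fin.cons_update] using hf (Fin.cons v g) i.succ u
    calc 𝔼 g, Real.exp (f g - 𝔼 g', f g')
        = 𝔼 v, Real.exp (h v - 𝔼 u, h u) * 𝔼 g, Real.exp (f (Fin.cons v g) - h v) := by
          rw [expect_fin_succ, expect_fin_succ f]
          simp_rw [mul_expect, ← Real.exp_add, sub_add_sub_comm, add_comm (h _),
            add_sub_add_right_eq_sub]
          rfl
      _ ≤ 𝔼 v, Real.exp (h v - 𝔼 u, h u) * Real.exp (N * c ^ 2 / 2) :=
          expect_le_expect fun v _ => mul_le_mul_of_nonneg_left (hinner v) (Real.exp_nonneg _)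
      _ ≤ Real.exp (c ^ 2 / 2) * Real.exp (N * c ^ 2 / 2) := by
          rw [← expect_mul]
          gcongr
          exact expect_exp_sub_expect_le h hc
      _ = Real.exp ((N + 1 : ℕ) * c ^ 2 / 2) := by
          rw [← Real.exp_add]
          push_cast
          ring_nf

open Classical in
lemma expect_ite_le_exp_of_bounded_differences [Nonempty V] {N : ℕ} {t : ℝ} (ht : 0 ≤ t)
    (f : (Fin N → V) → ℝ) (hf : ∀ g i v, |f (Function.update g i v) - f g| ≤ c) :
    𝔼 g, (if f g ≤ 𝔼 g', f g' - t then (1 : ℝ) else 0) ≤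
      Real.exp (-(t ^ 2 / (2 * N * c ^ 2))) := by
  set l := t / (N * c ^ 2) with hl
  have hl0 : 0 ≤ l := by positivity
  have hmgf := expect_exp_sub_expect_le_of_bounded_differences (fun g => -l * f g) fun g i v => by
    rw [← mul_sub, abs_mul, abs_neg, abs_of_nonneg hl0]
    exact mul_le_mul_of_nonneg_left (hf g i v) hl0
  rw [← mul_expect] at hmgf
  calc 𝔼 g, (if f g ≤ 𝔼 g', f g' - t then (1 : ℝ) else 0)
      ≤ 𝔼 g, Real.exp (-(l * t)) * Real.exp (-l * f g - -l * 𝔼 g', f g') := by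
        refine expect_le_expect fun g _ => ?_
        rw [← Real.exp_add]
        split_ifs with hg
        · rw [Real.one_le_exp_iff]
          nlinarith
        · positivity
    _ ≤ Real.exp (-(l * t)) * Real.exp (N * (l * c) ^ 2 / 2) := by
        rw [← mul_expect]
        gcongr
    _ = Real.exp (-(t ^ 2 / (2 * N * c ^ 2))) := by
        rw [← Real.exp_add, hl]
        rcases eq_or_ne (N * c ^ 2) 0 with hzero | _
        · simp [mul_assoc, hzero]
        · congr 1
          field_simp
          ring

end BoundedDifferences

section Padding

variable {V ι : Type*} {E : ι → Finset V} {w : ι → ℝ} {r q : ℕ}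

/-- The edges `E i` on `V` together with, for every vertex `v` and every choice of one dummy vertex
from each of `r` classes of size `q`, the edge joining `v` to these dummy vertices. -/
def paddedEdge (E : ι → Finset V) (r q : ℕ) :
    ι ⊕ V × (Fin r → Fin q) → Finset (V ⊕ Fin r × Fin q) :=
  Sum.elim (fun i => (E i).disjSum ∅)
    fun x => ({x.1} : Finset V).disjSum (univ.image fun j => (j, x.2 j))

/-- The weight on `paddedEdge E r q` which spreads the missing degree `1 - weightedDegree E w v`
evenly over the dummy edges at `v`. -/
noncomputable def paddedWeight [DecidableEq V] [Fintype ι] (E : ι → Finset V) (w : ι → ℝ)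
    (r q : ℕ) : ι ⊕ V × (Fin r → Fin q) → ℝ :=
  Sum.elim w fun x => (1 - weightedDegree E w x.1) / q ^ r

lemma card_paddedEdge (hE : ∀ i, #(E i) = r + 1) (x) : #(paddedEdge E r q x) = r + 1 := by
  rcases x with i | ⟨v, f⟩
  · simp [paddedEdge, hE]
  · have himage : #(univ.image fun j => (j, f j)) = r := by
      rw [card_image_of_injective _ fun i j hij => (Prod.ext_iff.mp hij).1, card_univ,
        Fintype.card_fin]
    simp [paddedEdge, himage, add_comm]

variable [DecidableEq V]

@[simp] lemma ind_paddedEdge_inl_inl (i : ι) (v : V) :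
    ind (paddedEdge E r q (.inl i)) (.inl v) = ind (E i) v := by simp [paddedEdge, ind]

@[simp] lemma ind_paddedEdge_inl_inr (i : ι) (b : Fin r × Fin q) :
    ind (paddedEdge E r q (.inl i)) (.inr b) = 0 := by simp [paddedEdge, ind]

@[simp] lemma ind_paddedEdge_inr_inl (u : V) (f : Fin r → Fin q) (v : V) :
    ind (paddedEdge E r q (.inr (u, f))) (.inl v) = if u = v then 1 else 0 := by
  simp [paddedEdge, ind, eq_comm]

@[simp] lemma ind_paddedEdge_inr_inr (u : V) (f : Fin r → Fin q) (b : Fin r × Fin q) :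
    ind (paddedEdge E r q (.inr (u, f))) (.inr b) = if f b.1 = b.2 then 1 else 0 := by
  rcases b with ⟨j, b⟩
  simp [paddedEdge, ind]

variable [Fintype V] [Fintype ι]

lemma sum_paddedWeight_mul (E : ι → Finset V) (w : ι → ℝ)
    (G : ι ⊕ V × (Fin r → Fin q) → ℝ) :
    ∑ x, paddedWeight E w r q x * G x =
      ∑ i, w i * G (.inl i) + ∑ v, (1 - weightedDegree E w v) * 𝔼 f, G (.inr (v, f)) := by
  rw [Fintype.sum_sum_type, Fintype.sum_prod_type]
  congr 1
  refine sum_congr rfl fun v _ => ?_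
  simp [paddedWeight, Fintype.expect_eq_sum_div_card, ← mul_sum, div_mul_eq_mul_div, mul_div_assoc,
    sum_div]

lemma weightedDegree_paddedEdge_inl (hq : 0 < q) (v : V) :
    weightedDegree (paddedEdge E r q) (paddedWeight E w r q) (.inl v) = 1 := by
  have : Nonempty (Fin q) := Fin.pos_iff_nonempty.mp hq
  rw [weightedDegree, sum_paddedWeight_mul]
  simp [weightedDegree]

lemma weightedDegree_paddedEdge_inr (b : Fin r × Fin q) :
    weightedDegree (paddedEdge E r q) (paddedWeight E w r q) (.inr b) =
      (∑ v, (1 - weightedDegree E w v)) / q := by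
  rw [weightedDegree, sum_paddedWeight_mul]
  simp [expect_ite_apply_eq, ← sum_mul, div_eq_mul_inv]

lemma weightedCodegree_paddedEdge_inl_inl {u v : V} (huv : u ≠ v) :
    weightedCodegree (paddedEdge E r q) (paddedWeight E w r q) (.inl u) (.inl v) =
      weightedCodegree E w u v := by
  simp_rw [weightedCodegree, mul_assoc]
  rw [sum_paddedWeight_mul]
  simp only [ind_paddedEdge_inl_inl, ind_paddedEdge_inr_inl, ← mul_expect]
  simp [huv]

lemma weightedCodegree_paddedEdge_inl_inr (u : V) (b : Fin r × Fin q) :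
    weightedCodegree (paddedEdge E r q) (paddedWeight E w r q) (.inl u) (.inr b) =
      (1 - weightedDegree E w u) / q := by
  simp_rw [weightedCodegree, mul_assoc]
  rw [sum_paddedWeight_mul]
  simp only [ind_paddedEdge_inl_inr, ind_paddedEdge_inr_inl, ind_paddedEdge_inr_inr, ← mul_expect,
    expect_ite_apply_eq]
  simp [div_eq_mul_inv]

lemma weightedCodegree_paddedEdge_inr_inr_le (hw : IsFractionalMatching E w)
    {b c : Fin r × Fin q} (hbc : b ≠ c) :
    weightedCodegree (paddedEdge E r q) (paddedWeight E w r q) (.inr b) (.inr c) ≤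
      (∑ v, (1 - weightedDegree E w v)) / q ^ 2 := by
  simp_rw [weightedCodegree, mul_assoc]
  rw [sum_paddedWeight_mul, sum_div]
  simp only [ind_paddedEdge_inl_inr, ind_paddedEdge_inr_inr, mul_zero, sum_const_zero, zero_add]
  refine sum_le_sum fun v _ => ?_
  have hdeg : 0 ≤ 1 - weightedDegree E w v := sub_nonneg.mpr (hw.degree_le_one v)
  rw [div_eq_mul_one_div]
  refine mul_le_mul_of_nonneg_left ?_ hdeg
  by_cases hclass : b.1 = c.1
  · have hne : b.2 ≠ c.2 := fun h => hbc (Prod.ext hclass h)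
    refine le_of_eq_of_le (expect_eq_zero fun f _ => ?_) (by positivity)
    rw [← hclass]
    by_cases hf : f b.1 = b.2 <;> simp [hf, hne]
  · simpa using (expect_ite_apply_eq_mul hclass b.2 c.2).le

lemma isFractionalMatching_paddedEdge (hw : IsFractionalMatching E w) (hq : 0 < q)
    (hle : ∑ v, (1 - weightedDegree E w v) ≤ q) :
    IsFractionalMatching (paddedEdge E r q) (paddedWeight E w r q) where
  nonneg
    | .inl i => hw.nonneg i
    | .inr x => div_nonneg (sub_nonneg.mpr (hw.degree_le_one x.1)) (by positivity)
  degree_le_one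
    | .inl v => (weightedDegree_paddedEdge_inl hq v).le
    | .inr b => by
      rw [weightedDegree_paddedEdge_inr]
      exact div_le_one_of_le₀ hle (Nat.cast_nonneg q)

lemma weightedCodegree_paddedEdge_le {δ : ℝ} (hw : IsFractionalMatching E w) (hq : 0 < q)
    (hle : ∑ v, (1 - weightedDegree E w v) ≤ q) (hqδ : 1 / (q : ℝ) ≤ δ)
    (hδ : ∀ u v, u ≠ v → weightedCodegree E w u v ≤ δ) (x y : V ⊕ Fin r × Fin q) (hxy : x ≠ y) :
    weightedCodegree (paddedEdge E r q) (paddedWeight E w r q) x y ≤ δ := by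
  have hmixed (u : V) (b : Fin r × Fin q) :
      weightedCodegree (paddedEdge E r q) (paddedWeight E w r q) (.inl u) (.inr b) ≤ δ := by
    rw [weightedCodegree_paddedEdge_inl_inr]
    refine le_trans ?_ hqδ
    gcongr
    linarith [weightedDegree_nonneg (E := E) hw.nonneg u]
  rcases x with u | b <;> rcases y with v | c
  · have huv : u ≠ v := fun h => hxy (congrArg _ h)
    exact (weightedCodegree_paddedEdge_inl_inl huv).trans_le (hδ u v huv)
  · exact hmixed u c
  · exact (weightedCodegree_comm _ _ _ _).trans_le (hmixed v b)
  · refine (weightedCodegree_paddedEdge_inr_inr_le hw fun h => hxy (congrArg _ h)).trans ?_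
    calc _ ≤ (q : ℝ) / q ^ 2 := by gcongr
      _ = 1 / q := by field_simp
      _ ≤ δ := hqδ

lemma sum_one_sub_weightedDegree_paddedEdge (hq : 0 < q) :
    ∑ x, (1 - weightedDegree (paddedEdge E r q) (paddedWeight E w r q) x) =
      r * (q - ∑ v, (1 - weightedDegree E w v)) := by
  have hq' : (q : ℝ) ≠ 0 := by exact_mod_cast hq.ne'
  rw [Fintype.sum_sum_type]
  simp_rw [weightedDegree_paddedEdge_inl hq, weightedDegree_paddedEdge_inr]
  rw [sum_const, sum_const, card_univ, card_univ, Fintype.card_prod, Fintype.card_fin,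
    Fintype.card_fin]
  simp only [sub_self, smul_zero, zero_add, nsmul_eq_mul, Nat.cast_mul]
  field_simp

end Padding

section PaddedMatching

variable {V ι : Type*} {E : ι → Finset V} {r q : ℕ} {M : Finset (ι ⊕ V × (Fin r → Fin q))}

lemma pairwiseDisjoint_toLeft_of_paddedEdge
    (hM : (M : Set (ι ⊕ V × (Fin r → Fin q))).PairwiseDisjoint (paddedEdge E r q)) :
    (M.toLeft : Set ι).PairwiseDisjoint E := by
  intro i hi j hj hij
  have hdisjoint : Disjoint ((E i).disjSum ∅) ((E j).disjSum (∅ : Finset (Fin r × Fin q))) :=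
    hM (mem_toLeft.mp hi) (mem_toLeft.mp hj) (Sum.inl_injective.ne hij)
  simpa [disjoint_left] using hdisjoint

lemma card_toRight_le_of_paddedEdge (hr : 0 < r)
    (hM : (M : Set (ι ⊕ V × (Fin r → Fin q))).PairwiseDisjoint (paddedEdge E r q)) :
    #M.toRight ≤ q := by
  let class₀ : Fin r := ⟨0, hr⟩
  calc #M.toRight ≤ #(univ : Finset (Fin q)) := by
        refine card_le_card_of_injOn (fun x => x.2 class₀) (fun x _ => mem_univ _) ?_
        intro x hx y hy hxy
        by_contra hne
        have hdisjoint := hM (mem_toRight.mp hx) (mem_toRight.mp hy) (Sum.inr_injective.ne hne)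
        rw [Function.onFun, disjoint_left] at hdisjoint
        refine @hdisjoint (.inr (class₀, x.2 class₀)) ?_ ?_
        · simp [paddedEdge]
        · simp [paddedEdge, show x.2 class₀ = y.2 class₀ from hxy]
    _ = q := by simp

end PaddedMatching

lemma sub_le_of_padded_bound {r W n Y q Q ε m l : ℝ} (hr : 0 ≤ r) (hε : 0 < ε)
    (hW : (r + 1) * W = n - Y) (hY0 : 0 ≤ Y) (hY : Y ≤ n) (hq : q ≤ Y + Q)
    (hQ : Q < n) (hQε : 2 * Q < n * ε)
    (hm : (1 - ε / 4) * (n + r * q) ≤ (r + 1) * m) (hml : m ≤ l + q) :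
    W - ε * n ≤ l := by
  have hsize : n + r * q ≤ (r + 1) * (2 * n) := by
    nlinarith [mul_le_mul_of_nonneg_left (show q ≤ 2 * n by linarith) hr]
  have hloss : ε / 4 * (n + r * q) ≤ (r + 1) * (ε * n / 2) := by nlinarith
  have hscaled : (r + 1) * (W - ε * n) ≤ (r + 1) * l := by
    have hεn : 0 ≤ r * (ε * n) := mul_nonneg hr (mul_nonneg hε.le (hY0.trans hY))
    nlinarith [mul_le_mul_of_nonneg_left hml (show 0 ≤ r + 1 by linarith)]
  exact le_of_mul_le_mul_left hscaled (by positivity)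

theorem exists_matching_of_weightedCodegree_le.{u, v} {k : ℕ} (hk : 2 ≤ k) {ε : ℝ} (hε : 0 < ε) :
    ∃ δ > 0, ∃ N : ℝ, ∀ (V : Type u) (ι : Type v) [Fintype V] [DecidableEq V] [Fintype ι]
      (E : ι → Finset V) (w : ι → ℝ), N < Fintype.card V → (∀ i, #(E i) = k) →
      IsFractionalMatching E w → (∀ u v, u ≠ v → weightedCodegree E w u v ≤ δ) →
      ∃ M : Finset ι, (M : Set ι).PairwiseDisjoint E ∧
        ∑ i, w i - ε * Fintype.card V ≤ #M := by
  obtain ⟨δ, hδ, N, hmatching⟩ :=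
    exists_matching_of_almost_regular.{u, max u v} (k := k) (by omega) (ε := ε / 4) (by positivity)
  obtain ⟨r, rfl⟩ : ∃ r, k = r + 1 := ⟨k - 1, by omega⟩
  set Q := 1 / δ + 1
  refine ⟨δ, hδ, max N (max (r * Q / δ) (max (2 * Q / ε) Q)), ?_⟩
  intro V ι _ _ _ E w hN hE hw hcodeg
  set n : ℝ := (Fintype.card V : ℝ) with hn
  obtain ⟨hN, hNδ, hNε, hNQ⟩ : N < n ∧ r * Q < n * δ ∧ 2 * Q < n * ε ∧ Q < n := by
    simpa [div_lt_iff₀, hδ, hε] using hN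
  set Y := ∑ v, (1 - weightedDegree E w v) with hY
  have hY0 : 0 ≤ Y := sum_nonneg fun v _ => sub_nonneg.mpr (hw.degree_le_one v)
  have hYW : (r + 1) * ∑ i, w i = n - Y := by
    rw [hY, sum_sub_distrib, sum_weightedDegree hE fun v hv => absurd (mem_univ v) hv]
    simp [hn]
  have hYn : Y ≤ n := by
    have := sum_nonneg fun i (_ : i ∈ univ) => hw.nonneg i
    nlinarith
  -- Dummy classes of size about `Y + 1 / δ` absorb the missing degree `Y` with codegrees `≤ δ`.
  obtain ⟨q, hYδq, hqY⟩ : ∃ q : ℕ, Y + 1 / δ ≤ q ∧ q ≤ Y + Q :=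
    ⟨_, Nat.le_ceil _, (Nat.ceil_lt_add_one (by positivity)).le.trans_eq (add_assoc _ _ _)⟩
  have hδ' : 0 < 1 / δ := one_div_pos.mpr hδ
  have hqδ : 1 / δ ≤ q := by linarith
  have hYq : Y ≤ q := by linarith
  have hq0 : 0 < q := by exact_mod_cast hδ'.trans_le hqδ
  have hcard : (Fintype.card (V ⊕ Fin r × Fin q) : ℝ) = n + r * q := by simp [hn]
  obtain ⟨M, hM, hMcard⟩ := hmatching _ _ (paddedEdge E r q) (paddedWeight E w r q)
    (by rw [hcard]; exact hN.trans_le (le_add_of_nonneg_right (by positivity)))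
    (card_paddedEdge hE) (isFractionalMatching_paddedEdge hw hq0 hYq)
    (weightedCodegree_paddedEdge_le hw hq0 hYq (one_div_le hδ (by positivity) |>.mp hqδ) hcodeg)
    (by
      rw [sum_one_sub_weightedDegree_paddedEdge hq0, hcard]
      calc r * (q - Y) ≤ r * Q := by gcongr; linarith
        _ ≤ δ * (n + r * q) := by nlinarith [show 0 ≤ δ * (r * q) by positivity])
  refine ⟨M.toLeft, pairwiseDisjoint_toLeft_of_paddedEdge hM, ?_⟩
  have hMsplit : (#M : ℝ) ≤ #M.toLeft + q := by
    rw [← card_toLeft_add_card_toRight (u := M)]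
    exact_mod_cast Nat.add_le_add_left (card_toRight_le_of_paddedEdge (by omega) hM) _
  rw [hcard] at hMcard
  push_cast at hMcard
  exact sub_le_of_padded_bound (Nat.cast_nonneg r) hε hYW hY0 hYn hqY hNQ hNε (by linarith) hMsplit

section Sampling

variable {α V : Type*} [DecidableEq V] {k : ℕ}

lemma image_piecewise_of_subset [DecidableEq α] {S T : Finset α} (hST : S ⊆ T) (ψ φ : α → V) :
    T.image (S.piecewise ψ φ) = S.image ψ ∪ univ.image fun a : {a // a ∈ T \ S} => φ a := by
  ext v
  simp only [mem_image, mem_union, mem_univ, true_and, Subtype.exists, mem_sdiff, exists_prop]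
  constructor
  · rintro ⟨a, ha, rfl⟩
    by_cases h : a ∈ S
    · exact .inl ⟨a, h, by simp [h]⟩
    · exact .inr ⟨a, ⟨ha, h⟩, by simp [h]⟩
  · rintro (⟨a, ha, rfl⟩ | ⟨a, ⟨ha, h⟩, rfl⟩)
    · exact ⟨a, hST ha, by simp [ha]⟩
    · exact ⟨a, ha, by simp [h]⟩

variable [Fintype α]

/-- The `k`-uniform hypergraph on a sample `φ`, in which a set of `k` sample points is an edge
if its image belongs to `F`. A sample may repeat a vertex; no edge then contains two of its
occurrences, provided that `F` is `k`-uniform. -/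
def sampledFamily (F : Finset (Finset V)) (k : ℕ) (φ : α → V) : Finset (Finset α) :=
  {T ∈ univ.powersetCard k | T.image φ ∈ F}

lemma sampledFamily_sized (F : Finset (Finset V)) (φ : α → V) :
    (sampledFamily F k φ : Set (Finset α)).Sized k := fun _ hT =>
  (mem_powersetCard.mp (mem_filter.mp hT).1).2

variable [DecidableEq α]

lemma card_filter_sampledFamily (F : Finset (Finset V)) (S : Finset α) (φ : α → V) :
    (#{T ∈ sampledFamily F k φ | S ⊆ T} : ℝ) =
      ∑ T ∈ univ.powersetCard k with S ⊆ T, if T.image φ ∈ F then 1 else 0 := by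
  rw [sampledFamily, filter_comm, sum_boole]

lemma abs_card_filter_sampledFamily_update_sub_le (F : Finset (Finset V)) {S : Finset α}
    (hS : #S < k) (ψ φ : α → V) (a : α) (v : V) :
    |(#{T ∈ sampledFamily F k (S.piecewise ψ (Function.update φ a v)) | S ⊆ T} : ℝ) -
        #{T ∈ sampledFamily F k (S.piecewise ψ φ) | S ⊆ T}| ≤
      (Fintype.card α - #S - 1).choose (k - #S - 1) := by
  by_cases ha : a ∈ S
  · have hupdate : S.piecewise ψ (Function.update φ a v) = S.piecewise ψ φ :=
      S.piecewise_congr (fun _ _ => rfl) fun i hi =>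
        Function.update_of_ne (by rintro rfl; exact hi ha) _ _
    simp [hupdate]
  have hmem : ∀ T : Finset α, |(if T.image (S.piecewise ψ (Function.update φ a v)) ∈ F
      then (1 : ℝ) else 0) - if T.image (S.piecewise ψ φ) ∈ F then 1 else 0| ≤
      if a ∈ T then 1 else 0 := by
    intro T
    by_cases haT : a ∈ T
    · rw [if_pos haT]
      split_ifs <;> norm_num
    · have himage : T.image (S.piecewise ψ (Function.update φ a v)) =
          T.image (S.piecewise ψ φ) := image_congr fun i hi => by
        have hia : i ≠ a := fun h => haT (h ▸ hi)
        by_cases hiS : i ∈ S <;> simp [hiS, hia]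
      simp [himage, haT]
  have hfilter : {T ∈ (univ : Finset α).powersetCard k | S ⊆ T}.filter (a ∈ ·) =
      {T ∈ (univ : Finset α).powersetCard k | insert a S ⊆ T} := by
    simp only [filter_filter, insert_subset_iff, and_comm]
  rw [card_filter_sampledFamily, card_filter_sampledFamily, ← sum_sub_distrib]
  calc _ ≤ ∑ T ∈ (univ : Finset α).powersetCard k with S ⊆ T, if a ∈ T then (1 : ℝ) else 0 :=
        (abs_sum_le_sum_abs _ _).trans (sum_le_sum fun T _ => hmem T)
    _ = (Fintype.card α - #S - 1).choose (k - #S - 1) := by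
      rw [sum_boole, hfilter, card_filter_powersetCard_subset _ _ _ (subset_univ _) (by
        rwa [card_insert_of_notMem ha]), card_insert_of_notMem ha, card_univ, Nat.sub_sub,
        Nat.sub_sub]

variable [Fintype V]

lemma factorial_le_card_union_image_eq {R A : Finset V} (hRA : R ⊆ A)
    (hA : #A = #R + Fintype.card α) :
    (Fintype.card α).factorial ≤ #{h : α → V | R ∪ univ.image h = A} := by
  have hcard : Fintype.card α = Fintype.card {v // v ∈ A \ R} := by
    rw [Fintype.card_coe, card_sdiff_of_subset hRA]
    omega
  rw [← Fintype.card_equiv (Fintype.equivOfCardEq hcard), ← card_univ]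
  refine card_le_card_of_injOn (fun e a => (e a : V)) (fun e _ => ?_) fun e _ e' _ hee' =>
    Equiv.ext fun a => Subtype.ext (congrFun hee' a)
  have himage : univ.image (fun a => (e a : V)) = A \ R := by
    ext v
    simpa using ⟨by rintro ⟨a, rfl⟩; exact mem_sdiff.mp (e a).2,
      fun hv => ⟨e.symm ⟨v, mem_sdiff.mpr hv⟩, by simp⟩⟩
  simpa [himage] using hRA

lemma factorial_mul_card_filter_subset_le {F : Finset (Finset V)}
    (hF : (F : Set (Finset V)).Sized k) {R : Finset V} (hR : #R + Fintype.card α = k) :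
    (Fintype.card α).factorial * #{A ∈ F | R ⊆ A} ≤ #{h : α → V | R ∪ univ.image h ∈ F} := by
  have hmaps : Set.MapsTo (fun h : α → V => R ∪ univ.image h)
      ({h : α → V | R ∪ univ.image h ∈ F} : Finset (α → V)) ({A ∈ F | R ⊆ A} : Finset _) := by
    intro h hh
    simpa using hh
  rw [card_eq_sum_card_fiberwise hmaps, mul_comm, ← smul_eq_mul]
  refine card_nsmul_le_sum _ _ _ fun A hA => ?_
  obtain ⟨hAF, hRA⟩ := mem_filter.mp hA
  refine (factorial_le_card_union_image_eq hRA ((hF hAF).trans hR.symm)).trans (card_le_card ?_)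
  intro h hh
  simp only [mem_filter, mem_univ, true_and] at hh ⊢
  exact ⟨hh ▸ hAF, hh⟩

lemma factorial_mul_card_div_le_expect_image_mem [Nonempty V] {F : Finset (Finset V)}
    (hF : (F : Set (Finset V)).Sized k) {S T : Finset α} (hT : #T = k) (hST : S ⊆ T)
    {ψ : α → V} (hψ : Set.InjOn ψ S) :
    (k - #S).factorial * (#{A ∈ F | S.image ψ ⊆ A} : ℝ) / Fintype.card V ^ (k - #S) ≤
      𝔼 φ : α → V, if T.image (S.piecewise ψ φ) ∈ F then (1 : ℝ) else 0 := by
  have hcard : Fintype.card {a // a ∈ T \ S} = k - #S := by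
    rw [Fintype.card_coe, card_sdiff_of_subset hST, hT]
  have hcount := factorial_mul_card_filter_subset_le (α := {a // a ∈ T \ S}) hF
    (R := S.image ψ) (by
      have := card_le_card hST
      rw [card_image_of_injOn hψ, hcard]
      omega)
  simp_rw [image_piecewise_of_subset hST]
  rw [expect_restrict_eq (fun a => a ∈ T \ S)
    fun h => if S.image ψ ∪ univ.image h ∈ F then (1 : ℝ) else 0, expect_eq_sum_div_card,
    sum_boole, card_univ, Fintype.card_fun, hcard]
  rw [hcard] at hcount
  push_cast
  gcongr
  exact_mod_cast hcount

lemma mul_choose_le_expect_card_filter_sampledFamily [Nonempty V] {F : Finset (Finset V)}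
    (hF : (F : Set (Finset V)).Sized k) {S : Finset α} (hS : #S ≤ k) {ψ : α → V}
    (hψ : Set.InjOn ψ S) {c : ℝ}
    (hc : c * Fintype.card V ^ (k - #S) ≤ (k - #S).factorial * #{A ∈ F | S.image ψ ⊆ A}) :
    c * (Fintype.card α - #S).choose (k - #S) ≤
      𝔼 φ : α → V, (#{T ∈ sampledFamily F k (S.piecewise ψ φ) | S ⊆ T} : ℝ) := by
  simp_rw [card_filter_sampledFamily]
  rw [expect_sum_comm, ← card_univ, ← card_filter_powersetCard_subset _ _ _ (subset_univ S) hS,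
    mul_comm, ← nsmul_eq_mul]
  refine card_nsmul_le_sum _ _ _ fun T hT => ?_
  obtain ⟨hTk, hST⟩ := mem_filter.mp hT
  refine le_trans ?_
    (factorial_mul_card_div_le_expect_image_mem hF (mem_powersetCard.mp hTk).2 hST hψ)
  rwa [le_div_iff₀ (by positivity)]

end Sampling

section SampledDegree

variable {V : Type*} [Fintype V] [Nonempty V] [DecidableEq V] {F : Finset (Finset V)} {k m : ℕ}

lemma mul_le_sq_mul_choose_div {d : ℕ} (hd : d < k) (hm : 2 * k ≤ m) (γ : ℝ) :
    γ ^ 2 / (8 * k ^ 2) * m ≤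
      (γ * (m - d).choose (k - d)) ^ 2 / (2 * m * (m - d - 1).choose (k - d - 1) ^ 2) := by
  obtain ⟨r, rfl⟩ := Nat.exists_eq_add_of_lt hd
  obtain ⟨q, rfl⟩ := Nat.exists_eq_add_of_le hm
  rw [show 2 * (d + r + 1) + q - d - 1 = d + 2 * r + 1 + q by omega,
    show 2 * (d + r + 1) + q - d = d + 2 * r + 1 + q + 1 by omega,
    show d + r + 1 - d - 1 = r by omega, show d + r + 1 - d = r + 1 by omega]
  have hpascal : ((d + 2 * r + 1 + q + 1) * (d + 2 * r + 1 + q).choose r : ℝ) =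
      (d + 2 * r + 1 + q + 1).choose (r + 1) * (r + 1) := by
    exact_mod_cast Nat.add_one_mul_choose_eq (d + 2 * r + 1 + q) r
  set B := (((d + 2 * r + 1 + q).choose r : ℕ) : ℝ)
  set K := (((d + 2 * r + 1 + q + 1).choose (r + 1) : ℕ) : ℝ)
  have hB : 0 < B := Nat.cast_pos.mpr (Nat.choose_pos (by omega))
  push_cast
  have hquad : (r + 1) * (2 * (d + r + 1) + q) ≤
      2 * (d + r + 1) * (d + 2 * r + 1 + q + 1 : ℝ) := by
    rw [← sub_nonneg]
    ring_nf
    positivity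
  have hratio : (2 * (d + r + 1) + q) * B ≤ 2 * (d + r + 1) * K := by
    refine le_of_mul_le_mul_left ?_ (by positivity : (0 : ℝ) < r + 1)
    calc ((r : ℝ) + 1) * ((2 * (d + r + 1) + q) * B)
        ≤ 2 * (d + r + 1) * ((d + 2 * r + 1 + q + 1) * B) := by
          rw [← mul_assoc, ← mul_assoc]
          exact mul_le_mul_of_nonneg_right hquad hB.le
      _ = (r + 1) * (2 * (d + r + 1) * K) := by rw [hpascal]; ring
  rw [div_mul_eq_mul_div, div_le_div_iff₀ (by positivity) (by positivity)]
  calc γ ^ 2 * (2 * (d + r + 1) + q) * (2 * (2 * (d + r + 1) + q) * B ^ 2)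
      = 2 * γ ^ 2 * ((2 * (d + r + 1) + q) * B) ^ 2 := by ring
    _ ≤ 2 * γ ^ 2 * (2 * (d + r + 1) * K) ^ 2 := by gcongr
    _ = (γ * K) ^ 2 * (8 * (d + r + 1) ^ 2) := by ring

lemma expect_card_filter_sampledFamily_piecewise_lt_le (hF : (F : Set (Finset V)).Sized k)
    {S : Finset (Fin m)} (hS : #S < k) (hm : 2 * k ≤ m) {ψ : Fin m → V} (hψ : Set.InjOn ψ S)
    {c₀ c : ℝ} (hc₀ : c₀ ≤ c)
    (hc : c * Fintype.card V ^ (k - #S) ≤ (k - #S).factorial * #{A ∈ F | S.image ψ ⊆ A}) :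
    𝔼 φ : Fin m → V, (if #{T ∈ sampledFamily F k (S.piecewise ψ φ) | S ⊆ T} <
        c₀ * (m - #S).choose (k - #S) then (1 : ℝ) else 0) ≤
      Real.exp (-((c - c₀) ^ 2 / (8 * k ^ 2) * m)) := by
  have hmean := mul_choose_le_expect_card_filter_sampledFamily hF hS.le hψ hc
  rw [Fintype.card_fin] at hmean
  have htail := expect_ite_le_exp_of_bounded_differences
    (t := (c - c₀) * (m - #S).choose (k - #S)) (by have := sub_nonneg.mpr hc₀; positivity)
    (fun φ => (#{T ∈ sampledFamily F k (S.piecewise ψ φ) | S ⊆ T} : ℝ))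
    fun φ a v => abs_card_filter_sampledFamily_update_sub_le F hS ψ φ a v
  rw [Fintype.card_fin] at htail
  refine le_trans (expect_le_expect fun φ _ => ?_)
    (htail.trans (Real.exp_le_exp.mpr (neg_le_neg (mul_le_sq_mul_choose_div hS hm _))))
  split_ifs with hlt hle <;> first | exact absurd (by linarith) hle | norm_num

lemma expect_card_filter_sampledFamily_lt_le (hF : (F : Set (Finset V)).Sized k)
    {S : Finset (Fin m)} (hS : #S < k) (hm : 2 * k ≤ m) {c₀ c : ℝ} (hc₀ : c₀ ≤ c)
    (hc : ∀ R : Finset V, #R = #S →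
      c * Fintype.card V ^ (k - #S) ≤ (k - #S).factorial * #{A ∈ F | R ⊆ A}) :
    𝔼 φ : Fin m → V, (if #{T ∈ sampledFamily F k φ | S ⊆ T} <
        c₀ * (m - #S).choose (k - #S) then (1 : ℝ) else 0) ≤
      Real.exp (-((c - c₀) ^ 2 / (8 * k ^ 2) * m)) + #S ^ 2 / Fintype.card V := by
  classical
  rw [← expect_expect_piecewise S]
  calc _ ≤ 𝔼 ψ : Fin m → V, (Real.exp (-((c - c₀) ^ 2 / (8 * k ^ 2) * m)) +
          if Set.InjOn ψ S then 0 else 1) := by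
        refine expect_le_expect fun ψ _ => ?_
        split_ifs with hψ
        · rw [add_zero]
          exact expect_card_filter_sampledFamily_piecewise_lt_le hF hS hm hψ hc₀
            (hc _ (card_image_of_injOn hψ))
        · refine (expect_le univ_nonempty fun φ _ => ?_).trans
            (le_add_of_nonneg_left (Real.exp_pos _).le)
          split_ifs <;> norm_num
    _ ≤ _ := by
        rw [expect_add_distrib, Fintype.expect_const]
        gcongr
        exact expect_not_injOn_le S

open Classical in
lemma expect_not_sampledFamily_minDegree_le {d : ℕ} (hF : (F : Set (Finset V)).Sized k)
    (hd : d < k) (hm : 2 * k ≤ m) {c₀ c : ℝ} (hc₀ : c₀ ≤ c)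
    (hc : ∀ R : Finset V, #R = d →
      c * Fintype.card V ^ (k - d) ≤ (k - d).factorial * #{A ∈ F | R ⊆ A}) :
    𝔼 φ : Fin m → V, (if ∀ S : Finset (Fin m), #S = d →
        c₀ * (m - d).choose (k - d) ≤ (#{T ∈ sampledFamily F k φ | S ⊆ T} : ℝ)
        then (0 : ℝ) else 1) ≤
      m ^ d * (Real.exp (-((c - c₀) ^ 2 / (8 * k ^ 2) * m)) + d ^ 2 / Fintype.card V) := by
  calc _ ≤ 𝔼 φ : Fin m → V, ∑ S ∈ (univ : Finset (Fin m)).powersetCard d,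
          if #{T ∈ sampledFamily F k φ | S ⊆ T} < c₀ * (m - d).choose (k - d)
          then (1 : ℝ) else 0 := by
        refine expect_le_expect fun φ _ => ?_
        have hnonneg : ∀ S ∈ (univ : Finset (Fin m)).powersetCard d,
            0 ≤ if #{T ∈ sampledFamily F k φ | S ⊆ T} < c₀ * (m - d).choose (k - d)
              then (1 : ℝ) else 0 := fun S _ => by split_ifs <;> norm_num
        split_ifs with hgood
        · exact sum_nonneg hnonneg
        · push Not at hgood
          obtain ⟨S, hS, hlt⟩ := hgood
          simpa [hlt] using
            single_le_sum hnonneg (mem_powersetCard.mpr ⟨subset_univ S, hS⟩)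
    _ ≤ ∑ S ∈ (univ : Finset (Fin m)).powersetCard d,
          (Real.exp (-((c - c₀) ^ 2 / (8 * k ^ 2) * m)) + d ^ 2 / Fintype.card V) := by
        rw [expect_sum_comm]
        refine sum_le_sum fun S hS => ?_
        obtain rfl := (mem_powersetCard.mp hS).2
        exact expect_card_filter_sampledFamily_lt_le hF hd hm hc₀ hc
    _ ≤ _ := by
        rw [sum_const, nsmul_eq_mul, card_powersetCard, card_univ, Fintype.card_fin]
        gcongr
        exact_mod_cast Nat.choose_le_pow m d

end SampledDegree

section Averaging

variable {α V : Type*} [DecidableEq V] [DecidableEq α] [Fintype α] {F : Finset (Finset V)}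

lemma ind_image_le_sum (φ : α → V) (T : Finset α) (v : V) :
    ind (T.image φ) v ≤ ∑ i, (if φ i = v then (1 : ℝ) else 0) * ind T i := by
  have hnonneg : ∀ i ∈ univ, 0 ≤ (if φ i = v then (1 : ℝ) else 0) * ind T i := fun i _ =>
    mul_nonneg (by split_ifs <;> norm_num) (ind_nonneg _ _)
  by_cases hv : v ∈ T.image φ
  · obtain ⟨i, hiT, rfl⟩ := mem_image.mp hv
    simpa [ind_of_mem hv, ind_of_mem hiT] using single_le_sum hnonneg (mem_univ i)
  · rw [ind_of_notMem hv]
    exact sum_nonneg hnonneg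

lemma weightedDegree_image_le {w : Finset α → ℝ} (hw : ∀ T, 0 ≤ w T) (φ : α → V) (v : V) :
    weightedDegree (fun T => T.image φ) w v ≤
      ∑ i, (if φ i = v then (1 : ℝ) else 0) * weightedDegree id w i := by
  calc weightedDegree (fun T => T.image φ) w v
      ≤ ∑ T, w T * ∑ i, (if φ i = v then (1 : ℝ) else 0) * ind T i :=
        sum_le_sum fun T _ => mul_le_mul_of_nonneg_left (ind_image_le_sum φ T v) (hw T)
    _ = _ := by
        simp_rw [weightedDegree, mul_sum]
        rw [sum_comm]
        exact sum_congr rfl fun i _ => sum_congr rfl fun T _ => mul_left_comm _ _ _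

lemma weightedCodegree_image_le {w : Finset α → ℝ} (hw : ∀ T, 0 ≤ w T) (φ : α → V) (u v : V) :
    weightedCodegree (fun T => T.image φ) w u v ≤
      ∑ i, ∑ j, (if φ i = u then (1 : ℝ) else 0) * (if φ j = v then 1 else 0) *
        weightedCodegree id w i j := by
  calc weightedCodegree (fun T => T.image φ) w u v
      ≤ ∑ T, w T * ((∑ i, (if φ i = u then (1 : ℝ) else 0) * ind T i) *
          ∑ j, (if φ j = v then (1 : ℝ) else 0) * ind T j) := by
        refine sum_le_sum fun T _ => ?_
        rw [mul_assoc]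
        exact mul_le_mul_of_nonneg_left (mul_le_mul (ind_image_le_sum φ T u)
          (ind_image_le_sum φ T v) (ind_nonneg _ _)
          ((ind_nonneg _ _).trans (ind_image_le_sum φ T u))) (hw T)
    _ = _ := by
        simp_rw [weightedCodegree, sum_mul_sum, mul_sum]
        rw [sum_comm]
        refine sum_congr rfl fun i _ => ?_
        rw [sum_comm]
        exact sum_congr rfl fun j _ => sum_congr rfl fun T _ => by rw [id]; ring

lemma weightedCodegree_le_weightedDegree {w : Finset α → ℝ} (hw : ∀ T, 0 ≤ w T) (i j : α) :
    weightedCodegree id w i j ≤ weightedDegree id w i :=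
  sum_le_sum fun T _ => mul_le_of_le_one_right (mul_nonneg (hw T) (ind_nonneg _ _)) (ind_le_one _ _)

variable [Fintype V]

/-- The weight on the subsets of `V` obtained by averaging over all samples `φ` the images of the
weights `w φ` on the subsets of the sample. Since a random sample hits a given vertex
`card α / card V` times on average, the scaling makes it a fractional matching if every `w φ` is
one. -/
noncomputable def averagedWeight (w : (α → V) → Finset α → ℝ) (A : Finset V) : ℝ :=
  Fintype.card V / Fintype.card α * 𝔼 φ, ∑ T with T.image φ = A, w φ T

variable {w : (α → V) → Finset α → ℝ}

lemma sum_averagedWeight_mul (hwF : ∀ φ T, T.image φ ∉ F → w φ T = 0) (g : Finset V → ℝ) :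
    ∑ A : F, averagedWeight w A * g A =
      Fintype.card V / Fintype.card α * 𝔼 φ, ∑ T, w φ T * g (T.image φ) := by
  have hfiber (φ : α → V) :
      ∑ A ∈ F, (∑ T with T.image φ = A, w φ T) * g A = ∑ T, w φ T * g (T.image φ) := by
    calc ∑ A ∈ F, (∑ T with T.image φ = A, w φ T) * g A
        = ∑ A ∈ F, ∑ T with T.image φ = A, w φ T * g (T.image φ) := by
          refine sum_congr rfl fun A _ => ?_
          rw [sum_mul]
          exact sum_congr rfl fun T hT => by rw [(mem_filter.mp hT).2]
      _ = ∑ T with T.image φ ∈ F, w φ T * g (T.image φ) :=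
          sum_fiberwise_eq_sum_filter _ _ _ _
      _ = ∑ T, w φ T * g (T.image φ) := by
          refine sum_filter_of_ne fun T _ hT => ?_
          contrapose! hT
          rw [hwF φ T hT, zero_mul]
  rw [sum_coe_sort F fun A => averagedWeight w A * g A]
  simp_rw [averagedWeight, mul_assoc, ← mul_sum, expect_mul, ← expect_sum_comm, hfiber]

lemma isFractionalMatching_averagedWeight (hw : ∀ φ, IsFractionalMatching id (w φ))
    (hwF : ∀ φ T, T.image φ ∉ F → w φ T = 0) :
    IsFractionalMatching (fun A : F => (A : Finset V)) fun A => averagedWeight w A where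
  nonneg A := mul_nonneg (by positivity)
    (expect_nonneg fun φ _ => sum_nonneg fun T _ => (hw φ).nonneg T)
  degree_le_one v := by
    calc _ = Fintype.card V / Fintype.card α *
          𝔼 φ, weightedDegree (fun T : Finset α => T.image φ) (w φ) v :=
          sum_averagedWeight_mul hwF fun A => ind A v
      _ ≤ Fintype.card V / Fintype.card α * 𝔼 φ : α → V, ∑ i, if φ i = v then (1 : ℝ) else 0 := by
          gcongr with φ _
          refine (weightedDegree_image_le (hw φ).nonneg φ v).trans (sum_le_sum fun i _ => ?_)
          exact mul_le_of_le_one_right (by split_ifs <;> norm_num) ((hw φ).degree_le_one i)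
      _ = (Fintype.card V / Fintype.card V) * (Fintype.card α / Fintype.card α) := by
          simp_rw [expect_sum_comm, expect_ite_apply_eq]
          rw [sum_const, card_univ, nsmul_eq_mul]
          ring
      _ ≤ 1 := mul_le_one₀ (div_self_le_one _) (by positivity) (div_self_le_one _)

lemma weightedCodegree_averagedWeight_le (hw : ∀ φ, IsFractionalMatching id (w φ))
    (hwF : ∀ φ T, T.image φ ∉ F → w φ T = 0) {u v : V} (huv : u ≠ v) :
    weightedCodegree (fun A : F => (A : Finset V)) (fun A => averagedWeight w A) u v ≤
      Fintype.card α / Fintype.card V := by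
  have hpair (i j : α) : 𝔼 φ : α → V, (if φ i = u then (1 : ℝ) else 0) *
      (if φ j = v then 1 else 0) ≤ 1 / (Fintype.card V : ℝ) ^ 2 := by
    rcases eq_or_ne i j with rfl | hij
    · refine (expect_eq_zero fun φ _ => ?_).trans_le (by positivity)
      by_cases h : φ i = u <;> simp [h, huv]
    · exact (expect_ite_apply_eq_mul hij u v).le
  calc _ = Fintype.card V / Fintype.card α *
          𝔼 φ, weightedCodegree (fun T : Finset α => T.image φ) (w φ) u v := by
        simp only [weightedCodegree, mul_assoc]
        exact sum_averagedWeight_mul hwF fun A => ind A u * ind A v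
    _ ≤ Fintype.card V / Fintype.card α * 𝔼 φ : α → V, ∑ i, ∑ j,
          (if φ i = u then (1 : ℝ) else 0) * (if φ j = v then 1 else 0) := by
        gcongr with φ _
        refine (weightedCodegree_image_le (hw φ).nonneg φ u v).trans
          (sum_le_sum fun i _ => sum_le_sum fun j _ => ?_)
        refine mul_le_of_le_one_right ?_
          ((weightedCodegree_le_weightedDegree (hw φ).nonneg i j).trans ((hw φ).degree_le_one i))
        split_ifs <;> norm_num
    _ ≤ Fintype.card V / Fintype.card α * ∑ i : α, ∑ j : α, 1 / (Fintype.card V : ℝ) ^ 2 := by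
        simp_rw [expect_sum_comm]
        gcongr with i _ j _
        exact hpair i j
    _ = Fintype.card α / Fintype.card V := by
        have := Nonempty.intro u
        rcases isEmpty_or_nonempty α with hα | hα
        · simp
        · simp only [sum_const, card_univ, nsmul_eq_mul]
          field_simp

end Averaging

lemma exists_matching_of_sampled_fractional_matchings.{u} {k m : ℕ} (hk : 2 ≤ k) (hm : 0 < m)
    {ε : ℝ} (hε : 0 < ε) :
    ∃ N : ℝ, ∀ (V : Type u) [Fintype V] [DecidableEq V] (F : Finset (Finset V))
      (w : (Fin m → V) → Finset (Fin m) → ℝ), N < Fintype.card V →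
      (F : Set (Finset V)).Sized k → (∀ φ, IsFractionalMatching id (w φ)) →
      (∀ φ T, T.image φ ∉ F → w φ T = 0) →
      ∃ M ⊆ F, (M : Set (Finset V)).PairwiseDisjoint id ∧
        Fintype.card V / m * (𝔼 φ, ∑ T, w φ T) - ε * Fintype.card V ≤ #M := by
  obtain ⟨δ, hδ, N, hmatching⟩ := exists_matching_of_weightedCodegree_le.{u, u} hk hε
  refine ⟨max N (m / δ), fun V _ _ F w hN hF hw hwF => ?_⟩
  obtain ⟨hN, hNδ⟩ := max_lt_iff.mp hN
  have hcard : (0 : ℝ) < Fintype.card V := (by positivity : (0 : ℝ) ≤ m / δ).trans_lt hNδ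
  obtain ⟨M, hM, hMcard⟩ := hmatching V F (fun A => A) (fun A => averagedWeight w A) hN
    (fun A => hF A.2) (isFractionalMatching_averagedWeight hw hwF) fun u v huv =>
      (weightedCodegree_averagedWeight_le hw hwF huv).trans (by
        rw [Fintype.card_fin, div_le_iff₀ hcard, mul_comm]
        exact ((div_lt_iff₀ hδ).mp hNδ).le)
  have hsum := sum_averagedWeight_mul hwF 1
  simp only [Pi.one_apply, mul_one, Fintype.card_fin] at hsum
  refine ⟨M.map (.subtype _), map_subtype_subset _, ?_, ?_⟩
  · rw [coe_map]
    rintro _ ⟨A, hA, rfl⟩ _ ⟨B, hB, rfl⟩ hAB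
    exact hM hA hB fun h => hAB (congrArg _ h)
  · rwa [card_map, ← hsum]

section FractionalThreshold

/-- Every `k`-uniform hypergraph on `m` vertices whose `d`-degrees are all at least the
proportion `c` of the largest possible value has a fractional matching of size at least `x * m`. -/
def ForcesFractionalMatching (k d : ℕ) (c x : ℝ) (m : ℕ) : Prop :=
  ∀ F : Finset (Finset (Fin m)), (F : Set (Finset (Fin m))).Sized k →
    (∀ S : Finset (Fin m), #S = d → c * (m - d).choose (k - d) ≤ #{T ∈ F | S ⊆ T}) →
    ∃ w : Finset (Fin m) → ℝ, IsFractionalMatching id w ∧ (∀ T ∉ F, w T = 0) ∧ x * m ≤ ∑ T, w T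

variable {k d m : ℕ} {c₀ c x : ℝ} {V : Type*} [DecidableEq V]

open Classical in
lemma ForcesFractionalMatching.exists_sampled_fractional_matching
    (h : ForcesFractionalMatching k d c₀ x m) (F : Finset (Finset V)) (φ : Fin m → V) :
    ∃ w : Finset (Fin m) → ℝ, IsFractionalMatching id w ∧ (∀ T, T.image φ ∉ F → w T = 0) ∧
      x * m * (1 - if ∀ S : Finset (Fin m), #S = d →
        c₀ * (m - d).choose (k - d) ≤ (#{T ∈ sampledFamily F k φ | S ⊆ T} : ℝ)
        then (0 : ℝ) else 1) ≤ ∑ T, w T := by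
  split_ifs with hgood
  · obtain ⟨w, hw, hwF, hsum⟩ := h _ (sampledFamily_sized F φ) hgood
    exact ⟨w, hw, fun T hT => hwF T fun hmem => hT (mem_filter.mp hmem).2, by simpa using hsum⟩
  · exact ⟨0, ⟨fun _ => le_rfl, fun _ => by simp [weightedDegree]⟩, fun _ _ => rfl, by simp⟩

lemma ForcesFractionalMatching.exists_sampled_fractional_matchings [Fintype V] [Nonempty V]
    (h : ForcesFractionalMatching k d c₀ x m) (hx : 0 ≤ x) {F : Finset (Finset V)}
    (hF : (F : Set (Finset V)).Sized k) (hd : d < k) (hm : 2 * k ≤ m) (hc₀ : c₀ ≤ c)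
    (hc : ∀ R : Finset V, #R = d →
      c * Fintype.card V ^ (k - d) ≤ (k - d).factorial * #{A ∈ F | R ⊆ A}) :
    ∃ w : (Fin m → V) → Finset (Fin m) → ℝ, (∀ φ, IsFractionalMatching id (w φ)) ∧
      (∀ φ T, T.image φ ∉ F → w φ T = 0) ∧
      x * m * (1 - m ^ d * (Real.exp (-((c - c₀) ^ 2 / (8 * k ^ 2) * m)) +
        d ^ 2 / Fintype.card V)) ≤ 𝔼 φ, ∑ T, w φ T := by
  classical
  choose w hw hwF hsum using h.exists_sampled_fractional_matching F
  refine ⟨w, hw, hwF, le_trans ?_ (expect_le_expect fun φ _ => hsum φ)⟩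
  rw [← mul_expect, expect_sub_distrib, Fintype.expect_const]
  gcongr
  exact expect_not_sampledFamily_minDegree_le hF hd hm hc₀ hc

open Filter in
lemma eventually_pow_mul_exp_neg_mul_le (d : ℕ) {b ε : ℝ} (hb : 0 < b) (hε : 0 < ε) :
    ∀ᶠ m : ℕ in atTop, (m : ℝ) ^ d * Real.exp (-(b * m)) ≤ ε := by
  have h := (tendsto_rpow_mul_exp_neg_mul_atTop_nhds_zero d b hb).comp tendsto_natCast_atTop_atTop
  simpa [Function.comp_def] using h.eventually (ge_mem_nhds hε)

end FractionalThreshold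

open Filter in
lemma exists_matching_of_eventually_forcesFractionalMatching.{u} {k d : ℕ} (hk : 2 ≤ k)
    (hd : d < k) {x c₀ c η : ℝ} (hx₀ : 0 ≤ x) (hx₁ : x ≤ 1) (hc₀ : c₀ < c) (hη : 0 < η)
    (h : ∀ᶠ m in atTop, ForcesFractionalMatching k d c₀ x m) :
    ∃ N : ℝ, ∀ (V : Type u) [Fintype V] [DecidableEq V] (F : Finset (Finset V)),
      N < Fintype.card V → (F : Set (Finset V)).Sized k →
      (∀ R : Finset V, #R = d →
        c * Fintype.card V ^ (k - d) ≤ (k - d).factorial * #{A ∈ F | R ⊆ A}) →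
      ∃ M ⊆ F, (M : Set (Finset V)).PairwiseDisjoint id ∧ (x - η) * Fintype.card V ≤ #M := by
  have hb : 0 < (c - c₀) ^ 2 / (8 * k ^ 2) := by
    have := sub_pos.mpr hc₀
    positivity
  obtain ⟨m, hforces, hexp, hkm⟩ := (h.and ((eventually_pow_mul_exp_neg_mul_le d hb
    (by positivity : 0 < η / 4)).and (eventually_ge_atTop (2 * k)))).exists
  have hm : 0 < m := by omega
  obtain ⟨N, hN⟩ := exists_matching_of_sampled_fractional_matchings.{u} hk hm (half_pos hη)
  refine ⟨max N (m ^ d * d ^ 2 / (η / 4)), fun V _ _ F hcard hF hc => ?_⟩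
  obtain ⟨hcardN, hcardη⟩ := max_lt_iff.mp hcard
  have hn : (0 : ℝ) < Fintype.card V :=
    (by positivity : (0 : ℝ) ≤ m ^ d * d ^ 2 / (η / 4)).trans_lt hcardη
  have : Nonempty V := Fintype.card_pos_iff.mp (by exact_mod_cast hn)
  obtain ⟨w, hw, hwF, hsum⟩ := hforces.exists_sampled_fractional_matchings hx₀ hF hd hkm hc₀.le hc
  obtain ⟨M, hMF, hM, hMcard⟩ := hN V F w hcardN hF hw hwF
  refine ⟨M, hMF, hM, le_trans ?_ hMcard⟩
  have hrepeat : (m : ℝ) ^ d * (d ^ 2 / Fintype.card V) ≤ η / 4 := by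
    rw [div_lt_iff₀ (by positivity)] at hcardη
    rw [← mul_div_assoc, div_le_iff₀ hn]
    linarith
  calc (x - η) * Fintype.card V
      ≤ (x * (1 - η / 2) - η / 2) * Fintype.card V := by
        refine mul_le_mul_of_nonneg_right ?_ hn.le
        nlinarith
    _ = Fintype.card V / m * (x * m * (1 - η / 2)) - η / 2 * Fintype.card V := by
        field_simp
    _ ≤ _ := by
        gcongr
        refine le_trans ?_ hsum
        gcongr
        linarith

section InducedFamily

variable {α V : Type*} [Fintype α] [DecidableEq V] {F : Finset (Finset V)} {k : ℕ} {e : α ↪ V}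

/-- The hypergraph on `α` induced by `F`, where `α` is identified with a set of vertices of `F`
by the embedding `e`. Restricting `F` to a vertex set, deleting vertices and passing between
`range n` and `Fin n` are all of this form. -/
def inducedFamily (e : α ↪ V) (F : Finset (Finset V)) : Finset (Finset α) := {B | B.map e ∈ F}

lemma mem_inducedFamily {B : Finset α} : B ∈ inducedFamily e F ↔ B.map e ∈ F := by
  simp [inducedFamily]

lemma inducedFamily_sized (hF : (F : Set (Finset V)).Sized k) :
    (inducedFamily e F : Set (Finset α)).Sized k := fun B hB => by
  simpa using hF (mem_inducedFamily.mp hB)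

lemma map_mapEmbedding_subset {M : Finset (Finset α)} (hM : M ⊆ inducedFamily e F) :
    M.map (mapEmbedding e).toEmbedding ⊆ F := fun _ hA => by
  obtain ⟨B, hB, rfl⟩ := mem_map.mp hA
  exact mem_inducedFamily.mp (hM hB)

lemma card_filter_inducedFamily [DecidableEq α] (S : Finset α) :
    #{B ∈ inducedFamily e F | S ⊆ B} = #{A ∈ F | S.map e ⊆ A ∧ A ⊆ univ.map e} := by
  rw [← card_map (mapEmbedding e).toEmbedding]
  congr 1
  ext A
  simp only [mem_map, mem_filter, mem_inducedFamily]
  constructor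
  · rintro ⟨B, ⟨hB, hSB⟩, rfl⟩
    exact ⟨hB, map_subset_map.mpr hSB, map_subset_map.mpr (subset_univ B)⟩
  · rintro ⟨hA, hSA, hAe⟩
    obtain ⟨B, -, rfl⟩ := subset_map_iff.mp hAe
    exact ⟨B, ⟨hA, map_subset_map.mp hSA⟩, rfl⟩

lemma pairwiseDisjoint_map_mapEmbedding {α V : Type*} (e : α ↪ V) {M : Finset (Finset α)}
    (hM : (M : Set (Finset α)).PairwiseDisjoint id) :
    (M.map (mapEmbedding e).toEmbedding : Set (Finset V)).PairwiseDisjoint id := by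
  rw [coe_map]
  rintro _ ⟨A, hA, rfl⟩ _ ⟨B, hB, rfl⟩ hAB
  exact (disjoint_map e).mpr (hM hA hB fun h => hAB (congrArg _ h))

end InducedFamily

section DeleteVertices

variable {V : Type*} {F : Finset (Finset V)} {k : ℕ} {U : Finset V}

lemma disjoint_map_subtype_notMem (B : Finset {v // v ∉ U}) : Disjoint (B.map (.subtype _)) U :=
  disjoint_left.mpr fun _ hB => property_of_mem_map_subtype B hB

lemma exists_matching_card_eq (hF : (F : Set (Finset V)).Sized k) (hk : 0 < k) {t : ℕ}
    (h : ∀ U : Finset V, #U < k * t → ∃ A ∈ F, Disjoint A U) :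
    ∃ M ⊆ F, (M : Set (Finset V)).PairwiseDisjoint id ∧ #M = t := by
  classical
  induction t with
  | zero => exact ⟨∅, by simp⟩
  | succ t ih =>
    obtain ⟨M, hMF, hM, rfl⟩ := ih fun U hU => h U (hU.trans_le (by gcongr; omega))
    obtain ⟨A, hA, hAM⟩ := h (M.biUnion id) <| calc
      #(M.biUnion id) ≤ #M * k := card_biUnion_le_card_mul _ _ _ fun A hA => (hF (hMF hA)).le
      _ < k * (#M + 1) := by linarith
    have hdisj : ∀ B ∈ M, Disjoint A B := (disjoint_biUnion_right _ _ _).mp hAM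
    have hnotMem : A ∉ M := fun hmem => by
      have hempty : A = ∅ := disjoint_self.mp (hdisj A hmem)
      simpa [hempty, hk.ne] using hF hA
    refine ⟨insert A M, insert_subset hA hMF, ?_, card_insert_of_notMem hnotMem⟩
    rw [coe_insert]
    exact hM.insert fun B hB _ => hdisj B hB

variable [DecidableEq V] [Fintype V]

lemma card_filter_subset_le_add (hF : (F : Set (Finset V)).Sized k) {S U : Finset V}
    (hS : #S < k) (hSU : Disjoint S U) :
    #{A ∈ F | S ⊆ A} ≤
      #{A ∈ F | S ⊆ A ∧ Disjoint A U} + #U * Fintype.card V ^ (k - #S - 1) := by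
  have hcover : {A ∈ F | S ⊆ A} ⊆ {A ∈ F | S ⊆ A ∧ Disjoint A U} ∪
      U.biUnion fun u => {A ∈ univ.powersetCard k | insert u S ⊆ A} := fun A hA => by
    obtain ⟨hAF, hSA⟩ := mem_filter.mp hA
    by_cases hAU : Disjoint A U
    · exact mem_union_left _ (mem_filter.mpr ⟨hAF, hSA, hAU⟩)
    · obtain ⟨u, huA, huU⟩ := not_disjoint_iff.mp hAU
      exact mem_union_right _ (mem_biUnion.mpr ⟨u, huU, mem_filter.mpr
        ⟨mem_powersetCard.mpr ⟨subset_univ A, hF hAF⟩, insert_subset huA hSA⟩⟩)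
  refine (card_le_card hcover).trans ((card_union_le _ _).trans ?_)
  gcongr
  refine card_biUnion_le_card_mul _ _ _ fun u hu => ?_
  have huS : u ∉ S := fun h => disjoint_left.mp hSU h hu
  rw [card_filter_powersetCard_subset _ _ _ (subset_univ _)
    (by rw [card_insert_of_notMem huS]; omega), card_insert_of_notMem huS, card_univ,
    ← Nat.sub_sub k]
  exact (Nat.choose_le_pow _ _).trans (Nat.pow_le_pow_left (Nat.sub_le _ _) _)

lemma subset_map_subtype_notMem_iff {A : Finset V} :
    A ⊆ univ.map (.subtype (· ∉ U)) ↔ Disjoint A U := by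
  simp [subset_iff, disjoint_left]

lemma card_filter_inducedFamily_subtype (S : Finset {v // v ∉ U}) :
    #{B ∈ inducedFamily (.subtype (· ∉ U)) F | S ⊆ B} =
      #{A ∈ F | S.map (.subtype _) ⊆ A ∧ Disjoint A U} := by
  simp_rw [card_filter_inducedFamily, subset_map_subtype_notMem_iff]

lemma exists_matching_card_eq_add (hF : (F : Set (Finset V)).Sized k) (hk : 0 < k)
    {M : Finset (Finset V)} (hMF : M ⊆ F) (hM : (M : Set (Finset V)).PairwiseDisjoint id)
    {M' : Finset (Finset {v // v ∉ M.biUnion id})}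
    (hM'F : M' ⊆ inducedFamily (.subtype (· ∉ M.biUnion id)) F)
    (hM' : (M' : Set (Finset {v // v ∉ M.biUnion id})).PairwiseDisjoint id) :
    ∃ M₁ ⊆ F, (M₁ : Set (Finset V)).PairwiseDisjoint id ∧ #M₁ = #M + #M' := by
  have hcross : ∀ A ∈ M, ∀ B ∈ M'.map (mapEmbedding (.subtype _)).toEmbedding, Disjoint A B := by
    intro A hA B hB
    obtain ⟨B, -, rfl⟩ := mem_map.mp hB
    exact ((disjoint_map_subtype_notMem B).mono_right (subset_biUnion_of_mem id hA)).symm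
  have hdisj : Disjoint M (M'.map (mapEmbedding (.subtype _)).toEmbedding) :=
    disjoint_left.mpr fun A hA hA' => by
      have hempty : A = ∅ := disjoint_self.mp (hcross A hA A hA')
      simpa [hempty, hk.ne] using hF (hMF hA)
  refine ⟨_, union_subset hMF (map_mapEmbedding_subset hM'F), ?_, by
    rw [card_union_of_disjoint hdisj, card_map]⟩
  rw [coe_union, Set.pairwiseDisjoint_union]
  exact ⟨hM, pairwiseDisjoint_map_mapEmbedding _ hM', fun A hA B hB _ => hcross A hA B hB⟩

lemma card_notMem_biUnion_add (hF : (F : Set (Finset V)).Sized k) {M : Finset (Finset V)}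
    (hMF : M ⊆ F) (hM : (M : Set (Finset V)).PairwiseDisjoint id) :
    Fintype.card {v // v ∉ M.biUnion id} + k * #M = Fintype.card V := by
  have hcard : #(M.biUnion id) = k * #M := by
    rw [card_biUnion hM, mul_comm]
    exact sum_const_nat fun A hA => hF (hMF hA)
  rw [← hcard, ← card_compl_add_card (M.biUnion id), Fintype.card_subtype]
  congr 2
  ext
  simp

variable {d t : ℕ} {c c₁ : ℝ}

lemma le_card_filter_disjoint (hF : (F : Set (Finset V)).Sized k) (hd : d < k)
    (hc₁ : ∀ R : Finset V, #R = d →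
      c₁ * Fintype.card V ^ (k - d) ≤ (k - d).factorial * #{A ∈ F | R ⊆ A})
    (hU : (k - d).factorial * #U ≤ (c₁ - c) * Fintype.card V) {S : Finset V} (hS : #S = d)
    (hSU : Disjoint S U) :
    c * Fintype.card V ^ (k - d) ≤ (k - d).factorial * #{A ∈ F | S ⊆ A ∧ Disjoint A U} := by
  subst hS
  have hdeg : (#{A ∈ F | S ⊆ A} : ℝ) ≤
      #{A ∈ F | S ⊆ A ∧ Disjoint A U} + #U * Fintype.card V ^ (k - #S - 1) := by
    exact_mod_cast card_filter_subset_le_add hF hd hSU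
  have hpow : (Fintype.card V : ℝ) ^ (k - #S) =
      Fintype.card V * Fintype.card V ^ (k - #S - 1) := by
    rw [← pow_succ', Nat.sub_add_cancel (by omega)]
  have hlost : (k - #S).factorial * (#U * (Fintype.card V : ℝ) ^ (k - #S - 1)) ≤
      (c₁ - c) * Fintype.card V ^ (k - #S) := by
    rw [hpow, ← mul_assoc, ← mul_assoc]
    gcongr
  have hle := (hc₁ S rfl).trans (mul_le_mul_of_nonneg_left hdeg (Nat.cast_nonneg _))
  linarith

lemma exists_matching_inducedFamily_minDegree (hF : (F : Set (Finset V)).Sized k) (hd : d < k)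
    (hc₁ : ∀ R : Finset V, #R = d →
      c₁ * Fintype.card V ^ (k - d) ≤ (k - d).factorial * #{A ∈ F | R ⊆ A})
    (hc : 0 < c) (ht : (k - d).factorial * (k * t) ≤ (c₁ - c) * Fintype.card V)
    (hcard : k * t + d ≤ Fintype.card V) :
    ∃ M ⊆ F, (M : Set (Finset V)).PairwiseDisjoint id ∧ #M = t ∧
      ∀ S : Finset {v // v ∉ M.biUnion id}, #S = d →
        c * Fintype.card {v // v ∉ M.biUnion id} ^ (k - d) ≤
          (k - d).factorial * #{B ∈ inducedFamily (.subtype (· ∉ M.biUnion id)) F | S ⊆ B} := by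
  have hdeg {U S : Finset V} (hU : #U ≤ k * t) (hS : #S = d) (hSU : Disjoint S U) :=
    le_card_filter_disjoint (U := U) (c := c) hF hd hc₁ (ht.trans' (by gcongr; exact_mod_cast hU))
      hS hSU
  obtain ⟨M, hMF, hM, hMcard⟩ := exists_matching_card_eq hF (by omega) (t := t) fun U hU => by
    have hn : 0 < Fintype.card V := by omega
    obtain ⟨S, hSU, hS⟩ := exists_subset_card_eq (s := Uᶜ) (n := d) (by rw [card_compl]; omega)
    have hpos := (by positivity : 0 < c * (Fintype.card V : ℝ) ^ (k - d)).trans_le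
      (hdeg hU.le hS (disjoint_of_subset_left hSU disjoint_compl_left))
    obtain ⟨A, hA⟩ := card_pos.mp (Nat.cast_pos.mp (pos_of_mul_pos_right hpos (by positivity)))
    exact ⟨A, (mem_filter.mp hA).1, (mem_filter.mp hA).2.2⟩
  have hcover : #(M.biUnion id) ≤ k * t := by
    rw [← hMcard, mul_comm]
    exact card_biUnion_le_card_mul _ _ _ fun A hA => (hF (hMF hA)).le
  refine ⟨M, hMF, hM, hMcard, fun S hS => ?_⟩
  rw [card_filter_inducedFamily_subtype]
  refine le_trans ?_ (hdeg hcover (by rwa [card_map]) (disjoint_map_subtype_notMem S))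
  gcongr
  exact Fintype.card_subtype_le _

lemma exists_matching_of_forall_inducedFamily (hF : (F : Set (Finset V)).Sized k) (hd : d < k)
    (hc₁ : ∀ R : Finset V, #R = d →
      c₁ * Fintype.card V ^ (k - d) ≤ (k - d).factorial * #{A ∈ F | R ⊆ A})
    (hc : 0 < c) (ht : (k - d).factorial * (k * t) ≤ (c₁ - c) * Fintype.card V)
    (hcard : k * t + d ≤ Fintype.card V) {s : ℝ}
    (h : ∀ U : Finset V, Fintype.card {v // v ∉ U} + k * t = Fintype.card V →
      (∀ S : Finset {v // v ∉ U}, #S = d → c * Fintype.card {v // v ∉ U} ^ (k - d) ≤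
        (k - d).factorial * #{B ∈ inducedFamily (.subtype (· ∉ U)) F | S ⊆ B}) →
      ∃ M ⊆ inducedFamily (.subtype (· ∉ U)) F,
        (M : Set (Finset {v // v ∉ U})).PairwiseDisjoint id ∧ s ≤ #M) :
    ∃ M ⊆ F, (M : Set (Finset V)).PairwiseDisjoint id ∧ t + s ≤ #M := by
  obtain ⟨M, hMF, hM, rfl, hrest⟩ :=
    exists_matching_inducedFamily_minDegree hF hd hc₁ hc ht hcard
  obtain ⟨M', hM'F, hM', hs⟩ := h _ (card_notMem_biUnion_add hF hMF hM) hrest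
  obtain ⟨M₁, hM₁F, hM₁, hM₁card⟩ := exists_matching_card_eq_add hF (by omega) hMF hM hM'F hM'
  exact ⟨M₁, hM₁F, hM₁, by rw [hM₁card, Nat.cast_add]; gcongr⟩

end DeleteVertices

lemma exists_pos_forall_le_mul_imp {a b δ : ℝ} (ha : 1 ≤ a) (hb : 0 ≤ b) (hδ : 0 < δ) :
    ∃ β > 0, ∀ n t : ℝ, 0 ≤ n → 0 ≤ t → t ≤ n * β → a * (b * t) ≤ δ * n ∧ b * t ≤ n / 2 := by
  obtain ⟨β, hβ, hβlt⟩ := exists_pos_mul_lt (lt_min hδ one_half_pos) (a * b)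
  obtain ⟨hβδ, hβhalf⟩ := lt_min_iff.mp hβlt
  refine ⟨β, hβ, fun n t hn ht htβ => ?_⟩
  have hle : a * (b * t) ≤ a * b * β * n := by
    rw [← mul_assoc, mul_assoc (a * b), mul_comm β]
    gcongr
  refine ⟨hle.trans (by gcongr), (le_mul_of_one_le_left (by positivity) ha).trans (hle.trans ?_)⟩
  rw [div_eq_inv_mul, ← one_div]
  gcongr

open Filter in
lemma exists_matching_gt_of_eventually_forcesFractionalMatching.{u} {k d : ℕ} (hk : 2 ≤ k)
    (hd : d < k) {x c₀ c₁ : ℝ} (hx₀ : 0 ≤ x) (hx₁ : k * x < 1) (hc₀ : 0 ≤ c₀) (hc₁ : c₀ < c₁)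
    (h : ∀ᶠ m in atTop, ForcesFractionalMatching k d c₀ x m) :
    ∃ N : ℝ, ∀ (V : Type u) [Fintype V] [DecidableEq V] (F : Finset (Finset V)),
      N < Fintype.card V → (F : Set (Finset V)).Sized k →
      (∀ R : Finset V, #R = d →
        c₁ * Fintype.card V ^ (k - d) ≤ (k - d).factorial * #{A ∈ F | R ⊆ A}) →
      ∃ M ⊆ F, (M : Set (Finset V)).PairwiseDisjoint id ∧ x * Fintype.card V < #M := by
  obtain ⟨c, hcc₀, hcc₁⟩ := exists_between hc₁
  have hk₂ : (2 : ℝ) ≤ k := by exact_mod_cast hk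
  have hk₁ : 0 < 1 - k * x := sub_pos.mpr hx₁
  obtain ⟨β, hβ, hβn⟩ := exists_pos_forall_le_mul_imp (a := (k - d).factorial) (b := k)
    (by exact_mod_cast (k - d).factorial_pos) (by positivity) (sub_pos.mpr hcc₁)
  obtain ⟨N, hN⟩ := exists_matching_of_eventually_forcesFractionalMatching.{u} hk hd hx₀
    (by nlinarith) hcc₀ (by positivity : 0 < β / 2 * (1 - k * x)) h
  refine ⟨max (max (2 * N) (2 * d)) (2 / β), fun V _ _ F hcard hF hdeg => ?_⟩
  simp only [max_lt_iff, div_lt_iff₀ hβ] at hcard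
  obtain ⟨⟨hcardN, hcardd⟩, hcardβ⟩ := hcard
  have hn : (0 : ℝ) ≤ Fintype.card V := by positivity
  set t := ⌊Fintype.card V * β⌋₊
  have ht : Fintype.card V * β / 2 < t := by linarith [Nat.lt_floor_add_one (Fintype.card V * β)]
  obtain ⟨hfew, hhalf⟩ := hβn _ t hn (by positivity) (Nat.floor_le (by positivity))
  obtain ⟨M, hMF, hM, hMcard⟩ := exists_matching_of_forall_inducedFamily hF hd hdeg
    (hc₀.trans_lt hcc₀) hfew
    (by exact_mod_cast (by linarith : (k * t + d : ℝ) ≤ Fintype.card V))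
    (s := (x - β / 2 * (1 - k * x)) * (Fintype.card V - k * t)) fun U hU hrest => by
      have hcardU : (Fintype.card {v // v ∉ U} : ℝ) = Fintype.card V - k * t :=
        eq_sub_of_add_eq (by exact_mod_cast hU)
      rw [← hcardU]
      exact hN _ _ (by linarith) (inducedFamily_sized hF) hrest
  refine ⟨M, hMF, hM, lt_of_lt_of_le ?_ hMcard⟩
  have hgain : Fintype.card V * β / 2 * (1 - k * x) < t * (1 - k * x) :=
    mul_lt_mul_of_pos_right ht hk₁
  have hslack : 0 ≤ β / 2 * (1 - k * x) * (k * t) := by positivity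
  linarith

section Parameters

variable {n d k s : ℕ} {F : Finset (Finset ℕ)}

lemma minDeg_le_card_filter {S : Finset ℕ} (hS : S ∈ (range n).powersetCard d) :
    minDeg n d F ≤ #{A ∈ F | S ⊆ A} :=
  Nat.sInf_le ⟨S, hS, rfl⟩

lemma exists_minDeg_eq (hd : d ≤ n) (F : Finset (Finset ℕ)) :
    ∃ S ∈ (range n).powersetCard d, minDeg n d F = #{A ∈ F | S ⊆ A} :=
  Nat.sInf_mem (s := {t | ∃ S ∈ (range n).powersetCard d, t = #{A ∈ F | S ⊆ A}})
    ⟨_, range d, mem_powersetCard.mpr ⟨range_subset_range.mpr hd, card_range d⟩, rfl⟩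

lemma minDeg_le_choose (hd : d ≤ n) (hdk : d ≤ k) (hF : F ⊆ (range n).powersetCard k) :
    minDeg n d F ≤ (n - d).choose (k - d) := calc
  minDeg n d F ≤ #{A ∈ F | range d ⊆ A} := minDeg_le_card_filter <|
    mem_powersetCard.mpr ⟨range_subset_range.mpr hd, card_range d⟩
  _ ≤ #{A ∈ (range n).powersetCard k | range d ⊆ A} := card_le_card (filter_subset_filter _ hF)
  _ = (n - d).choose (k - d) := by
    rw [card_filter_powersetCard_subset _ _ _ (range_subset_range.mpr hd) (by simpa),
      card_range, card_range]

lemma bddAbove_minDeg (n d k : ℕ) (P : Finset (Finset ℕ) → Prop) :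
    BddAbove {t | ∃ F, F ⊆ (range n).powersetCard k ∧ P F ∧ t = minDeg n d F} := by
  refine (((range n).powersetCard k).powerset.image (minDeg n d)).finite_toSet.bddAbove.mono ?_
  rintro _ ⟨F, hF, -, rfl⟩
  exact mem_coe.mpr (mem_image_of_mem _ (mem_powerset.mpr hF))

lemma bddAbove_card_matching (F : Finset (Finset ℕ)) :
    BddAbove {t | ∃ M : Finset (Finset ℕ), M ⊆ F ∧
      (M : Set (Finset ℕ)).Pairwise (fun A B => Disjoint A B) ∧ #M = t} :=
  ⟨#F, by rintro _ ⟨M, hMF, -, rfl⟩; exact card_le_card hMF⟩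

lemma card_le_matchingNumber {M : Finset (Finset ℕ)} (hMF : M ⊆ F)
    (hM : (M : Set (Finset ℕ)).PairwiseDisjoint id) : #M ≤ matchingNumber F :=
  le_csSup (bddAbove_card_matching F) ⟨M, hMF, hM, rfl⟩

lemma exists_card_eq_matchingNumber (F : Finset (Finset ℕ)) :
    ∃ M ⊆ F, (M : Set (Finset ℕ)).PairwiseDisjoint id ∧ #M = matchingNumber F :=
  Nat.sSup_mem (s := {t | ∃ M ⊆ F, (M : Set (Finset ℕ)).PairwiseDisjoint id ∧ #M = t})
    ⟨0, ∅, by simp⟩ (bddAbove_card_matching F)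

lemma matchingNumber_empty : matchingNumber ∅ = 0 := by
  obtain ⟨M, hM, -, hcard⟩ := exists_card_eq_matchingNumber ∅
  rw [← hcard, subset_empty.mp hM, card_empty]

lemma fracMatchingNumber_empty (n : ℕ) : fracMatchingNumber n ∅ = 0 := by
  have hset : {v : ℝ | ∃ w : Finset ℕ → ℝ, (∀ A, 0 ≤ w A ∧ w A ≤ 1) ∧
      (∀ A, A ∉ (∅ : Finset (Finset ℕ)) → w A = 0) ∧
      (∀ i ∈ range n, ∑ A ∈ (∅ : Finset (Finset ℕ)) with i ∈ A, w A ≤ 1) ∧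
      v = ∑ A ∈ (∅ : Finset (Finset ℕ)), w A} = {0} :=
    Set.Subset.antisymm (by rintro _ ⟨w, -, -, -, rfl⟩; simp)
      (Set.singleton_subset_iff.mpr ⟨0, by simp⟩)
  rw [fracMatchingNumber, hset, csSup_singleton]

lemma matchingNumber_le_fracMatchingNumber (n : ℕ) (F : Finset (Finset ℕ)) :
    (matchingNumber F : ℝ) ≤ fracMatchingNumber n F := by
  obtain ⟨M, hMF, hM, hcard⟩ := exists_card_eq_matchingNumber F
  refine le_csSup ⟨#F, ?_⟩ ⟨fun A => if A ∈ M then 1 else 0, fun A => ?_, fun A hA => ?_,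
    fun i _ => ?_, ?_⟩
  · rintro _ ⟨w, hw, -, -, rfl⟩
    simpa using sum_le_card_nsmul F w 1 fun A _ => (hw A).2
  · by_cases hA : A ∈ M <;> simp [hA]
  · exact if_neg fun h => hA (hMF h)
  · rw [sum_boole, ← Nat.cast_one, Nat.cast_le, card_le_one]
    simp only [mem_filter]
    rintro A ⟨⟨-, hiA⟩, hA⟩ B ⟨⟨-, hiB⟩, hB⟩
    exact hM.elim_finset hA hB i hiA hiB
  · rw [sum_boole, filter_mem_eq_inter, inter_eq_right.mpr hMF, hcard]

lemma minDeg_le_mStarDeg (hF : F ⊆ (range n).powersetCard k)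
    (hs : fracMatchingNumber n F < s + 1) : minDeg n d F ≤ mStarDeg n k d s :=
  le_csSup (bddAbove_minDeg n d k _) ⟨F, hF, hs, rfl⟩

lemma exists_mDeg_eq (n k d s : ℕ) :
    ∃ F ⊆ (range n).powersetCard k, matchingNumber F ≤ s ∧ mDeg n k d s = minDeg n d F := by
  simp_rw [← Nat.lt_add_one_iff]
  have hne : {t | ∃ F, F ⊆ (range n).powersetCard k ∧ matchingNumber F < s + 1 ∧
      t = minDeg n d F}.Nonempty :=
    ⟨_, ∅, empty_subset _, by simp [matchingNumber_empty], rfl⟩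
  exact Nat.sSup_mem hne (bddAbove_minDeg n d k _)

lemma mDeg_le_choose (hd : d ≤ n) (hdk : d ≤ k) : mDeg n k d s ≤ (n - d).choose (k - d) := by
  obtain ⟨F, hF, -, h⟩ := exists_mDeg_eq n k d s
  exact h.trans_le (minDeg_le_choose hd hdk hF)

lemma mStarDeg_le_mDeg (n k d s : ℕ) : mStarDeg n k d s ≤ mDeg n k d s := by
  refine csSup_le_csSup (bddAbove_minDeg n d k _)
    ⟨_, ∅, empty_subset _, by rw [fracMatchingNumber_empty]; positivity, rfl⟩ ?_
  rintro _ ⟨F, hF, hν, rfl⟩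
  exact ⟨F, hF, by exact_mod_cast (matchingNumber_le_fracMatchingNumber n F).trans_lt hν, rfl⟩

end Parameters

section FinTransfer

variable {n d k : ℕ} {F : Finset (Finset ℕ)} {r c x : ℝ}

lemma map_valEmbedding_subset_range (S : Finset (Fin n)) : S.map Fin.valEmbedding ⊆ range n :=
  fun _ hi => by obtain ⟨j, -, rfl⟩ := mem_map.mp hi; exact mem_range.mpr j.2

lemma exists_map_valEmbedding_eq {S : Finset ℕ} (hS : S ⊆ range n) :
    ∃ T : Finset (Fin n), T.map Fin.valEmbedding = S :=
  ⟨S.attachFin fun _ hi => mem_range.mp (hS hi), map_valEmbedding_attachFin _⟩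

lemma card_filter_inducedFamily_valEmbedding (hF : ∀ A ∈ F, A ⊆ range n) (S : Finset (Fin n)) :
    #{B ∈ inducedFamily Fin.valEmbedding F | S ⊆ B} = #{A ∈ F | S.map Fin.valEmbedding ⊆ A} := by
  rw [card_filter_inducedFamily]
  congr 1
  refine filter_congr fun A hA => and_iff_left ?_
  rw [Fin.map_valEmbedding_univ, Nat.Iio_eq_range]
  exact hF A hA

lemma minDeg_le_card_filter_inducedFamily (hF : ∀ A ∈ F, A ⊆ range n) {S : Finset (Fin n)}
    (hS : #S = d) : minDeg n d F ≤ #{B ∈ inducedFamily Fin.valEmbedding F | S ⊆ B} := by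
  rw [card_filter_inducedFamily_valEmbedding hF]
  exact minDeg_le_card_filter <|
    mem_powersetCard.mpr ⟨map_valEmbedding_subset_range S, by rwa [card_map]⟩

lemma exists_minDeg_eq_card_filter_inducedFamily (hd : d ≤ n) (hF : ∀ A ∈ F, A ⊆ range n) :
    ∃ S : Finset (Fin n), #S = d ∧
      minDeg n d F = #{B ∈ inducedFamily Fin.valEmbedding F | S ⊆ B} := by
  obtain ⟨S, hS, hdeg⟩ := exists_minDeg_eq hd F
  obtain ⟨hSn, hScard⟩ := mem_powersetCard.mp hS
  obtain ⟨T, rfl⟩ := exists_map_valEmbedding_eq hSn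
  exact ⟨T, by rwa [card_map] at hScard, by rwa [card_filter_inducedFamily_valEmbedding hF]⟩

lemma sum_map_valEmbedding {f : Finset ℕ → ℝ} (hF : ∀ A ∈ F, A ⊆ range n)
    (hf : ∀ A ∉ F, f A = 0) : ∑ T : Finset (Fin n), f (T.map Fin.valEmbedding) = ∑ A ∈ F, f A := by
  have hmap := sum_map univ (mapEmbedding (Fin.valEmbedding (n := n))).toEmbedding f
  simp only [RelEmbedding.coe_toEmbedding, mapEmbedding_apply] at hmap
  rw [← hmap]
  refine (sum_subset (fun A hA => ?_) fun A _ hA => hf A hA).symm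
  obtain ⟨T, rfl⟩ := exists_map_valEmbedding_eq (hF A hA)
  exact mem_map_of_mem _ (mem_univ T)

lemma exists_isFractionalMatching_of_lt_fracMatchingNumber (hF : ∀ A ∈ F, A ⊆ range n)
    (hr : r < fracMatchingNumber n F) :
    ∃ w : Finset (Fin n) → ℝ, IsFractionalMatching id w ∧
      (∀ T ∉ inducedFamily Fin.valEmbedding F, w T = 0) ∧ r < ∑ T, w T := by
  obtain ⟨_, ⟨w, hw, hwF, hdeg, rfl⟩, hrw⟩ := exists_lt_of_lt_csSup (by exact ⟨0, 0, by simp⟩) hr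
  refine ⟨fun T => w (T.map Fin.valEmbedding), ⟨fun T => (hw _).1, fun i => ?_⟩,
    fun T hT => hwF _ fun h => hT (mem_inducedFamily.mpr h),
    hrw.trans_eq (sum_map_valEmbedding hF hwF).symm⟩
  calc ∑ T, w (T.map Fin.valEmbedding) * ind T i
      = ∑ T : Finset (Fin n), w (T.map Fin.valEmbedding) *
          ind (T.map Fin.valEmbedding) (Fin.valEmbedding i) := by simp only [ind, mem_map']
    _ = ∑ A ∈ F, w A * ind A i :=
      sum_map_valEmbedding (f := fun A => w A * ind A i) hF fun A hA => by simp [hwF A hA]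
    _ = ∑ A ∈ F with ↑i ∈ A, w A := by simp [ind, sum_filter]
    _ ≤ 1 := hdeg i (mem_range.mpr i.2)

lemma forcesFractionalMatching_of_mStarDeg_lt (hd : d ≤ n)
    (h : mStarDeg n k d ⌊x * n⌋₊ < c * (n - d).choose (k - d)) :
    ForcesFractionalMatching k d c x n := fun F hF hdeg => by
  obtain ⟨G, hG, rfl⟩ : ∃ G ⊆ (range n).powersetCard k, inducedFamily Fin.valEmbedding G = F := by
    refine ⟨F.map (mapEmbedding Fin.valEmbedding).toEmbedding, fun A hA => ?_, ?_⟩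
    · obtain ⟨T, hT, rfl⟩ := mem_map.mp hA
      exact mem_powersetCard.mpr ⟨map_valEmbedding_subset_range T, (card_map _).trans (hF hT)⟩
    · ext T
      exact mem_inducedFamily.trans (mem_map' (mapEmbedding Fin.valEmbedding).toEmbedding)
  have hGn : ∀ A ∈ G, A ⊆ range n := fun A hA => (mem_powersetCard.mp (hG hA)).1
  obtain ⟨S, hS, hmin⟩ := exists_minDeg_eq_card_filter_inducedFamily hd hGn
  have hν : (⌊x * n⌋₊ : ℝ) + 1 ≤ fracMatchingNumber n G := by
    by_contra! hν
    have hle : (minDeg n d G : ℝ) ≤ mStarDeg n k d ⌊x * n⌋₊ :=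
      Nat.cast_le.mpr (minDeg_le_mStarDeg hG hν)
    rw [hmin] at hle
    exact (h.trans_le ((hdeg S hS).trans hle)).false
  obtain ⟨w, hw, hwF, hsum⟩ := exists_isFractionalMatching_of_lt_fracMatchingNumber hGn
    ((Nat.lt_floor_add_one _).trans_le hν)
  exact ⟨w, hw, hwF, hsum.le⟩

end FinTransfer

section Asymptotics

open Filter Asymptotics

lemma tendsto_factorial_mul_choose_sub_div_pow (d r : ℕ) :
    Tendsto (fun n : ℕ => (r.factorial * (n - d).choose r : ℝ) / n ^ r) atTop (nhds 1) := by
  have hcast : (fun n : ℕ => ((n - d : ℕ) : ℝ)) ~[atTop] fun n => (n : ℝ) := by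
    refine IsEquivalent.congr_left ?_ <|
      (eventually_ge_atTop d).mono fun n hn => (Nat.cast_sub hn).symm
    refine IsEquivalent.sub_isLittleO .refl ?_
    exact isLittleO_const_left.mpr <| .inr <|
      tendsto_norm_atTop_atTop.comp tendsto_natCast_atTop_atTop
  have hchoose := ((isEquivalent_choose r).comp_tendsto (tendsto_sub_atTop_nat d)).trans
    ((hcast.pow r).div (.refl (u := fun _ => (r.factorial : ℝ))))
  have hne : ∀ᶠ n : ℕ in atTop, (n ^ r / r.factorial : ℝ) ≠ 0 := by
    filter_upwards [eventually_gt_atTop 0] with n hn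
    positivity
  refine ((isEquivalent_iff_tendsto_one hne).mp hchoose).congr fun n => ?_
  simp [mul_comm, div_div_eq_mul_div]

lemma eventually_mul_pow_le_mul_choose_sub (d r : ℕ) {c c₁ : ℝ} (hc₁ : 0 < c₁) (hc : c < c₁) :
    ∀ᶠ n : ℕ in atTop, c * n ^ r ≤ r.factorial * (c₁ * (n - d).choose r) := by
  have hlim := (tendsto_factorial_mul_choose_sub_div_pow d r).eventually
    (lt_mem_nhds ((div_lt_one hc₁).mpr hc))
  filter_upwards [hlim, eventually_gt_atTop 0] with n hn hn₀
  rw [div_lt_div_iff₀ hc₁ (by positivity)] at hn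
  linarith

lemma eventually_mDeg_lt_of_eventually_mStarDeg_lt {k d : ℕ} (hk : 2 ≤ k) (hd : d < k)
    {x c₀ c₁ : ℝ} (hx₀ : 0 ≤ x) (hx₁ : k * x < 1) (hc₀ : 0 ≤ c₀) (hc₁ : c₀ < c₁)
    (h : ∀ᶠ n : ℕ in atTop, mStarDeg n k d ⌊x * n⌋₊ < c₀ * (n - d).choose (k - d)) :
    ∀ᶠ n : ℕ in atTop, mDeg n k d ⌊x * n⌋₊ < c₁ * (n - d).choose (k - d) := by
  obtain ⟨c, hcc₀, hcc₁⟩ := exists_between hc₁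
  obtain ⟨N, hN⟩ := exists_matching_gt_of_eventually_forcesFractionalMatching.{0} hk hd hx₀ hx₁
    hc₀ hcc₀ (by
      filter_upwards [h, eventually_ge_atTop d] with n hn hdn
      exact forcesFractionalMatching_of_mStarDeg_lt hdn hn)
  filter_upwards [eventually_mul_pow_le_mul_choose_sub d (k - d) (hc₀.trans_lt hc₁) hcc₁,
    tendsto_natCast_atTop_atTop.eventually_gt_atTop N] with n hchoose hnN
  by_contra! hle
  obtain ⟨F, hF, hν, hmDeg⟩ := exists_mDeg_eq n k d ⌊x * n⌋₊
  rw [hmDeg] at hle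
  have hFn : ∀ A ∈ F, A ⊆ range n := fun A hA => (mem_powersetCard.mp (hF hA)).1
  obtain ⟨M, hMF, hM, hcard⟩ := hN (Fin n) (inducedFamily Fin.valEmbedding F) (by simpa)
    (inducedFamily_sized fun A hA => (mem_powersetCard.mp (hF hA)).2) fun S hS => by
      rw [Fintype.card_fin]
      refine hchoose.trans ?_
      gcongr
      exact hle.trans (Nat.cast_le.mpr (minDeg_le_card_filter_inducedFamily hFn hS))
  have hMν : #M ≤ ⌊x * n⌋₊ := by
    rw [← card_map (mapEmbedding Fin.valEmbedding).toEmbedding]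
    exact (card_le_matchingNumber (map_mapEmbedding_subset hMF)
      (pairwiseDisjoint_map_mapEmbedding _ hM)).trans hν
  rw [Fintype.card_fin] at hcard
  exact (hcard.trans_le ((Nat.cast_le.mpr hMν).trans (Nat.floor_le (by positivity)))).false

end Asymptotics

section Limsup

open Filter

lemma limsup_eq_limsup_of_eventually_lt {ι : Type*} {l : Filter ι} [l.NeBot] {u v : ι → ℝ}
    (hu : ∀ᶠ i in l, 0 ≤ u i) (huv : ∀ᶠ i in l, u i ≤ v i) (hv : l.IsBoundedUnder (· ≤ ·) v)
    (h : ∀ c₀ c₁ : ℝ, 0 ≤ c₀ → c₀ < c₁ → (∀ᶠ i in l, u i < c₀) → ∀ᶠ i in l, v i < c₁) :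
    limsup u l = limsup v l := by
  have hu_bdd : l.IsBoundedUnder (· ≤ ·) u := hv.mono_le huv
  have hu_cobdd : l.IsCoboundedUnder (· ≤ ·) u :=
    (isBoundedUnder_of_eventually_ge hu).isCoboundedUnder_le
  have hv_cobdd : l.IsCoboundedUnder (· ≤ ·) v :=
    (isBoundedUnder_of_eventually_ge (hu.mp (huv.mono fun _ h h₀ => h₀.trans h)))
      |>.isCoboundedUnder_le
  refine (limsup_le_limsup huv hu_cobdd hv).antisymm <|
    le_of_forall_gt_imp_ge_of_dense fun c₁ hc₁ => ?_
  obtain ⟨c₀, hc₀, hc₀₁⟩ := exists_between hc₁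
  have hlt : ∀ᶠ i in l, u i < c₀ := eventually_lt_of_limsup_lt hc₀ hu_bdd
  obtain ⟨i, hui, hi⟩ := (hu.and hlt).exists
  exact limsup_le_of_le hv_cobdd ((h c₀ c₁ (hui.trans hi.le) hc₀₁ hlt).mono fun _ => le_of_lt)

end Limsup

theorem fractional_equals_integral_dirac (k d : ℕ) (hk : 2 ≤ k) (hd : d ≤ k - 1)
    (x : ℝ) (hx0 : 0 < x) (hx1 : x < 1 / (k : ℝ)) :
    Filter.limsup
        (fun n : ℕ => (mStarDeg n k d ⌊x * n⌋₊ : ℝ) / ((n - d).choose (k - d) : ℝ))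
        Filter.atTop =
      Filter.limsup
        (fun n : ℕ => (mDeg n k d ⌊x * n⌋₊ : ℝ) / ((n - d).choose (k - d) : ℝ))
        Filter.atTop := by
  have hdk : d < k := by omega
  have hkx : k * x < 1 := by rwa [lt_div_iff₀' (by positivity)] at hx1
  have hchoose_pos : ∀ᶠ n : ℕ in Filter.atTop, (0 : ℝ) < (n - d).choose (k - d) := by
    filter_upwards [Filter.eventually_ge_atTop k] with n hn
    exact_mod_cast Nat.choose_pos (by omega)
  refine limsup_eq_limsup_of_eventually_lt (.of_forall fun n => by positivity)
    (.of_forall fun n => by gcongr; exact mStarDeg_le_mDeg n k d _)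
    (Filter.isBoundedUnder_of_eventually_le (a := 1) ?_) fun c₀ c₁ hc₀ hc₁ hstar => ?_
  · filter_upwards [Filter.eventually_ge_atTop d] with n hn
    exact div_le_one_of_le₀ (Nat.cast_le.mpr (mDeg_le_choose hn hdk.le)) (by positivity)
  · have hlt := eventually_mDeg_lt_of_eventually_mStarDeg_lt hk hdk hx0.le hkx hc₀ hc₁ <| by
      filter_upwards [hstar, hchoose_pos] with n hn hpos
      exact (div_lt_iff₀ hpos).mp hn
    filter_upwards [hlt, hchoose_pos] with n hn hpos
    exact (div_lt_iff₀ hpos).mpr hn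
end

section
/- Suppose m, l, t are positive integers with m ≥ tl. Let G be a family of l-element subsets of [m] and α := |G|/C(m,l). Let B = (B_1,…,B_t) be a uniformly random ordered tuple of t pairwise disjoint l-element subsets of [m], and let η := |{i ∈ [t] : B_i ∈ G}|. Then E[η] = αt and, for any real β > 0, Pr[|η − αt| ≥ βt] ≤ 2α(1−α)/(β²t). -/
open Finset

/-- The set of ordered tuples of `t` pairwise disjoint `l`-element subsets of
`{0,…,m-1}` (ordered `t`-matchings of `l`-sets). -/
noncomputable def tupleSpace (m l t : ℕ) : Finset (Fin t → Finset ℕ) :=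
  (Fintype.piFinset fun _ : Fin t => (Finset.range m).powersetCard l).filter
    fun B => ∀ i j : Fin t, i ≠ j → Disjoint (B i) (B j)

/-- `hits G B` is the number of indices `i` with `B i ∈ G`. -/
noncomputable def hits (G : Finset (Finset ℕ)) {t : ℕ} (B : Fin t → Finset ℕ) : ℕ :=
  (Finset.univ.filter fun i : Fin t => B i ∈ G).card

/-!
The permutations of `{0,…,m-1}` act on the tuples, so every `B i` is uniformly distributed, and
every `(B i, B j)` with `i ≠ j` is a uniformly random pair of disjoint `l`-sets. Chebyshev's
inequality thus reduces the tail bound to an upper bound for the covariance of a function `g` of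
mean zero along the edges of the Kneser graph. If a permutation `σ` takes `S` to `S'` and fixes
everything outside `S ∪ S'`, then `T ↦ σ • T` couples the neighbours of `S` with those of `S'`. This
shows that the adjacency operator multiplies Lipschitz constants with respect to the distance
`#(S \ S')` by at most `κ = (m - l - 1).choose (l - 1)`, so that its eigenvalues with nonconstant
eigenvectors are at most `κ`. Since `(t - 1) * κ` is at most the degree `(m - l).choose l` of the
graph, the `t * (t - 1)` covariances together contribute no more than the `t` variances.
-/

open scoped BigOperators Pointwise RealInnerProductSpace

theorem inner_map_self_le_of_eigenvalue_le {E : Type*} [NormedAddCommGroup E]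
    [InnerProductSpace ℝ E] [FiniteDimensional ℝ E] {T : E →ₗ[ℝ] E} (hT : T.IsSymmetric)
    {κ : ℝ} {g : E}
    (h : ∀ μ x, Module.End.HasEigenvector T μ x → ⟪x, g⟫ ≠ 0 → μ ≤ κ) :
    ⟪g, T g⟫ ≤ κ * ‖g‖ ^ 2 := by
  let b := hT.eigenvectorBasis rfl
  let μ := hT.eigenvalues rfl
  calc ⟪g, T g⟫ = ∑ i, μ i * ⟪b i, g⟫ ^ 2 := by
        rw [← b.sum_inner_mul_inner]
        refine sum_congr rfl fun i _ ↦ ?_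
        rw [← hT, hT.apply_eigenvectorBasis, real_inner_smul_left, real_inner_comm]
        simp only [b, μ, RCLike.ofReal_real_eq_id, id]
        ring
    _ ≤ ∑ i, κ * ⟪b i, g⟫ ^ 2 := by
        refine sum_le_sum fun i _ ↦ ?_
        rcases eq_or_ne ⟪b i, g⟫ 0 with h0 | h0
        · simp [h0]
        · gcongr
          exact h _ _ (hT.hasEigenvector_eigenvectorBasis rfl i) h0
    _ = κ * ‖g‖ ^ 2 := by
        rw [← mul_sum, ← b.sum_sq_norm_inner_right]
        simp only [Real.norm_eq_abs, sq_abs]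

section Lipschitz

variable {V : Type*} [Fintype V] {A : Matrix V V ℝ} {d : V → V → ℝ} {κ : ℝ}

lemma eigenvalue_le_of_lipschitz_contraction (hd : ∀ a b, 0 ≤ d a b)
    (hd₀ : ∀ a b, d a b = 0 → a = b)
    (hA : ∀ f L, (∀ a b, |f a - f b| ≤ L * d a b) →
      ∀ a b, |(A.mulVec f) a - (A.mulVec f) b| ≤ κ * L * d a b)
    {f : V → ℝ} {μ : ℝ} (hμ : A.mulVec f = μ • f) {a b : V} (hab : f a ≠ f b) : μ ≤ κ := by
  classical
  have hd_pos {x y : V} (h : x ≠ y) : 0 < d x y := (hd x y).lt_of_ne' (mt (hd₀ x y) h)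
  obtain ⟨⟨x, y⟩, hxy, hmax⟩ := exists_max_image (univ : Finset V).offDiag
    (fun p ↦ |f p.1 - f p.2| / d p.1 p.2) ⟨(a, b), by simpa using ne_of_apply_ne f hab⟩
  replace hxy : x ≠ y := by simpa using hxy
  set L := |f x - f y| / d x y
  have hmax' {u v : V} (huv : u ≠ v) : |f u - f v| / d u v ≤ L := hmax (u, v) (by simpa using huv)
  have hL : 0 < L :=
    (div_pos (abs_pos.2 (sub_ne_zero.2 hab)) (hd_pos (ne_of_apply_ne f hab))).trans_le
      (hmax' (ne_of_apply_ne f hab))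
  have hLip : ∀ u v, |f u - f v| ≤ L * d u v := by
    intro u v
    rcases eq_or_ne u v with rfl | huv
    · simpa using mul_nonneg hL.le (hd u u)
    · exact (div_le_iff₀ (hd_pos huv)).1 (hmax' huv)
  have hcontract : |μ| * (L * d x y) ≤ κ * (L * d x y) := by
    calc |μ| * (L * d x y) = |(A.mulVec f) x - (A.mulVec f) y| := by
          rw [div_mul_cancel₀ _ (hd_pos hxy).ne', ← abs_mul, hμ, mul_sub]; rfl
      _ ≤ κ * (L * d x y) := (hA f L hLip x y).trans_eq (mul_assoc ..)
  exact (le_abs_self μ).trans (le_of_mul_le_mul_right hcontract (mul_pos hL (hd_pos hxy)))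

theorem dotProduct_mulVec_le_of_lipschitz_contraction (hAs : A.IsSymm)
    (hd : ∀ a b, 0 ≤ d a b) (hd₀ : ∀ a b, d a b = 0 → a = b)
    (hA : ∀ f L, (∀ a b, |f a - f b| ≤ L * d a b) →
      ∀ a b, |(A.mulVec f) a - (A.mulVec f) b| ≤ κ * L * d a b)
    {g : V → ℝ} (hg : ∑ a, g a = 0) : g ⬝ᵥ A.mulVec g ≤ κ * g ⬝ᵥ g := by
  classical
  have hT : A.toEuclideanLin.IsSymmetric :=
    Matrix.isSymmetric_toEuclideanLin_iff.2 (Matrix.isHermitian_iff_isSymm.2 hAs)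
  have hquad := inner_map_self_le_of_eigenvalue_le hT (κ := κ) (g := WithLp.toLp 2 g) ?_
  · rw [← real_inner_self_eq_norm_sq, Matrix.toLpLin_toLp, Matrix.toLin'_apply,
      EuclideanSpace.inner_toLp_toLp, EuclideanSpace.inner_toLp_toLp] at hquad
    simpa [dotProduct_comm] using hquad
  intro μ x hx hxg
  obtain ⟨a, b, hab⟩ : ∃ a b, x a ≠ x b := by
    by_contra! hconst
    refine hxg ?_
    rcases isEmpty_or_nonempty V with _ | ⟨⟨a⟩⟩
    · simp [EuclideanSpace.inner_eq_star_dotProduct]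
    · simp [PiLp.inner_apply, hconst _ a, ← sum_mul, hg]
  refine eigenvalue_le_of_lipschitz_contraction hd hd₀ hA (f := x) ?_ hab
  simpa using congrArg WithLp.ofLp hx.apply_eq_smul

end Lipschitz

section Expect

theorem expect_comp_eq_expect_of_transitive {G ι κ K : Type*} [Group G] [MulAction G ι]
    [MulAction G κ] [Semifield K] [CharZero K] {s : Finset ι} {J : Finset κ}
    (hs : s.Nonempty) (hsG : ∀ g : G, ∀ i ∈ s, g • i ∈ s) (φ : ι →[G] κ)
    (hφ : ∀ i ∈ s, φ i ∈ J) (hJ : ∀ a ∈ J, ∀ b ∈ J, ∃ g : G, g • a = b) (f : κ → K) :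
    𝔼 i ∈ s, f (φ i) = 𝔼 a ∈ J, f a := by
  classical
  obtain ⟨i₀, hi₀⟩ := hs
  set c := #{i ∈ s | φ i = φ i₀}
  have hc : (c : K) ≠ 0 := Nat.cast_ne_zero.2 (card_ne_zero.2 ⟨i₀, by simp [hi₀]⟩)
  have hfiber : ∀ a ∈ J, #{i ∈ s | φ i = a} = c := by
    intro a ha
    obtain ⟨g, hg⟩ := hJ a ha _ (hφ i₀ hi₀)
    refine card_equiv (MulAction.toPerm g) fun i ↦ ?_
    have hmem : g • i ∈ s ↔ i ∈ s :=
      ⟨fun h ↦ by simpa using hsG g⁻¹ _ h, hsG g i⟩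
    simp [hmem, map_smul, ← hg]
  have hcard : #s = c * #J := by
    rw [card_eq_sum_card_fiberwise hφ, sum_congr rfl hfiber, sum_const, smul_eq_mul, mul_comm]
  have hsum : ∑ i ∈ s, f (φ i) = c * ∑ a ∈ J, f a := by
    rw [← sum_fiberwise_of_maps_to' hφ, mul_sum]
    refine sum_congr rfl fun a ha ↦ ?_
    rw [sum_const, hfiber a ha, nsmul_eq_mul]
  rw [expect_eq_sum_div_card, expect_eq_sum_div_card, hsum, hcard, Nat.cast_mul,
    mul_div_mul_left _ _ hc]

theorem card_filter_le_abs_div_card_le {ι K : Type*} [Field K] [LinearOrder K]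
    [IsStrictOrderedRing K] (s : Finset ι) (f : ι → K) {a : K} (ha : 0 < a) :
    (#{i ∈ s | a ≤ |f i|} : K) / #s ≤ (𝔼 i ∈ s, f i ^ 2) / a ^ 2 := by
  rw [le_div_iff₀ (by positivity), expect_eq_sum_div_card, div_mul_eq_mul_div]
  gcongr
  calc (#{i ∈ s | a ≤ |f i|} : K) * a ^ 2 = ∑ i ∈ s with a ≤ |f i|, a ^ 2 := by
        rw [sum_const, nsmul_eq_mul]
    _ ≤ ∑ i ∈ s with a ≤ |f i|, f i ^ 2 := by
        refine sum_le_sum fun i hi ↦ ?_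
        rw [← sq_abs (f i)]
        have := (mem_filter.1 hi).2
        gcongr
    _ ≤ ∑ i ∈ s, f i ^ 2 :=
        sum_le_sum_of_subset_of_nonneg (filter_subset _ _) fun _ _ _ ↦ sq_nonneg _

end Expect

section Perm

variable {α : Type*} [DecidableEq α]

lemma exists_perm_smul_eq {S T : Finset α} (h : #S = #T) :
    ∃ σ : Equiv.Perm α, σ • S = T ∧ ∀ x, x ∉ S → x ∉ T → σ x = x := by
  let e := equivOfCardEq h
  obtain ⟨τ, hτ⟩ := Equiv.Perm.exists_extending_pair
    (fun x : S ↦ (⟨x, mem_union_left T x.2⟩ : {x // x ∈ S ∪ T}))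
    (fun x : S ↦ ⟨e x, mem_union_right S (e x).2⟩)
    (fun x y hxy ↦ Subtype.ext (Subtype.mk.inj hxy))
    (fun x y hxy ↦ e.injective (Subtype.ext (Subtype.mk.inj hxy)))
  refine ⟨Equiv.Perm.ofSubtype τ, eq_of_subset_of_card_le ?_ ?_, fun x hxS hxT ↦ ?_⟩
  · intro y hy
    obtain ⟨x, hx, rfl⟩ := mem_smul_finset.1 hy
    rw [Equiv.Perm.smul_def, Equiv.Perm.ofSubtype_apply_of_mem τ (mem_union_left T hx),
      hτ ⟨x, hx⟩]
    exact (e ⟨x, hx⟩).2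
  · rw [card_smul_finset, h]
  · exact Equiv.Perm.ofSubtype_apply_of_not_mem τ (by simp [hxS, hxT])

lemma exists_stabilizer_smul_eq {U S T : Finset α} (hS : S ⊆ U) (hT : T ⊆ U) (h : #S = #T) :
    ∃ σ : MulAction.stabilizer (Equiv.Perm α) U,
      σ • S = T ∧ ∀ x, x ∉ S → x ∉ T → σ • x = x := by
  obtain ⟨σ, hσ, hfix⟩ := exists_perm_smul_eq h
  refine ⟨⟨σ, eq_of_subset_of_card_le (fun y hy ↦ ?_) (card_smul_finset σ U).ge⟩, hσ, hfix⟩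
  obtain ⟨x, hx, rfl⟩ := mem_smul_finset.1 hy
  by_contra hy
  have : σ (σ x) = σ x := hfix _ (fun h ↦ hy (hS h)) (fun h ↦ hy (hT h))
  exact hy (by simpa [σ.injective this] using hx)

section Action

variable {G : Type*} [Group G] [MulAction G α] {g : G} {S T : Finset α}

lemma disjoint_smul_finset_iff : Disjoint (g • S) (g • T) ↔ Disjoint S T := by
  rw [← disjoint_coe, coe_smul_finset, coe_smul_finset, Set.disjoint_smul_set, disjoint_coe]

lemma smul_finset_eq_self (h : ∀ x ∈ S, g • x = x) : g • S = S := by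
  rw [smul_finset_def, image_congr h, image_id']

lemma sdiff_smul_eq_inter (hfix : ∀ x, x ∉ S → x ∉ g • S → g • x = x) (hST : Disjoint S T) :
    T \ g • T = (g • S \ S) ∩ T := by
  ext x
  simp only [mem_sdiff, mem_inter]
  constructor
  · rintro ⟨hxT, hx⟩
    have hxS := disjoint_right.1 hST hxT
    refine ⟨⟨?_, hxS⟩, hxT⟩
    by_contra hxgS
    exact hx (mem_smul_finset.2 ⟨x, hxT, hfix x hxS hxgS⟩)
  · rintro ⟨⟨hxgS, -⟩, hxT⟩
    exact ⟨hxT, disjoint_left.1 (disjoint_smul_finset_iff.2 hST) hxgS⟩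

end Action

end Perm

section Kneser

variable {α : Type*} [DecidableEq α] {U : Finset α} {l : ℕ}

lemma smul_mem_powersetCard {G : Type*} [Group G] [MulAction G α]
    (σ : MulAction.stabilizer G U) {S : Finset α} (hS : S ∈ U.powersetCard l) :
    σ • S ∈ U.powersetCard l := by
  rw [mem_powersetCard] at hS ⊢
  exact ⟨(smul_finset_subset_smul_finset hS.1).trans_eq σ.2, (card_smul_finset σ S).trans hS.2⟩

lemma filter_disjoint_powersetCard (U S : Finset α) (l : ℕ) :
    {T ∈ U.powersetCard l | Disjoint S T} = (U \ S).powersetCard l := by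
  ext T
  simp only [mem_filter, mem_powersetCard, subset_sdiff, disjoint_comm (a := S)]
  tauto

lemma sum_card_inter_powersetCard {X W : Finset α} (hX : X ⊆ W) (hl : 0 < l) :
    ∑ T ∈ W.powersetCard l, #(X ∩ T) = #X * (#W - 1).choose (l - 1) := by
  refine sum_card_inter fun x hx ↦ ?_
  simpa using card_filter_powersetCard_subset {x} W l (by simpa using hX hx) (by simpa)

lemma sum_disjoint_smul {G M : Type*} [Group G] [MulAction G α] [AddCommMonoid M]
    (σ : MulAction.stabilizer G U) (f : Finset α → M) (S : Finset α) :
    ∑ T ∈ U.powersetCard l with Disjoint (σ • S) T, f T =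
      ∑ T ∈ U.powersetCard l with Disjoint S T, f (σ • T) := by
  refine (sum_equiv (MulAction.toPerm σ) (fun T ↦ ?_) fun _ _ ↦ rfl).symm
  have hmem : σ • T ∈ U.powersetCard l ↔ T ∈ U.powersetCard l :=
    ⟨fun h ↦ by simpa using smul_mem_powersetCard σ⁻¹ h, smul_mem_powersetCard σ⟩
  simp only [mem_filter, MulAction.toPerm_apply, hmem, disjoint_smul_finset_iff]

lemma abs_sum_disjoint_sub_le (hl : 0 < l) {f : Finset α → ℝ} {L : ℝ}
    (hf : ∀ S ∈ U.powersetCard l, ∀ T ∈ U.powersetCard l, |f S - f T| ≤ L * #(S \ T))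
    {S S' : Finset α} (hS : S ∈ U.powersetCard l) (hS' : S' ∈ U.powersetCard l) :
    |∑ T ∈ U.powersetCard l with Disjoint S T, f T -
        ∑ T ∈ U.powersetCard l with Disjoint S' T, f T| ≤
      (#U - l - 1).choose (l - 1) * L * #(S \ S') := by
  rw [mem_powersetCard] at hS hS'
  obtain ⟨σ, rfl, hfix⟩ := exists_stabilizer_smul_eq hS.1 hS'.1 (hS.2.trans hS'.2.symm)
  have hcount : ∑ T ∈ U.powersetCard l with Disjoint S T, #(T \ σ • T) =
      #(S \ σ • S) * (#U - l - 1).choose (l - 1) := by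
    rw [sum_congr rfl fun T hT ↦ by rw [sdiff_smul_eq_inter hfix (mem_filter.1 hT).2],
      filter_disjoint_powersetCard,
      sum_card_inter_powersetCard (sdiff_subset_sdiff hS'.1 le_rfl) hl,
      card_sdiff_of_subset hS.1, hS.2, card_sdiff_comm (card_smul_finset σ S)]
  calc |∑ T ∈ U.powersetCard l with Disjoint S T, f T -
        ∑ T ∈ U.powersetCard l with Disjoint (σ • S) T, f T|
      = |∑ T ∈ U.powersetCard l with Disjoint S T, (f T - f (σ • T))| := by
        rw [sum_disjoint_smul, sum_sub_distrib]
    _ ≤ ∑ T ∈ U.powersetCard l with Disjoint S T, L * #(T \ σ • T) := by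
        refine (abs_sum_le_sum_abs _ _).trans (sum_le_sum fun T hT ↦ ?_)
        have hT := (mem_filter.1 hT).1
        exact hf T hT _ (smul_mem_powersetCard σ hT)
    _ = (#U - l - 1).choose (l - 1) * L * #(S \ σ • S) := by
        rw [← mul_sum, ← Nat.cast_sum, hcount, Nat.cast_mul]
        ring

/-- The ordered pairs of disjoint `l`-element subsets of `U`, that is, the directed edges of the
Kneser graph of `U`. -/
def disjointPairs (U : Finset α) (l : ℕ) : Finset (Finset α × Finset α) :=
  {P ∈ U.powersetCard l ×ˢ U.powersetCard l | Disjoint P.1 P.2}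

lemma mem_disjointPairs {P : Finset α × Finset α} :
    P ∈ disjointPairs U l ↔
      (P.1 ∈ U.powersetCard l ∧ P.2 ∈ U.powersetCard l) ∧ Disjoint P.1 P.2 := by
  rw [disjointPairs, mem_filter, mem_product]

lemma sum_disjointPairs {M : Type*} [AddCommMonoid M] (f : Finset α × Finset α → M) :
    ∑ P ∈ disjointPairs U l, f P =
      ∑ S ∈ U.powersetCard l, ∑ T ∈ U.powersetCard l with Disjoint S T, f (S, T) := by
  simp only [disjointPairs, sum_filter, sum_product]

lemma card_disjointPairs (U : Finset α) (l : ℕ) :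
    #(disjointPairs U l) = (#U).choose l * (#U - l).choose l := by
  rw [card_eq_sum_ones, sum_disjointPairs, ← card_powersetCard l U, ← smul_eq_mul, ← sum_const]
  refine sum_congr rfl fun S hS ↦ ?_
  rw [mem_powersetCard] at hS
  rw [← card_eq_sum_ones, filter_disjoint_powersetCard, card_powersetCard,
    card_sdiff_of_subset hS.1, hS.2]

theorem sum_disjointPairs_mul_le (hl : 0 < l) {g : Finset α → ℝ}
    (hg : ∑ S ∈ U.powersetCard l, g S = 0) :
    ∑ P ∈ disjointPairs U l, g P.1 * g P.2 ≤
      (#U - l - 1).choose (l - 1) * ∑ S ∈ U.powersetCard l, g S ^ 2 := by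
  let A : Matrix (U.powersetCard l) (U.powersetCard l) ℝ :=
    .of fun S T ↦ if Disjoint S.1 T.1 then 1 else 0
  have hAs : A.IsSymm := by
    ext S T
    simp [A, disjoint_comm]
  have hmulVec (f : Finset α → ℝ) (S : U.powersetCard l) :
      A.mulVec (fun T ↦ f T) S = ∑ T ∈ U.powersetCard l with Disjoint S.1 T, f T := by
    rw [sum_filter, ← sum_coe_sort]
    simp [Matrix.mulVec, dotProduct, A]
  have hquad := dotProduct_mulVec_le_of_lipschitz_contraction (g := fun S ↦ g S)
    (d := fun S T : U.powersetCard l ↦ #(S.1 \ T.1)) (κ := (#U - l - 1).choose (l - 1))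
    hAs (fun S T ↦ Nat.cast_nonneg _) (fun S T hST ↦ ?_) (fun f L hf S T ↦ ?_)
    (by rwa [sum_coe_sort _ g])
  · simp only [dotProduct, hmulVec] at hquad
    rw [sum_coe_sort _ fun S ↦ g S * ∑ T ∈ U.powersetCard l with Disjoint S T, g T,
      sum_coe_sort _ fun S ↦ g S * g S] at hquad
    simpa only [sum_disjointPairs, mul_sum, ← sq] using hquad
  · have hsub : S.1 ⊆ T.1 := by simpa using hST
    have hS := (mem_powersetCard.1 S.2).2
    have hT := (mem_powersetCard.1 T.2).2
    exact Subtype.ext (eq_of_subset_of_card_le hsub (hT.trans hS.symm).le)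
  · obtain ⟨F, rfl⟩ : ∃ F : Finset α → ℝ, (fun S ↦ F S.1) = f :=
      ⟨_, Function.extend_comp Subtype.val_injective f 0⟩
    rw [hmulVec, hmulVec]
    exact abs_sum_disjoint_sub_le hl (fun S hS T hT ↦ hf ⟨S, hS⟩ ⟨T, hT⟩) S.2 T.2

lemma mul_choose_pred_le {k n : ℕ} (hl : 0 < l) (hk : k * l ≤ n) :
    k * (n - 1).choose (l - 1) ≤ n.choose l := by
  obtain ⟨l, rfl⟩ := Nat.exists_eq_add_one.2 hl
  cases n with
  | zero => simp_all
  | succ n =>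
    refine Nat.le_of_mul_le_mul_right ?_ l.succ_pos
    calc k * n.choose l * (l + 1) = k * (l + 1) * n.choose l := by ring
      _ ≤ (n + 1) * n.choose l := Nat.mul_le_mul_right _ hk
      _ = (n + 1).choose (l + 1) * (l + 1) := Nat.add_one_mul_choose_eq n l

theorem mul_expect_disjointPairs_le {k : ℕ} (hl : 0 < l) (hk : (k + 1) * l ≤ #U)
    {g : Finset α → ℝ} (hg : ∑ S ∈ U.powersetCard l, g S = 0) :
    k * 𝔼 P ∈ disjointPairs U l, g P.1 * g P.2 ≤ 𝔼 S ∈ U.powersetCard l, g S ^ 2 := by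
  have hN : ((#U).choose l : ℝ) ≠ 0 :=
    Nat.cast_ne_zero.2 (Nat.choose_pos (by linarith [Nat.zero_le (k * l)])).ne'
  have hchoose : (k : ℝ) * (#U - l - 1).choose (l - 1) ≤ (#U - l).choose l := by
    exact_mod_cast mul_choose_pred_le hl (Nat.le_sub_of_add_le (by rwa [← Nat.succ_mul]))
  rw [expect_eq_sum_div_card, ← mul_div_assoc]
  refine div_le_of_le_mul₀ (Nat.cast_nonneg _) (expect_nonneg fun S _ ↦ sq_nonneg (g S)) ?_
  calc k * ∑ P ∈ disjointPairs U l, g P.1 * g P.2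
      ≤ k * ((#U - l - 1).choose (l - 1) * ∑ S ∈ U.powersetCard l, g S ^ 2) := by
        gcongr
        exact sum_disjointPairs_mul_le hl hg
    _ = k * (#U - l - 1).choose (l - 1) * ∑ S ∈ U.powersetCard l, g S ^ 2 := by ring
    _ ≤ (#U - l).choose l * ∑ S ∈ U.powersetCard l, g S ^ 2 := by gcongr
    _ = (𝔼 S ∈ U.powersetCard l, g S ^ 2) * #(disjointPairs U l) := by
        rw [expect_eq_sum_div_card, card_disjointPairs, card_powersetCard]
        push_cast
        field_simp

lemma exists_smul_eq_of_mem_powersetCard {S T : Finset α} (hS : S ∈ U.powersetCard l)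
    (hT : T ∈ U.powersetCard l) : ∃ σ : MulAction.stabilizer (Equiv.Perm α) U, σ • S = T := by
  rw [mem_powersetCard] at hS hT
  obtain ⟨σ, hσ, -⟩ := exists_stabilizer_smul_eq hS.1 hT.1 (hS.2.trans hT.2.symm)
  exact ⟨σ, hσ⟩

lemma exists_smul_eq_of_mem_disjointPairs {P Q : Finset α × Finset α}
    (hP : P ∈ disjointPairs U l) (hQ : Q ∈ disjointPairs U l) :
    ∃ σ : MulAction.stabilizer (Equiv.Perm α) U, σ • P = Q := by
  obtain ⟨S, T⟩ := P
  obtain ⟨S', T'⟩ := Q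
  obtain ⟨⟨hS, hT⟩, hST⟩ := mem_disjointPairs.1 hP
  obtain ⟨⟨hS', hT'⟩, hST'⟩ := mem_disjointPairs.1 hQ
  obtain ⟨σ, rfl⟩ := exists_smul_eq_of_mem_powersetCard hS hS'
  have hσT := mem_powersetCard.1 (smul_mem_powersetCard σ hT)
  rw [mem_powersetCard] at hT'
  obtain ⟨τ, rfl, hfix⟩ := exists_stabilizer_smul_eq hσT.1 hT'.1 (hσT.2.trans hT'.2.symm)
  have hτS : τ • σ • S = σ • S := smul_finset_eq_self fun x hx ↦
    hfix x (disjoint_left.1 (disjoint_smul_finset_iff.2 hST) hx) (disjoint_left.1 hST' hx)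
  exact ⟨τ * σ, by simp only [mul_smul, Prod.smul_mk, hτS]⟩

end Kneser

section Indicator

variable {ι K : Type*} [DecidableEq ι] [Field K] [CharZero K] {s G : Finset ι}

lemma expect_indicator (hG : G ⊆ s) :
    𝔼 x ∈ s, (if x ∈ G then 1 else 0 : K) = #G / #s := by
  rw [expect_eq_sum_div_card, sum_boole, filter_mem_eq_inter, inter_eq_right.2 hG]

lemma sum_indicator_sub_density (hG : G ⊆ s) :
    ∑ x ∈ s, ((if x ∈ G then 1 else 0) - #G / #s : K) = 0 := by
  have h : #s = (0 : K) → #G = (0 : K) := by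
    simp only [Nat.cast_eq_zero, card_eq_zero]
    rintro rfl
    exact subset_empty.1 hG
  rw [sum_sub_distrib, sum_boole, filter_mem_eq_inter, inter_eq_right.2 hG, sum_const,
    nsmul_eq_mul, mul_div_cancel_of_imp' h, sub_self]

lemma expect_indicator_sub_density_sq (hG : G ⊆ s) :
    𝔼 x ∈ s, ((if x ∈ G then 1 else 0) - #G / #s : K) ^ 2 = #G / #s * (1 - #G / #s) := by
  rcases s.eq_empty_or_nonempty with rfl | hs
  · simp
  set p : K := #G / #s
  have hsq (x : ι) : ((if x ∈ G then 1 else 0) - p : K) ^ 2 =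
      (if x ∈ G then 1 else 0) * (1 - 2 * p) + p ^ 2 := by
    split_ifs <;> ring
  rw [expect_congr rfl fun x _ ↦ hsq x, expect_add_distrib, ← expect_mul, expect_indicator hG,
    expect_const hs]
  ring

end Indicator

section TupleSpace

variable {K : Type*} {m l t : ℕ}

lemma mem_tupleSpace {B : Fin t → Finset ℕ} :
    B ∈ tupleSpace m l t ↔
      (∀ i, B i ∈ (range m).powersetCard l) ∧ Pairwise fun i j ↦ Disjoint (B i) (B j) := by
  rw [tupleSpace, mem_filter, Fintype.mem_piFinset]
  rfl

lemma tupleSpace_nonempty (h : t * l ≤ m) : (tupleSpace m l t).Nonempty := by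
  refine ⟨fun i ↦ Ico (i * l) ((i + 1) * l), mem_tupleSpace.2 ⟨fun i ↦ ?_, fun i j hij ↦ ?_⟩⟩
  · have hi : (i + 1) * l ≤ m := (Nat.mul_le_mul_right l i.is_lt).trans h
    rw [mem_powersetCard, Nat.card_Ico, ← Nat.sub_mul, Nat.add_sub_cancel_left, one_mul]
    exact ⟨fun x hx ↦ mem_range.2 ((mem_Ico.1 hx).2.trans_le hi), rfl⟩
  · have hmono : Monotone fun k : ℕ ↦ k * l := fun _ _ hab ↦ Nat.mul_le_mul_right l hab
    have hdisj := hmono.pairwise_disjoint_on_Ico_succ (Fin.val_injective.ne hij)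
    simpa only [Function.onFun, Order.succ_eq_add_one, ← coe_Ico, disjoint_coe] using hdisj

lemma smul_mem_tupleSpace (σ : MulAction.stabilizer (Equiv.Perm ℕ) (range m))
    {B : Fin t → Finset ℕ} (hB : B ∈ tupleSpace m l t) : σ • B ∈ tupleSpace m l t := by
  rw [mem_tupleSpace] at hB ⊢
  exact ⟨fun i ↦ smul_mem_powersetCard σ (hB.1 i),
    fun i j hij ↦ disjoint_smul_finset_iff.2 (hB.2 hij)⟩

lemma expect_tupleSpace_apply [Semifield K] [CharZero K] (h : t * l ≤ m) (i : Fin t)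
    (f : Finset ℕ → K) :
    𝔼 B ∈ tupleSpace m l t, f (B i) = 𝔼 S ∈ (range m).powersetCard l, f S :=
  expect_comp_eq_expect_of_transitive (G := MulAction.stabilizer (Equiv.Perm ℕ) (range m))
    (tupleSpace_nonempty h) (fun σ _ ↦ smul_mem_tupleSpace σ) ⟨fun B ↦ B i, fun _ _ ↦ rfl⟩
    (fun _ hB ↦ (mem_tupleSpace.1 hB).1 i) (fun _ hS _ ↦ exists_smul_eq_of_mem_powersetCard hS) f

lemma expect_tupleSpace_apply_pair [Semifield K] [CharZero K] (h : t * l ≤ m)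
    {i j : Fin t} (hij : i ≠ j) (f : Finset ℕ × Finset ℕ → K) :
    𝔼 B ∈ tupleSpace m l t, f (B i, B j) = 𝔼 P ∈ disjointPairs (range m) l, f P := by
  refine expect_comp_eq_expect_of_transitive
    (G := MulAction.stabilizer (Equiv.Perm ℕ) (range m)) (tupleSpace_nonempty h)
    (fun σ _ ↦ smul_mem_tupleSpace σ) ⟨fun B ↦ (B i, B j), fun _ _ ↦ rfl⟩ (fun B hB ↦ ?_)
    (fun _ hP _ ↦ exists_smul_eq_of_mem_disjointPairs hP) f
  rw [mem_tupleSpace] at hB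
  exact mem_disjointPairs.2 ⟨⟨hB.1 i, hB.1 j⟩, hB.2 hij⟩

lemma expect_tupleSpace_sum_sq [Field K] [CharZero K] (h : t * l ≤ m) (g : Finset ℕ → K) :
    𝔼 B ∈ tupleSpace m l t, (∑ i, g (B i)) ^ 2 =
      t * 𝔼 S ∈ (range m).powersetCard l, g S ^ 2 +
        t * (t - 1) * 𝔼 P ∈ disjointPairs (range m) l, g P.1 * g P.2 := by
  set V := 𝔼 S ∈ (range m).powersetCard l, g S ^ 2
  set C := 𝔼 P ∈ disjointPairs (range m) l, g P.1 * g P.2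
  have hcov (i j : Fin t) : 𝔼 B ∈ tupleSpace m l t, g (B i) * g (B j) =
      if i = j then V else C := by
    split_ifs with hij
    · subst hij
      simpa only [V, ← sq] using expect_tupleSpace_apply h i fun S ↦ g S ^ 2
    · exact expect_tupleSpace_apply_pair h hij fun P ↦ g P.1 * g P.2
  simp only [sq, sum_mul_sum, expect_sum_comm, hcov]
  calc ∑ i : Fin t, ∑ j, (if i = j then V else C) = ∑ _i : Fin t, (V + (t - 1) * C) :=
        sum_congr rfl fun i _ ↦ by
          rw [← add_sum_erase _ _ (mem_univ i), if_pos rfl,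
            sum_congr rfl fun j hj ↦ if_neg (ne_of_mem_erase hj).symm, sum_const,
            card_erase_of_mem (mem_univ i), card_univ, Fintype.card_fin, nsmul_eq_mul,
            Nat.cast_pred (Fin.pos i)]
    _ = t * V + t * (t - 1) * C := by
        rw [sum_const, card_univ, Fintype.card_fin, nsmul_eq_mul]
        ring

theorem expect_tupleSpace_sum_sq_le (hl : 0 < l) (h : t * l ≤ m) {g : Finset ℕ → ℝ}
    (hg : ∑ S ∈ (range m).powersetCard l, g S = 0) :
    𝔼 B ∈ tupleSpace m l t, (∑ i, g (B i)) ^ 2 ≤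
      2 * t * 𝔼 S ∈ (range m).powersetCard l, g S ^ 2 := by
  rw [expect_tupleSpace_sum_sq h]
  cases t with
  | zero => simp
  | succ k =>
    have hcov := mul_expect_disjointPairs_le hl (h.trans_eq (card_range m).symm) hg
    have hcov_mul := mul_le_mul_of_nonneg_left hcov (Nat.cast_nonneg (k + 1))
    push_cast at hcov_mul ⊢
    linarith

lemma hits_eq_sum (G : Finset (Finset ℕ)) (B : Fin t → Finset ℕ) :
    (hits G B : ℝ) = ∑ i, if B i ∈ G then 1 else 0 := by
  rw [hits, sum_boole]

theorem expect_hits (h : t * l ≤ m) {G : Finset (Finset ℕ)} (hG : G ⊆ (range m).powersetCard l) :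
    𝔼 B ∈ tupleSpace m l t, (hits G B : ℝ) = #G / m.choose l * t := by
  have hmarginal (i : Fin t) :
      𝔼 B ∈ tupleSpace m l t, (if B i ∈ G then 1 else 0 : ℝ) = #G / m.choose l := by
    rw [expect_tupleSpace_apply h i fun S ↦ if S ∈ G then 1 else 0, expect_indicator hG,
      card_powersetCard, card_range]
  simp only [hits_eq_sum, expect_sum_comm, hmarginal]
  rw [sum_const, card_univ, Fintype.card_fin, nsmul_eq_mul, mul_comm]

theorem expect_hits_sub_sq_le (hl : 0 < l) (h : t * l ≤ m) {G : Finset (Finset ℕ)}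
    (hG : G ⊆ (range m).powersetCard l) {α : ℝ} (hα : α = #G / m.choose l) :
    𝔼 B ∈ tupleSpace m l t, ((hits G B : ℝ) - α * t) ^ 2 ≤ 2 * t * (α * (1 - α)) := by
  replace hα : α = #G / #((range m).powersetCard l) := by rw [hα, card_powersetCard, card_range]
  let g (S : Finset ℕ) : ℝ := (if S ∈ G then 1 else 0) - α
  have hg : ∑ S ∈ (range m).powersetCard l, g S = 0 := by
    simpa only [g, hα] using sum_indicator_sub_density hG
  have hhits (B : Fin t → Finset ℕ) : (hits G B : ℝ) - α * t = ∑ i, g (B i) := by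
    rw [hits_eq_sum, sum_sub_distrib, sum_const, card_univ, Fintype.card_fin, nsmul_eq_mul,
      mul_comm]
  calc 𝔼 B ∈ tupleSpace m l t, ((hits G B : ℝ) - α * t) ^ 2
      = 𝔼 B ∈ tupleSpace m l t, (∑ i, g (B i)) ^ 2 := by simp only [hhits]
    _ ≤ 2 * t * 𝔼 S ∈ (range m).powersetCard l, g S ^ 2 :=
        expect_tupleSpace_sum_sq_le hl h hg
    _ = 2 * t * (α * (1 - α)) := by simp only [g, hα, expect_indicator_sub_density_sq hG]

end TupleSpace

theorem intersection_chebyshev (m l t : ℕ) (hm : 0 < m) (hl : 0 < l) (ht : 0 < t)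
    (hml : t * l ≤ m) (G : Finset (Finset ℕ)) (hG : G ⊆ (Finset.range m).powersetCard l)
    (α : ℝ) (hα : α = (G.card : ℝ) / (m.choose l : ℝ)) :
    (∑ B ∈ tupleSpace m l t, (hits G B : ℝ)) / ((tupleSpace m l t).card : ℝ) = α * t ∧
    ∀ β : ℝ, 0 < β →
      (((tupleSpace m l t).filter
            fun B => β * t ≤ |(hits G B : ℝ) - α * t|).card : ℝ) /
          ((tupleSpace m l t).card : ℝ) ≤
        2 * α * (1 - α) / (β ^ 2 * t) := by
  subst hα
  constructor
  · rw [← expect_eq_sum_div_card, expect_hits hml hG]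
  · intro β hβ
    set α : ℝ := #G / m.choose l
    calc (#{B ∈ tupleSpace m l t | β * t ≤ |(hits G B : ℝ) - α * t|} : ℝ) / #(tupleSpace m l t)
        ≤ (𝔼 B ∈ tupleSpace m l t, ((hits G B : ℝ) - α * t) ^ 2) / (β * t) ^ 2 :=
          card_filter_le_abs_div_card_le _ _ (by positivity)
      _ ≤ 2 * t * (α * (1 - α)) / (β * t) ^ 2 := by
          gcongr
          exact expect_hits_sub_sq_le hl hml hG rfl
      _ = 2 * α * (1 - α) / (β ^ 2 * t) := by field_simp
end
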